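/- Let 0 < p < q < ∞ with q ≥ 1 and α > 1. Let f be holomorphic on the unit disk 𝔻 with ∫_𝔻 |f(z)|^p dA_α(z) < ∞, and suppose f = g² for some holomorphic function g on 𝔻 (equivalently, every zero of f in 𝔻 has even multiplicity, e.g. multiplicity 2). Then with r = √(p/q) one has (∫_𝔻 |f(rz)|^q dA_α(z))^{1/q} ≤ (∫_𝔻 |f(z)|^p dA_α(z))^{1/p}. -/

import Mathlib

open MeasureTheory Metric

/-- The weighted Bergman measure `dA_α` on the unit disk:
density `((α-1)/π)(1-|z|²)^(α-2)` with respect to Lebesgue area measure. -/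
noncomputable def bergmanMeasure (α : ℝ) : Measure ℂ :=
  (volume.restrict (ball (0 : ℂ) 1)).withDensity
    (fun z => ENNReal.ofReal ((α - 1) / Real.pi * (1 - ‖z‖ ^ 2) ^ (α - 2)))

/-!
Put `β = α * q / p`. The inequality factors as

`∫ |f (√(α / β) z)| ^ q dA_α ≤ ∫ |f| ^ q dA_β ≤ (∫ |f| ^ p dA_α) ^ (q / p)`.

The right-hand inequality is Kulikov's contractive inequality. With `γ = p / α` let `μ t` be the
hyperbolic area of `{|f| ^ γ (1 - |z|²) > t}`. Off the zeros of `f`, the logarithm of this function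
has constant hyperbolic Laplacian, so Green's formula, the Cauchy–Schwarz inequality and the
hyperbolic isoperimetric inequality `L² ≥ A² + 4πA` show that `t (1 + μ t)` is nonincreasing. For a
constant `f` it is constant, and since a nonincreasing function crosses a constant at most once,
comparing the moments of `μ` with those of the constant case gives the inequality. The isoperimetric
inequality is proved in the half-plane by integrating the divergence of a calibrating vector field.

The left-hand inequality is where `f = g²` and `1 ≤ q` enter: `|g| ^ (2q - 2) |g'|²` is subharmonic,
hence the mean of `|f| ^ q = |g| ^ (2q)` over the circle of radius `r` is a convex function of `r²`.
The variable `r²` has the same expectation under `dA_β` as under `dA_α` dilated by `√(α / β)`, and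
Bernoulli's inequality shows that the former dominates the latter in the convex order. To
differentiate through the zeros of `g`, the power `|g| ^ (2q)` is replaced by `(|g|² + ε) ^ q`.

Both are applied to the dilates `f (ρ z)`, `ρ < 1`, which are smooth up to the boundary; their
`L^p` norms are at most that of `f`, and `ρ → 1` gives the theorem.
-/

namespace BergmanSpace

open Set Filter
open scoped Real Topology

section LevelSets

variable {X : Type*} [MeasurableSpace X] {μ : Measure X} {w : X → ℝ}

theorem measure_lt_ne_top_of_integrable_rpow (hw0 : ∀ x, 0 ≤ w x) {γ : ℝ} (hγ : 0 < γ)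
    (hI : Integrable (fun x => w x ^ γ) μ) {t : ℝ} (ht : 0 < t) : μ {x | t < w x} ≠ ⊤ := by
  have hlevel : {x | t < w x} = {x | t ^ γ < w x ^ γ} := by
    ext x
    exact (Real.rpow_lt_rpow_iff ht.le (hw0 x) hγ).symm
  rw [hlevel]
  exact (hI.measure_gt_lt_top (Real.rpow_pos_of_pos ht γ)).ne

theorem measurable_measureReal_lt_mul_rpow (γ : ℝ) :
    Measurable fun t : ℝ => μ.real {x | t < w x} * t ^ (γ - 1) := by
  have hanti : Antitone fun t : ℝ => μ {x | t < w x} := fun a b hab =>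
    measure_mono fun x hx => lt_of_le_of_lt hab hx
  exact hanti.measurable.ennreal_toReal.mul (measurable_id.pow_const _)

theorem lintegral_rpow_eq_lintegral_measureReal_lt (hw : AEMeasurable w μ) (hw0 : ∀ x, 0 ≤ w x)
    {γ : ℝ} (hγ : 0 < γ) (hI : Integrable (fun x => w x ^ γ) μ) :
    ∫⁻ x, ENNReal.ofReal (w x ^ γ) ∂μ = ENNReal.ofReal γ *
      ∫⁻ t in Ioi (0 : ℝ), ENNReal.ofReal (μ.real {x | t < w x} * t ^ (γ - 1)) := by
  rw [lintegral_rpow_eq_lintegral_meas_lt_mul μ (Eventually.of_forall hw0) hw hγ]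
  congr 1
  refine setLIntegral_congr_fun measurableSet_Ioi fun t ht => ?_
  rw [ENNReal.ofReal_mul measureReal_nonneg, Measure.real,
    ENNReal.ofReal_toReal (measure_lt_ne_top_of_integrable_rpow hw0 hγ hI ht)]

theorem measureReal_lt_mul_rpow_nonneg_ae (γ : ℝ) :
    0 ≤ᵐ[volume.restrict (Ioi (0 : ℝ))] fun t : ℝ => μ.real {x | t < w x} * t ^ (γ - 1) := by
  filter_upwards [ae_restrict_mem measurableSet_Ioi] with t ht
  exact mul_nonneg measureReal_nonneg (Real.rpow_nonneg (le_of_lt ht) _)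

theorem integrableOn_measureReal_lt_mul_rpow (hw : AEMeasurable w μ) (hw0 : ∀ x, 0 ≤ w x)
    {γ : ℝ} (hγ : 0 < γ) (hI : Integrable (fun x => w x ^ γ) μ) :
    IntegrableOn (fun t => μ.real {x | t < w x} * t ^ (γ - 1)) (Ioi 0) := by
  refine (lintegral_ofReal_ne_top_iff_integrable
    (measurable_measureReal_lt_mul_rpow γ).aestronglyMeasurable
    (measureReal_lt_mul_rpow_nonneg_ae γ)).1 fun htop => ?_
  refine hI.lintegral_lt_top.ne ?_
  rw [lintegral_rpow_eq_lintegral_measureReal_lt hw hw0 hγ hI, htop,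
    ENNReal.mul_top (ENNReal.ofReal_pos.2 hγ).ne']

theorem integral_rpow_eq_integral_measureReal_lt (hw : AEMeasurable w μ) (hw0 : ∀ x, 0 ≤ w x)
    {γ : ℝ} (hγ : 0 < γ) (hI : Integrable (fun x => w x ^ γ) μ) :
    ∫ x, w x ^ γ ∂μ = γ * ∫ t in Ioi (0 : ℝ), μ.real {x | t < w x} * t ^ (γ - 1) := by
  rw [integral_eq_lintegral_of_nonneg_ae
      (Eventually.of_forall fun x => Real.rpow_nonneg (hw0 x) _) hI.aestronglyMeasurable,
    lintegral_rpow_eq_lintegral_measureReal_lt hw hw0 hγ hI,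
    integral_eq_lintegral_of_nonneg_ae (measureReal_lt_mul_rpow_nonneg_ae γ)
      (measurable_measureReal_lt_mul_rpow γ).aestronglyMeasurable,
    ENNReal.toReal_mul, ENNReal.toReal_ofReal hγ.le]

/-- The distribution function of the extremal weight `c (1 - ‖z‖²)` with respect to the hyperbolic
measure of the disk, normalised as in `hyperbolicMeasure`: for `0 < t < c` the level set
`{t < c (1 - ‖z‖²)}` has measure `c / t - 1`. -/
noncomputable def modelDistribution (c t : ℝ) : ℝ := max (c / t - 1) 0

theorem modelDistribution_nonneg (c t : ℝ) : 0 ≤ modelDistribution c t := le_max_right _ _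

theorem modelDistribution_mul_rpow_eqOn_Ioc (c γ : ℝ) :
    EqOn (fun t => c * t ^ (γ - 2) - t ^ (γ - 1))
      (fun t => modelDistribution c t * t ^ (γ - 1)) (Ioc 0 c) := by
  intro t ⟨ht0, htc⟩
  have hnonneg : 0 ≤ c / t - 1 := by
    rw [sub_nonneg, le_div_iff₀ ht0]
    linarith
  simp only [modelDistribution]
  rw [max_eq_left hnonneg, show γ - 1 = (γ - 2) + 1 by ring, Real.rpow_add_one ht0.ne']
  field_simp

theorem modelDistribution_eq_zero {c t : ℝ} (hc : 0 ≤ c) (ht : c < t) :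
    modelDistribution c t = 0 := by
  refine max_eq_right ?_
  rw [sub_nonpos, div_le_one (hc.trans_lt ht)]
  exact ht.le

theorem modelDistribution_mul_rpow_eqOn_Ioi {c : ℝ} (hc : 0 ≤ c) (γ : ℝ) :
    EqOn (fun t => modelDistribution c t * t ^ (γ - 1)) (fun _ => 0) (Ioi c) := fun t ht => by
  simp only [modelDistribution_eq_zero hc ht, zero_mul]

theorem integrableOn_modelDistribution_mul_rpow {c γ : ℝ} (hc : 0 ≤ c) (hγ : 1 < γ) :
    IntegrableOn (fun t => modelDistribution c t * t ^ (γ - 1)) (Ioi 0) := by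
  have hint : IntervalIntegrable (fun t : ℝ => c * t ^ (γ - 2) - t ^ (γ - 1)) volume 0 c :=
    ((intervalIntegral.intervalIntegrable_rpow' (by linarith)).const_mul c).sub
      (intervalIntegral.intervalIntegrable_rpow' (by linarith))
  rw [← Ioc_union_Ioi_eq_Ioi hc]
  exact (((intervalIntegrable_iff_integrableOn_Ioc_of_le hc).1 hint).congr_fun
    (modelDistribution_mul_rpow_eqOn_Ioc c γ) measurableSet_Ioc).union
    (integrableOn_zero.congr_fun (modelDistribution_mul_rpow_eqOn_Ioi hc γ).symm measurableSet_Ioi)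

theorem integral_modelDistribution_mul_rpow {c γ : ℝ} (hc : 0 ≤ c) (hγ : 1 < γ) :
    γ * ∫ t in Ioi (0 : ℝ), modelDistribution c t * t ^ (γ - 1) = c ^ γ / (γ - 1) := by
  have hint := integrableOn_modelDistribution_mul_rpow hc hγ
  have hsplit : Ioi (0 : ℝ) = Ioc 0 c ∪ Ioi c := (Ioc_union_Ioi_eq_Ioi hc).symm
  have hcγ : c ^ γ = c * c ^ (γ - 1) := by
    rw [← Real.rpow_one_add' hc (by linarith)]
    ring_nf
  rw [hsplit, setIntegral_union (Ioc_disjoint_Ioi le_rfl) measurableSet_Ioi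
      (hint.mono_set Ioc_subset_Ioi_self) (hint.mono_set (Ioi_subset_Ioi hc)),
    setIntegral_congr_fun measurableSet_Ioi (modelDistribution_mul_rpow_eqOn_Ioi hc γ),
    ← setIntegral_congr_fun measurableSet_Ioc (modelDistribution_mul_rpow_eqOn_Ioc c γ),
    ← intervalIntegral.integral_of_le hc, intervalIntegral.integral_sub
      ((intervalIntegral.intervalIntegrable_rpow' (by linarith)).const_mul c)
      (intervalIntegral.intervalIntegrable_rpow' (by linarith)),
    intervalIntegral.integral_const_mul, integral_rpow (Or.inl (by linarith)),
    integral_rpow (Or.inl (by linarith)), integral_zero, add_zero,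
    Real.zero_rpow (by linarith), Real.zero_rpow (by linarith),
    show γ - 2 + 1 = γ - 1 by ring, show γ - 1 + 1 = γ by ring, hcγ]
  have hγ1 : γ - 1 ≠ 0 := by linarith
  have hγ0 : γ ≠ 0 := by linarith
  field_simp
  ring

theorem exists_crossing_modelDistribution {m : ℝ → ℝ} (hm0 : ∀ t, 0 ≤ m t) {B : ℝ}
    (hmB : ∀ t, B < t → m t = 0)
    (hanti : ∀ s t, 0 < s → s < t → 0 < m t → t * (1 + m t) ≤ s * (1 + m s)) (c : ℝ) :
    ∃ t₀, 0 ≤ t₀ ∧ (∀ t, 0 < t → t < t₀ → modelDistribution c t ≤ m t) ∧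
      ∀ t, 0 < t → t₀ < t → m t ≤ modelDistribution c t := by
  set S : Set ℝ := {t | 0 < t ∧ modelDistribution c t < m t}
  have hbdd : BddAbove S := by
    refine ⟨B, fun t ht => not_lt.1 fun hBt => ?_⟩
    exact absurd ht.2 (by rw [hmB t hBt]; exact (modelDistribution_nonneg c t).not_gt)
  have hpropagate : ∀ t ∈ S, ∀ s, 0 < s → s < t → modelDistribution c s ≤ m s := by
    intro t ⟨ht0, htm⟩ s hs hst
    refine max_le ?_ (hm0 s)
    have hct : c < t * (1 + m t) := by
      rw [← div_lt_iff₀' ht0]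
      linarith [le_max_left (c / t - 1) 0, show max (c / t - 1) 0 < m t from htm]
    have hcs := hct.le.trans (hanti s t hs hst ((modelDistribution_nonneg c t).trans_lt htm))
    rw [sub_le_iff_le_add', div_le_iff₀' hs]
    exact hcs
  refine ⟨sSup S, Real.sSup_nonneg fun t ht => ht.1.le, fun t ht0 ht => ?_, fun t ht0 ht => ?_⟩
  · rcases S.eq_empty_or_nonempty with hempty | hne
    · rw [hempty, Real.sSup_empty] at ht
      exact absurd ht ht0.not_gt
    · obtain ⟨u, huS, htu⟩ := exists_lt_of_lt_csSup hne ht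
      exact hpropagate u huS t ht0 htu
  · exact not_lt.1 fun hlt => (le_csSup hbdd (show t ∈ S from ⟨ht0, hlt⟩)).not_gt ht

theorem integral_mul_rpow_le_of_single_crossing {φ ψ : ℝ → ℝ} {a b t₀ : ℝ} (hab : a ≤ b)
    (ht₀ : 0 ≤ t₀) (hbelow : ∀ t, 0 < t → t < t₀ → ψ t ≤ φ t)
    (habove : ∀ t, 0 < t → t₀ < t → φ t ≤ ψ t)
    (hφa : IntegrableOn (fun t => φ t * t ^ a) (Ioi 0))
    (hψa : IntegrableOn (fun t => ψ t * t ^ a) (Ioi 0))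
    (hφb : IntegrableOn (fun t => φ t * t ^ b) (Ioi 0))
    (hψb : IntegrableOn (fun t => ψ t * t ^ b) (Ioi 0))
    (heq : ∫ t in Ioi (0 : ℝ), φ t * t ^ a = ∫ t in Ioi (0 : ℝ), ψ t * t ^ a) :
    ∫ t in Ioi (0 : ℝ), φ t * t ^ b ≤ ∫ t in Ioi (0 : ℝ), ψ t * t ^ b := by
  have hsign : ∀ t, 0 < t → (φ t - ψ t) * (t ^ (b - a) - t₀ ^ (b - a)) ≤ 0 := by
    intro t ht
    rcases lt_trichotomy t t₀ with hlt | rfl | hgt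
    · have hpow := Real.rpow_le_rpow ht.le hlt.le (sub_nonneg.2 hab)
      exact mul_nonpos_of_nonneg_of_nonpos (sub_nonneg.2 (hbelow t ht hlt)) (sub_nonpos.2 hpow)
    · rw [sub_self, mul_zero]
    · have hpow := Real.rpow_le_rpow ht₀ hgt.le (sub_nonneg.2 hab)
      exact mul_nonpos_of_nonpos_of_nonneg (sub_nonpos.2 (habove t ht hgt)) (sub_nonneg.2 hpow)
  have hle : ∫ t in Ioi (0 : ℝ), (φ t * t ^ b - ψ t * t ^ b) ≤
      ∫ t in Ioi (0 : ℝ), t₀ ^ (b - a) * (φ t * t ^ a - ψ t * t ^ a) := by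
    refine setIntegral_mono_on (hφb.sub hψb) ((hφa.sub hψa).const_mul _) measurableSet_Ioi ?_
    intro t ht
    have hfactor : t ^ b = t ^ (b - a) * t ^ a := by
      rw [← Real.rpow_add ht, sub_add_cancel]
    rw [hfactor]
    have := mul_nonpos_of_nonpos_of_nonneg (hsign t ht) (Real.rpow_nonneg (le_of_lt ht) a)
    linarith
  rw [integral_const_mul, integral_sub hφa hψa, heq, sub_self, mul_zero,
    integral_sub hφb hψb] at hle
  linarith

/-- The monotonicity `hanti` says that the distribution function of `w` decays at least as fast as
that of the model weight, so the two cross at most once. -/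
theorem integral_rpow_le_of_mul_one_add_measure_antitone (hw : AEMeasurable w μ)
    (hw0 : ∀ x, 0 ≤ w x) {B : ℝ} (hB : ∀ x, w x ≤ B) {α β : ℝ} (hα : 1 < α) (hαβ : α ≤ β)
    (hIα : Integrable (fun x => w x ^ α) μ) (hIβ : Integrable (fun x => w x ^ β) μ)
    (hanti : ∀ s t, 0 < s → s < t → 0 < μ.real {x | t < w x} →
      t * (1 + μ.real {x | t < w x}) ≤ s * (1 + μ.real {x | s < w x})) :
    (β - 1) * ∫ x, w x ^ β ∂μ ≤ ((α - 1) * ∫ x, w x ^ α ∂μ) ^ (β / α) := by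
  have hα0 : 0 < α := by linarith
  have hβ0 : 0 < β := by linarith
  set I := (α - 1) * ∫ x, w x ^ α ∂μ with hI
  have hI0 : 0 ≤ I := mul_nonneg (by linarith)
    (integral_nonneg fun x => Real.rpow_nonneg (hw0 x) _)
  set c := I ^ (1 / α) with hc
  have hc0 : 0 ≤ c := Real.rpow_nonneg hI0 _
  have hcα : c ^ α = I := by
    rw [hc, ← Real.rpow_mul hI0, one_div, inv_mul_cancel₀ hα0.ne', Real.rpow_one]
  have hcβ : c ^ β = I ^ (β / α) := by
    rw [hc, ← Real.rpow_mul hI0, one_div_mul_eq_div]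
  have hmB : ∀ t, B < t → μ.real {x | t < w x} = 0 := fun t ht => by
    rw [show {x | t < w x} = ∅ from
      eq_empty_of_forall_notMem fun x hx => ((hB x).trans_lt ht).not_gt hx, measureReal_empty]
  obtain ⟨t₀, ht₀, hbelow, habove⟩ :=
    exists_crossing_modelDistribution (fun t => measureReal_nonneg) hmB hanti c
  have heq : ∫ t in Ioi (0 : ℝ), μ.real {x | t < w x} * t ^ (α - 1) =
      ∫ t in Ioi (0 : ℝ), modelDistribution c t * t ^ (α - 1) := by
    refine mul_left_cancel₀ hα0.ne' ?_
    rw [integral_modelDistribution_mul_rpow hc0 hα, hcα, hI,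
      mul_div_cancel_left₀ _ (by linarith), integral_rpow_eq_integral_measureReal_lt hw hw0 hα0 hIα]
  have hle := integral_mul_rpow_le_of_single_crossing (by linarith) ht₀ hbelow habove
    (integrableOn_measureReal_lt_mul_rpow hw hw0 hα0 hIα)
    (integrableOn_modelDistribution_mul_rpow hc0 hα)
    (integrableOn_measureReal_lt_mul_rpow hw hw0 hβ0 hIβ)
    (integrableOn_modelDistribution_mul_rpow hc0 (by linarith)) heq
  rw [← le_div_iff₀' (by linarith), integral_rpow_eq_integral_measureReal_lt hw hw0 hβ0 hIβ, ← hcβ,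
    ← integral_modelDistribution_mul_rpow hc0 (hα.trans_le hαβ)]
  exact mul_le_mul_of_nonneg_left hle hβ0.le

end LevelSets

section ExponentialGrowth

theorem mul_exp_le_of_forall_sub_le {F : ℝ → ℝ} {κ d t₀ t₁ : ℝ} (hd : 0 < d) (ht : t₀ < t₁)
    (hstep : ∀ s t, t₀ ≤ s → s < t → t ≤ t₁ → t - s ≤ d → F t * Real.exp (κ * (t - s)) ≤ F s) :
    F t₁ * Real.exp (κ * (t₁ - t₀)) ≤ F t₀ := by
  obtain ⟨n, hn⟩ := exists_nat_gt ((t₁ - t₀) / d)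
  have hn0 : (0 : ℝ) < n := (div_nonneg (by linarith) hd.le).trans_lt hn
  set δ := (t₁ - t₀) / n with hδ
  have hδ0 : 0 < δ := div_pos (by linarith) hn0
  have hδd : δ ≤ d := by
    rw [div_lt_iff₀ hd] at hn
    rw [hδ, div_le_iff₀ hn0]
    linarith
  have hnδ : n * δ = t₁ - t₀ := mul_div_cancel₀ _ hn0.ne'
  have hpartial : ∀ i : ℕ, i ≤ n → F (t₀ + i * δ) * Real.exp (κ * (i * δ)) ≤ F t₀ := by
    intro i
    induction i with
    | zero => simp
    | succ i ih =>
      intro hi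
      have hi' : ((i + 1 : ℕ) : ℝ) ≤ n := by exact_mod_cast hi
      have hwidth : t₀ + (i + 1 : ℕ) * δ - (t₀ + i * δ) = δ := by
        push_cast
        ring
      have hlast := hstep (t₀ + i * δ) (t₀ + (i + 1 : ℕ) * δ)
        (by linarith [show 0 ≤ (i : ℝ) * δ by positivity]) (by linarith)
        (by linarith [mul_le_mul_of_nonneg_right hi' hδ0.le]) (by linarith)
      rw [hwidth] at hlast
      calc F (t₀ + (i + 1 : ℕ) * δ) * Real.exp (κ * ((i + 1 : ℕ) * δ))
          = F (t₀ + (i + 1 : ℕ) * δ) * Real.exp (κ * δ) * Real.exp (κ * (i * δ)) := by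
            rw [mul_assoc, ← Real.exp_add]
            push_cast
            ring_nf
        _ ≤ F (t₀ + i * δ) * Real.exp (κ * (i * δ)) := by gcongr
        _ ≤ F t₀ := ih (by omega)
  simpa only [hnδ, add_sub_cancel] using hpartial n le_rfl

theorem mul_le_sq_sqrt_sub {K c C η θ x y : ℝ} (hK : 0 < K) (hη : 0 < η) (hη1 : η < 1)
    (hc : 0 < c) (hcy : c ≤ y) (hyx : y ≤ x) (hxC : x ≤ C) (hθ0 : 0 ≤ θ)
    (hθ : θ * (6 * (C + K)) = c * K * η) (hxy : x - y ≤ θ) :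
    (1 - η / 2) * (K + y) * x ≤ (√(y ^ 2 + K * y) - (x - y)) ^ 2 := by
  have hy0 : 0 < y := hc.trans_le hcy
  set R := √(y ^ 2 + K * y)
  have hR2 : R ^ 2 = y ^ 2 + K * y := Real.sq_sqrt (by positivity)
  have hR0 : 0 ≤ R := Real.sqrt_nonneg _
  have hRC : R ≤ C + K := Real.sqrt_le_iff.2 ⟨by linarith, by nlinarith⟩
  have hexpand : R ^ 2 - 2 * (C + K) * θ ≤ (R - (x - y)) ^ 2 := by
    nlinarith [mul_nonneg hR0 (sub_nonneg.2 hxy), sq_nonneg (x - y),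
      mul_le_mul_of_nonneg_right hRC hθ0]
  have hx : (1 - η / 2) * (K + y) * x ≤ (1 - η / 2) * (K + y) * (y + θ) :=
    mul_le_mul_of_nonneg_left (by linarith) (mul_nonneg (by linarith) (by linarith))
  have hθK : (1 - η / 2) * (K + y) * θ ≤ (C + K) * θ :=
    mul_le_mul_of_nonneg_right (by nlinarith) hθ0
  have hcK : c * K * η ≤ y * (K + y) * η :=
    mul_le_mul_of_nonneg_right (by nlinarith) hη.le
  nlinarith

/-- The finite-difference inequality satisfied by the area `a` of the superlevel sets: `K = 4π` is
the constant of the hyperbolic isoperimetric inequality `L² ≥ A² + 4πA`, whose square root is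
compared with the area lost between the levels `s < t`. -/
def LevelEnergyInequality (K : ℝ) (a : ℝ → ℝ) (s t : ℝ) : Prop :=
  a s - a t ≤ √(a t ^ 2 + K * a t) →
    (√(a t ^ 2 + K * a t) - (a s - a t)) ^ 2 * (t - s) ≤ a s * (a s - a t)

theorem LevelEnergyInequality.mul_le_sub {K c C η θ s t : ℝ} {a : ℝ → ℝ}
    (h : LevelEnergyInequality K a s t) (hst : s < t) (hK : 0 < K) (hη : 0 < η) (hη1 : η < 1)
    (hc : 0 < c) (hct : c ≤ a t) (hts : a t ≤ a s) (hsC : a s ≤ C) (hθ0 : 0 < θ)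
    (hθ : θ * (6 * (C + K)) = c * K * η) (hstθ : (t - s) * (C + K) ≤ θ) :
    (t - s) * ((1 - η / 2) * (K + a t)) ≤ a s - a t := by
  have ht0 : 0 < a t := hc.trans_le hct
  rcases le_or_gt (a s - a t) θ with hsmall | hlarge
  · have hCK : 0 < C + K := by linarith
    have hθc : θ ≤ c := by
      refine le_of_mul_le_mul_right ?_ (show 0 < 6 * (C + K) by positivity)
      rw [hθ, mul_assoc]
      exact mul_le_mul_of_nonneg_left (by nlinarith) hc.le
    have hle_sqrt : a t ≤ √(a t ^ 2 + K * a t) :=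
      Real.le_sqrt_of_sq_le (by nlinarith)
    have henergy := h (by linarith)
    have hsq := mul_le_sq_sqrt_sub hK hη hη1 hc hct hts hsC hθ0.le hθ hsmall
    refine le_of_mul_le_mul_right ?_ (ht0.trans_le hts)
    calc (t - s) * ((1 - η / 2) * (K + a t)) * a s
        = (1 - η / 2) * (K + a t) * a s * (t - s) := by ring
      _ ≤ (√(a t ^ 2 + K * a t) - (a s - a t)) ^ 2 * (t - s) :=
          mul_le_mul_of_nonneg_right hsq (by linarith)
      _ ≤ (a s - a t) * a s := by linarith
  · have hKC : (1 - η / 2) * (K + a t) ≤ C + K := by nlinarith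
    linarith [mul_le_mul_of_nonneg_left hKC (sub_nonneg.2 hst.le)]

theorem exp_one_sub_mul_le {η δ : ℝ} (hη : 0 < η) (hη1 : η < 1) (hδ : 0 ≤ δ) (hδη : δ ≤ η / 2) :
    Real.exp ((1 - η) * δ) ≤ 1 + (1 - η / 2) * δ := by
  have h0 : 0 ≤ (1 - η) * δ := mul_nonneg (by linarith) hδ
  have hle : (1 - η) * δ ≤ δ := by nlinarith
  have hexp := Real.abs_exp_sub_one_sub_id_le (x := (1 - η) * δ)
    (by rw [abs_of_nonneg h0]; linarith)
  nlinarith [(abs_le.1 hexp).2]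

theorem add_mul_exp_le_of_levelEnergyInequality {K t₀ t₁ : ℝ} {a : ℝ → ℝ} (hK : 0 < K)
    (ht : t₀ < t₁) (hanti : AntitoneOn a (Icc t₀ t₁)) (hpos : 0 < a t₁)
    (henergy : ∀ s t, t₀ ≤ s → s < t → t ≤ t₁ → LevelEnergyInequality K a s t) :
    (K + a t₁) * Real.exp (t₁ - t₀) ≤ K + a t₀ := by
  have hatt : a t₁ ≤ a t₀ := hanti (left_mem_Icc.2 ht.le) (right_mem_Icc.2 ht.le) ht.le
  have hrate : ∀ η : ℝ, 0 < η → η < 1 →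
      (K + a t₁) * Real.exp ((1 - η) * (t₁ - t₀)) ≤ K + a t₀ := by
    intro η hη hη1
    have hCK : 0 < a t₀ + K := by linarith
    set θ := a t₁ * K * η / (6 * (a t₀ + K))
    have hθ0 : 0 < θ := by positivity
    have hθ : θ * (6 * (a t₀ + K)) = a t₁ * K * η := div_mul_cancel₀ _ (by positivity)
    refine mul_exp_le_of_forall_sub_le (F := fun t => K + a t)
      (d := min (η / 2) (θ / (a t₀ + K))) (by positivity) ht fun s t hs hst ht₁ hd => ?_
    have hsmem : s ∈ Icc t₀ t₁ := ⟨hs, hst.le.trans ht₁⟩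
    have htmem : t ∈ Icc t₀ t₁ := ⟨hs.trans hst.le, ht₁⟩
    have hct := hanti htmem (right_mem_Icc.2 ht.le) ht₁
    have hgrowth := (henergy s t hs hst ht₁).mul_le_sub hst hK hη hη1 hpos hct
      (hanti hsmem htmem hst.le) (hanti (left_mem_Icc.2 ht.le) hsmem hs) hθ0 hθ
      ((le_div_iff₀ hCK).1 (hd.trans (min_le_right _ _)))
    calc (K + a t) * Real.exp ((1 - η) * (t - s))
        ≤ (K + a t) * (1 + (1 - η / 2) * (t - s)) :=
          mul_le_mul_of_nonneg_left (exp_one_sub_mul_le hη hη1 (by linarith)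
            (hd.trans (min_le_left _ _))) (by linarith)
      _ ≤ K + a s := by linarith
  have hlim : Tendsto (fun η : ℝ => (K + a t₁) * Real.exp ((1 - η) * (t₁ - t₀))) (𝓝[>] 0)
      (𝓝 ((K + a t₁) * Real.exp ((1 - 0) * (t₁ - t₀)))) :=
    Tendsto.mono_left (Continuous.tendsto (by fun_prop) 0) nhdsWithin_le_nhds
  rw [sub_zero, one_mul] at hlim
  refine le_of_tendsto hlim ?_
  filter_upwards [Ioo_mem_nhdsGT one_pos] with η hη
  exact hrate η hη.1 hη.2

end ExponentialGrowth

section BoxIntegral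

variable {F : ℝ × ℝ → ℝ} {a b c d : ℝ}

theorem setIntegral_box_eq_integral_integral (hab : a ≤ b) (hcd : c ≤ d)
    (hF : IntegrableOn F (Icc a b ×ˢ Icc c d)) :
    ∫ p in Icc a b ×ˢ Icc c d, F p = ∫ x in a..b, ∫ y in c..d, F (x, y) := by
  rw [Measure.volume_eq_prod] at hF ⊢
  simp only [setIntegral_prod _ hF, intervalIntegral.integral_of_le hab,
    intervalIntegral.integral_of_le hcd, integral_Icc_eq_integral_Ioc]

theorem setIntegral_box_eq_integral_integral_swap (hab : a ≤ b) (hcd : c ≤ d)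
    (hF : IntegrableOn F (Icc a b ×ˢ Icc c d)) :
    ∫ p in Icc a b ×ˢ Icc c d, F p = ∫ y in c..d, ∫ x in a..b, F (x, y) := by
  rw [Measure.volume_eq_prod] at hF ⊢
  rw [← setIntegral_prod_swap]
  simp only [setIntegral_prod (fun z : ℝ × ℝ => F z.swap) hF.swap, Prod.swap_prod_mk,
    intervalIntegral.integral_of_le hab, intervalIntegral.integral_of_le hcd,
    integral_Icc_eq_integral_Ioc]

theorem integrableOn_box (hF : Continuous F) : IntegrableOn F (Icc a b ×ˢ Icc c d) :=
  hF.continuousOn.integrableOn_compact (isCompact_Icc.prod isCompact_Icc)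

theorem integrableOn_one_div_sq (hc : 0 < c) {A : Set (ℝ × ℝ)} (hA : A ⊆ Icc a b ×ˢ Icc c d) :
    IntegrableOn (fun p : ℝ × ℝ => 1 / p.2 ^ 2) A := by
  refine (ContinuousOn.integrableOn_compact (isCompact_Icc.prod isCompact_Icc) ?_).mono_set hA
  exact continuousOn_const.div (by fun_prop)
    fun p hp => pow_ne_zero 2 (hc.trans_le hp.2.1).ne'

end BoxIntegral

section CalibrationProfile

/-- The solution of `φ' = k + φ`, `φ 0 = -1`. For `exp S = (k + 1) / (k - 1)` it increases from
`-1` to `1` on `[0, S]`; there it is the vertical component of the unit normal along a hyperbolic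
circle of geodesic curvature `k`, as a function of the logarithmic height. -/
noncomputable def calibrationProfile (k s : ℝ) : ℝ := (k - 1) * Real.exp s - k

variable {k S : ℝ}

@[fun_prop]
theorem continuous_calibrationProfile : Continuous (calibrationProfile k) := by
  unfold calibrationProfile; fun_prop

theorem hasDerivAt_calibrationProfile (s : ℝ) :
    HasDerivAt (calibrationProfile k) (k + calibrationProfile k s) s :=
  (((Real.hasDerivAt_exp s).const_mul (k - 1)).sub_const k).congr_deriv
    (by unfold calibrationProfile; ring)

theorem strictMono_calibrationProfile (hk : 1 < k) : StrictMono (calibrationProfile k) :=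
  fun _ _ hst => sub_lt_sub_right (mul_lt_mul_of_pos_left (Real.exp_lt_exp.2 hst)
    (sub_pos.2 hk)) k

theorem calibrationProfile_zero : calibrationProfile k 0 = -1 := by simp [calibrationProfile]

theorem calibrationProfile_eq_one (hk : 1 < k) (hkS : Real.exp S = (k + 1) / (k - 1)) :
    calibrationProfile k S = 1 := by
  rw [calibrationProfile, hkS, mul_div_cancel₀ _ (by linarith)]; ring

theorem exists_exp_eq_div (hS : 0 < S) : ∃ k, 1 < k ∧ Real.exp S = (k + 1) / (k - 1) := by
  have hE : 0 < Real.exp S - 1 := sub_pos.2 (Real.one_lt_exp_iff.2 hS)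
  refine ⟨(Real.exp S + 1) / (Real.exp S - 1), ?_, ?_⟩
  · rw [lt_div_iff₀ hE]; linarith
  · field_simp; ring

theorem hasDerivAt_arcsin_mobius {x : ℝ} (hk : 1 < k) (hx : x ∈ Ioo (-1) 1) :
    HasDerivAt (fun x => Real.arcsin ((1 + k * x) / (k + x)))
      (√(k ^ 2 - 1) / ((k + x) * √(1 - x ^ 2))) x := by
  have hkx : 0 < k + x := by linarith [hx.1]
  have hx2 : 0 < 1 - x ^ 2 := by nlinarith [hx.1, hx.2]
  have hk2 : 0 < k ^ 2 - 1 := by nlinarith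
  obtain ⟨y, hy⟩ : ∃ y, y = (1 + k * x) / (k + x) := ⟨_, rfl⟩
  have hysq : 1 - y ^ 2 = (k ^ 2 - 1) * (1 - x ^ 2) / (k + x) ^ 2 := by
    rw [hy]; field_simp; ring
  have hypos : 0 < 1 - y ^ 2 := hysq ▸ by positivity
  have hysqrt : √(1 - y ^ 2) = √(k ^ 2 - 1) * √(1 - x ^ 2) / (k + x) := by
    rw [hysq, Real.sqrt_div (by positivity), Real.sqrt_sq hkx.le, Real.sqrt_mul hk2.le]
  have hmobius : HasDerivAt (fun x => (1 + k * x) / (k + x)) ((k ^ 2 - 1) / (k + x) ^ 2) x :=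
    (((((hasDerivAt_id x).const_mul k).const_add 1).div
      ((hasDerivAt_id x).const_add k) hkx.ne').congr_deriv (by simp only [id]; ring))
  rw [hy] at hysqrt hypos
  refine ((Real.hasDerivAt_arcsin (fun h => by norm_num [h] at hypos)
    (fun h => by norm_num [h] at hypos)).comp x hmobius).congr_deriv ?_
  have hR : √(k ^ 2 - 1) ^ 2 = k ^ 2 - 1 := Real.sq_sqrt hk2.le
  rw [hysqrt]
  field_simp
  exact hR.symm

/-- An antiderivative of `x ↦ 2 √(1 - x²) / (k + x)` on `(-1, 1)`. -/
noncomputable def calibrationPrimitive (k x : ℝ) : ℝ :=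
  2 * (√(1 - x ^ 2) + k * Real.arcsin x - √(k ^ 2 - 1) * Real.arcsin ((1 + k * x) / (k + x)))

theorem hasDerivAt_calibrationPrimitive {x : ℝ} (hk : 1 < k) (hx : x ∈ Ioo (-1) 1) :
    HasDerivAt (calibrationPrimitive k) (2 * √(1 - x ^ 2) / (k + x)) x := by
  have hkx : 0 < k + x := by linarith [hx.1]
  have hx2 : 0 < 1 - x ^ 2 := by nlinarith [hx.1, hx.2]
  have hsqrt : HasDerivAt (fun x => √(1 - x ^ 2)) _ x :=
    (((hasDerivAt_id x).pow 2).const_sub 1).sqrt hx2.ne'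
  refine (((hsqrt.add ((Real.hasDerivAt_arcsin hx.1.ne' hx.2.ne).const_mul k)).sub
    ((hasDerivAt_arcsin_mobius hk hx).const_mul √(k ^ 2 - 1))).const_mul 2).congr_deriv ?_
  have hQ : √(1 - x ^ 2) ^ 2 = 1 - x ^ 2 := Real.sq_sqrt hx2.le
  have hR : √(k ^ 2 - 1) ^ 2 = k ^ 2 - 1 := Real.sq_sqrt (by nlinarith)
  simp only [id, Pi.pow_apply]
  field_simp
  rw [hQ, hR]
  ring

theorem continuousOn_calibrationPrimitive (hk : 1 < k) :
    ContinuousOn (calibrationPrimitive k) (Icc (-1) 1) := by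
  have hmobius : ContinuousOn (fun x => (1 + k * x) / (k + x)) (Icc (-1) 1) :=
    ContinuousOn.div (by fun_prop) (by fun_prop) fun x hx => by linarith [hx.1]
  have harcsin := Real.continuous_arcsin
  exact (Continuous.continuousOn (by fun_prop)).sub
    ((harcsin.comp_continuousOn hmobius).const_smul √(k ^ 2 - 1)) |>.const_smul (2 : ℝ)

theorem calibrationPrimitive_one_sub (hk : 1 < k) :
    calibrationPrimitive k 1 - calibrationPrimitive k (-1) = 2 * π * (k - √(k ^ 2 - 1)) := by
  have hright : (1 + k * 1) / (k + 1) = 1 := by rw [div_eq_one_iff_eq (by linarith)]; ring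
  have hleft : (1 + k * -1) / (k + -1) = -1 := by rw [div_eq_iff (by linarith)]; ring
  rw [calibrationPrimitive, calibrationPrimitive, hright, hleft, Real.arcsin_one,
    Real.arcsin_neg_one]
  norm_num
  ring

theorem integral_two_mul_sqrt_one_sub_calibrationProfile_sq (hk : 1 < k) (hS : 0 < S)
    (hkS : Real.exp S = (k + 1) / (k - 1)) :
    ∫ s in (0 : ℝ)..S, 2 * √(1 - calibrationProfile k s ^ 2) = 2 * π * (k - √(k ^ 2 - 1)) := by
  have hmono := strictMono_calibrationProfile hk
  have hzero : calibrationProfile k 0 = -1 := calibrationProfile_zero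
  have hone := calibrationProfile_eq_one hk hkS
  have hmaps : MapsTo (calibrationProfile k) (Icc 0 S) (Icc (-1) 1) := fun s hs =>
    ⟨hzero ▸ hmono.monotone hs.1, hone ▸ hmono.monotone hs.2⟩
  have hderiv : ∀ s ∈ Ioo 0 S, HasDerivAt (calibrationPrimitive k ∘ calibrationProfile k)
      (2 * √(1 - calibrationProfile k s ^ 2)) s := fun s hs => by
    have hmem : calibrationProfile k s ∈ Ioo (-1) 1 := ⟨hzero ▸ hmono hs.1, hone ▸ hmono hs.2⟩
    refine ((hasDerivAt_calibrationPrimitive hk hmem).comp s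
      (hasDerivAt_calibrationProfile s)).congr_deriv (div_mul_cancel₀ _ ?_)
    linarith [hmem.1]
  rw [intervalIntegral.integral_eq_sub_of_hasDerivAt_of_le hS.le
    ((continuousOn_calibrationPrimitive hk).comp continuous_calibrationProfile.continuousOn hmaps)
    hderiv (Continuous.intervalIntegrable (by fun_prop) _ _)]
  simp only [Function.comp_apply, hzero, hone, calibrationPrimitive_one_sub hk]

theorem sqrt_sq_add_four_pi_mul_le {A : ℝ} (hk : 1 < k) (hA : 0 ≤ A) :
    √(A ^ 2 + 4 * π * A) ≤ k * A + 2 * π * (k - √(k ^ 2 - 1)) := by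
  set R := √(k ^ 2 - 1)
  have hR2 : R ^ 2 = k ^ 2 - 1 := Real.sq_sqrt (by nlinarith)
  have hRk : 0 ≤ k - R := by nlinarith [Real.sqrt_nonneg (k ^ 2 - 1)]
  refine Real.sqrt_le_iff.2 ⟨by positivity, ?_⟩
  nlinarith [sq_nonneg ((A + 2 * π) * R - 2 * π * k)]

end CalibrationProfile

theorem sqrt_one_sub_sq_mul_abs_sub_mul_le {t : ℝ} (u v : ℝ) (ht : t ^ 2 ≤ 1) :
    √(1 - t ^ 2) * |u| - t * v ≤ √(u ^ 2 + v ^ 2) := by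
  refine Real.le_sqrt_of_sq_le ?_
  have hs : √(1 - t ^ 2) ^ 2 = 1 - t ^ 2 := Real.sq_sqrt (by linarith)
  nlinarith [sq_nonneg (√(1 - t ^ 2) * v + t * |u|), sq_abs u]

/-- The area of a subset of the upper half-plane for the hyperbolic metric `|dz| / y`. -/
noncomputable def halfPlaneArea (S : Set (ℝ × ℝ)) : ℝ := ∫ p in S, 1 / p.2 ^ 2

/-- `U` is a `C¹` function with partial derivatives `Ux`, `Uy` and values in `[0, 1]`; it vanishes
where `X ≤ |x|` and on the horizontal sides of the box `[-X, X] × [y₀, y₁]` of the upper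
half-plane. -/
structure IsBoxCutoff (X y₀ y₁ : ℝ) (U Ux Uy : ℝ → ℝ → ℝ) : Prop where
  width_pos : 0 < X
  bot_pos : 0 < y₀
  bot_lt_top : y₀ < y₁
  continuous : Continuous fun p : ℝ × ℝ => U p.1 p.2
  continuous_dx : Continuous fun p : ℝ × ℝ => Ux p.1 p.2
  continuous_dy : Continuous fun p : ℝ × ℝ => Uy p.1 p.2
  hasDerivAt_dx : ∀ x y, HasDerivAt (fun x => U x y) (Ux x y) x
  hasDerivAt_dy : ∀ x y, HasDerivAt (fun y => U x y) (Uy x y) y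
  nonneg : ∀ x y, 0 ≤ U x y
  le_one : ∀ x y, U x y ≤ 1
  eq_zero_of_le_abs : ∀ x y, X ≤ |x| → U x y = 0
  eq_zero_bot : ∀ x, U x y₀ = 0
  eq_zero_top : ∀ x, U x y₁ = 0

/-- The maximum of `U` on the horizontal slice `[-X, X] × {y}`. -/
noncomputable def sliceSup (X : ℝ) (U : ℝ → ℝ → ℝ) (y : ℝ) : ℝ :=
  sSup ((fun x => U x y) '' Icc (-X) X)

/-- The integral of `sliceSup` against `dy / y` from `y₀`; the denominator is frozen below `y₀` to
keep the integrand continuous on the whole line. -/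
noncomputable def sliceMass (X y₀ : ℝ) (U : ℝ → ℝ → ℝ) (y : ℝ) : ℝ :=
  ∫ s in y₀..y, sliceSup X U s / max s y₀

/-- The vertical component of the calibrating field adapted to `U`: the profile of the hyperbolic
circle, with logarithmic height replaced by `sliceMass`. -/
noncomputable def calibration (X y₀ k : ℝ) (U : ℝ → ℝ → ℝ) (y : ℝ) : ℝ :=
  calibrationProfile k (sliceMass X y₀ U y)

/-- The contribution of `Ux` to the flux of the calibrating field. -/
noncomputable def horizontalFlux (X y₀ k : ℝ) (U Ux : ℝ → ℝ → ℝ) (p : ℝ × ℝ) : ℝ :=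
  √(1 - calibration X y₀ k U p.2 ^ 2) * |Ux p.1 p.2| / max p.2 y₀

/-- The contribution of `Uy` to the flux of the calibrating field. -/
noncomputable def verticalFlux (X y₀ k : ℝ) (U Uy : ℝ → ℝ → ℝ) (p : ℝ × ℝ) : ℝ :=
  -(calibration X y₀ k U p.2 / max p.2 y₀) * Uy p.1 p.2

/-- `U` times the `y`-derivative of the coefficient of `verticalFlux`, up to sign: what
`verticalFlux` becomes after integration by parts. -/
noncomputable def calibrationDensity (X y₀ k : ℝ) (U : ℝ → ℝ → ℝ) (p : ℝ × ℝ) : ℝ :=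
  U p.1 p.2 * ((k + calibration X y₀ k U p.2) * sliceSup X U p.2 - calibration X y₀ k U p.2) /
    max p.2 y₀ ^ 2

namespace IsBoxCutoff

variable {X y₀ y₁ k : ℝ} {U Ux Uy : ℝ → ℝ → ℝ}

theorem max_bot_pos (h : IsBoxCutoff X y₀ y₁ U Ux Uy) (y : ℝ) : 0 < max y y₀ :=
  lt_max_of_lt_right h.bot_pos

theorem continuous_slice (h : IsBoxCutoff X y₀ y₁ U Ux Uy) (y : ℝ) :
    Continuous fun x => U x y :=
  h.continuous.comp (by fun_prop : Continuous fun x : ℝ => (x, y))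

theorem continuous_sliceSup (h : IsBoxCutoff X y₀ y₁ U Ux Uy) : Continuous (sliceSup X U) :=
  IsCompact.continuous_sSup (f := fun y x => U x y) isCompact_Icc
    (h.continuous.comp continuous_swap)

theorem exists_eq_sliceSup (h : IsBoxCutoff X y₀ y₁ U Ux Uy) (y : ℝ) :
    ∃ x ∈ Icc (-X) X, sliceSup X U y = U x y :=
  isCompact_Icc.exists_sSup_image_eq ⟨0, by simp [h.width_pos.le]⟩
    (h.continuous_slice y).continuousOn

theorem sliceSup_le_one (h : IsBoxCutoff X y₀ y₁ U Ux Uy) (y : ℝ) : sliceSup X U y ≤ 1 := by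
  obtain ⟨x, -, hx⟩ := h.exists_eq_sliceSup y
  exact hx ▸ h.le_one x y

theorem sliceSup_nonneg (h : IsBoxCutoff X y₀ y₁ U Ux Uy) (y : ℝ) : 0 ≤ sliceSup X U y := by
  obtain ⟨x, -, hx⟩ := h.exists_eq_sliceSup y
  exact hx ▸ h.nonneg x y

theorem le_sliceSup (h : IsBoxCutoff X y₀ y₁ U Ux Uy) (x y : ℝ) : U x y ≤ sliceSup X U y := by
  rcases le_total X |x| with hx | hx
  · exact (h.eq_zero_of_le_abs x y hx).trans_le (h.sliceSup_nonneg y)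
  · exact le_csSup (isCompact_Icc.image (h.continuous_slice y)).bddAbove
      ⟨x, abs_le.1 hx, rfl⟩

theorem two_mul_sliceSup_le (h : IsBoxCutoff X y₀ y₁ U Ux Uy) (y : ℝ) :
    2 * sliceSup X U y ≤ ∫ x in (-X)..X, |Ux x y| := by
  obtain ⟨x, hx, heq⟩ := h.exists_eq_sliceSup y
  have hc : Continuous fun x => Ux x y :=
    h.continuous_dx.comp (by fun_prop : Continuous fun x : ℝ => (x, y))
  have hftc (a b : ℝ) : ∫ x in a..b, Ux x y = U b y - U a y :=
    intervalIntegral.integral_eq_sub_of_hasDerivAt (fun z _ => h.hasDerivAt_dx z y)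
      (hc.intervalIntegrable a b)
  have hleft := intervalIntegral.abs_integral_le_integral_abs (f := fun x => Ux x y)
    (μ := volume) hx.1
  have hright := intervalIntegral.abs_integral_le_integral_abs (f := fun x => Ux x y)
    (μ := volume) hx.2
  rw [hftc, h.eq_zero_of_le_abs (-X) y (by rw [abs_neg]; exact le_abs_self X)] at hleft
  rw [hftc, h.eq_zero_of_le_abs X y (le_abs_self X)] at hright
  rw [heq, ← intervalIntegral.integral_add_adjacent_intervals
    (hc.abs.intervalIntegrable (-X) x) (hc.abs.intervalIntegrable x X)]
  linarith [le_abs_self (U x y - 0), neg_abs_le (0 - U x y)]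

theorem continuous_sliceSup_div (h : IsBoxCutoff X y₀ y₁ U Ux Uy) :
    Continuous fun y => sliceSup X U y / max y y₀ :=
  h.continuous_sliceSup.div (by fun_prop) fun y => (h.max_bot_pos y).ne'

theorem hasDerivAt_sliceMass (h : IsBoxCutoff X y₀ y₁ U Ux Uy) (y : ℝ) :
    HasDerivAt (sliceMass X y₀ U) (sliceSup X U y / max y y₀) y :=
  intervalIntegral.integral_hasDerivAt_right
    (h.continuous_sliceSup_div.intervalIntegrable _ _)
    (h.continuous_sliceSup_div.stronglyMeasurableAtFilter _ _)
    h.continuous_sliceSup_div.continuousAt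

theorem monotone_sliceMass (h : IsBoxCutoff X y₀ y₁ U Ux Uy) : Monotone (sliceMass X y₀ U) :=
  monotone_of_hasDerivAt_nonneg h.hasDerivAt_sliceMass
    fun y => div_nonneg (h.sliceSup_nonneg y) (h.max_bot_pos y).le

theorem sliceMass_pos (h : IsBoxCutoff X y₀ y₁ U Ux Uy) {x y : ℝ} (hy : y ∈ Icc y₀ y₁)
    (hU : 0 < U x y) : 0 < sliceMass X y₀ U y₁ :=
  intervalIntegral.integral_pos h.bot_lt_top h.continuous_sliceSup_div.continuousOn
    (fun y _ => div_nonneg (h.sliceSup_nonneg y) (h.max_bot_pos y).le)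
    ⟨y, hy, div_pos (hU.trans_le (h.le_sliceSup x y)) (h.max_bot_pos y)⟩

theorem hasDerivAt_calibration (h : IsBoxCutoff X y₀ y₁ U Ux Uy) (y : ℝ) :
    HasDerivAt (calibration X y₀ k U)
      ((k + calibration X y₀ k U y) * (sliceSup X U y / max y y₀)) y :=
  (hasDerivAt_calibrationProfile _).comp y (h.hasDerivAt_sliceMass y)

theorem continuous_calibration (h : IsBoxCutoff X y₀ y₁ U Ux Uy) :
    Continuous (calibration X y₀ k U) :=
  continuous_iff_continuousAt.2 fun y => (h.hasDerivAt_calibration y).continuousAt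

theorem calibration_mem_Icc (h : IsBoxCutoff X y₀ y₁ U Ux Uy) (hk : 1 < k)
    (hkS : Real.exp (sliceMass X y₀ U y₁) = (k + 1) / (k - 1)) {y : ℝ} (hy : y ∈ Icc y₀ y₁) :
    calibration X y₀ k U y ∈ Icc (-1) 1 := by
  have hmono := (strictMono_calibrationProfile hk).monotone.comp h.monotone_sliceMass
  have hbot : sliceMass X y₀ U y₀ = 0 := intervalIntegral.integral_same
  constructor
  · simpa only [calibration, Function.comp_apply, hbot, calibrationProfile_zero] using hmono hy.1
  · simpa only [calibration, Function.comp_apply, calibrationProfile_eq_one hk hkS] using hmono hy.2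

theorem continuous_horizontalFlux (h : IsBoxCutoff X y₀ y₁ U Ux Uy) :
    Continuous (horizontalFlux X y₀ k U Ux) := by
  have hcal := h.continuous_calibration (k := k)
  have hdx := h.continuous_dx
  exact Continuous.div (by fun_prop) (by fun_prop) fun p => (h.max_bot_pos p.2).ne'

theorem continuous_verticalFlux (h : IsBoxCutoff X y₀ y₁ U Ux Uy) :
    Continuous (verticalFlux X y₀ k U Uy) := by
  have hcal := h.continuous_calibration (k := k)
  have hcoeff : Continuous fun p : ℝ × ℝ => calibration X y₀ k U p.2 / max p.2 y₀ :=
    Continuous.div (by fun_prop) (by fun_prop) fun p => (h.max_bot_pos p.2).ne'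
  exact hcoeff.neg.mul h.continuous_dy

theorem continuous_calibrationDensity (h : IsBoxCutoff X y₀ y₁ U Ux Uy) :
    Continuous (calibrationDensity X y₀ k U) := by
  have hcal := h.continuous_calibration (k := k)
  have hsup := h.continuous_sliceSup
  have hU := h.continuous
  exact Continuous.div (by fun_prop) (by fun_prop)
    fun p => pow_ne_zero 2 (h.max_bot_pos p.2).ne'

theorem integral_flux_le (h : IsBoxCutoff X y₀ y₁ U Ux Uy) (hk : 1 < k)
    (hkS : Real.exp (sliceMass X y₀ U y₁) = (k + 1) / (k - 1)) :
    (∫ p in Icc (-X) X ×ˢ Icc y₀ y₁, horizontalFlux X y₀ k U Ux p) +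
        ∫ p in Icc (-X) X ×ˢ Icc y₀ y₁, verticalFlux X y₀ k U Uy p ≤
      ∫ p in Icc (-X) X ×ˢ Icc y₀ y₁, √(Ux p.1 p.2 ^ 2 + Uy p.1 p.2 ^ 2) / p.2 := by
  have hbox : MeasurableSet (Icc (-X) X ×ˢ Icc y₀ y₁) := measurableSet_Icc.prod measurableSet_Icc
  have hH := integrableOn_box (a := -X) (b := X) (c := y₀) (d := y₁)
    (h.continuous_horizontalFlux (k := k))
  have hV := integrableOn_box (a := -X) (b := X) (c := y₀) (d := y₁)
    (h.continuous_verticalFlux (k := k))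
  have hdx := h.continuous_dx
  have hdy := h.continuous_dy
  have hgrad : ContinuousOn (fun p : ℝ × ℝ => √(Ux p.1 p.2 ^ 2 + Uy p.1 p.2 ^ 2) / p.2)
      (Icc (-X) X ×ˢ Icc y₀ y₁) :=
    ContinuousOn.div (by fun_prop) (by fun_prop) fun p hp => (h.bot_pos.trans_le hp.2.1).ne'
  rw [← integral_add hH hV]
  refine setIntegral_mono_on (hH.add hV)
    (hgrad.integrableOn_compact (isCompact_Icc.prod isCompact_Icc)) hbox fun p hp => ?_
  have hcal := h.calibration_mem_Icc hk hkS hp.2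
  have hp2 : 0 < p.2 := h.bot_pos.trans_le hp.2.1
  have hcs := sqrt_one_sub_sq_mul_abs_sub_mul_le (Ux p.1 p.2) (Uy p.1 p.2)
    (show calibration X y₀ k U p.2 ^ 2 ≤ 1 by nlinarith [hcal.1, hcal.2])
  convert div_le_div_of_nonneg_right hcs hp2.le using 1
  rw [horizontalFlux, verticalFlux, max_eq_left hp.2.1]
  ring

theorem le_integral_horizontalFlux (h : IsBoxCutoff X y₀ y₁ U Ux Uy) (hk : 1 < k)
    (hS : 0 < sliceMass X y₀ U y₁)
    (hkS : Real.exp (sliceMass X y₀ U y₁) = (k + 1) / (k - 1)) :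
    2 * π * (k - √(k ^ 2 - 1)) ≤
      ∫ p in Icc (-X) X ×ˢ Icc y₀ y₁, horizontalFlux X y₀ k U Ux p := by
  have hsubst : ∫ y in y₀..y₁, 2 * √(1 - calibration X y₀ k U y ^ 2) *
      (sliceSup X U y / max y y₀) = 2 * π * (k - √(k ^ 2 - 1)) := by
    rw [← integral_two_mul_sqrt_one_sub_calibrationProfile_sq hk hS hkS,
      ← (intervalIntegral.integral_same : sliceMass X y₀ U y₀ = 0)]
    exact intervalIntegral.integral_comp_mul_deriv
      (g := fun s => 2 * √(1 - calibrationProfile k s ^ 2))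
      (fun y _ => h.hasDerivAt_sliceMass y) h.continuous_sliceSup_div.continuousOn (by fun_prop)
  have hslice (y : ℝ) : ∫ x in (-X)..X, horizontalFlux X y₀ k U Ux (x, y) =
      √(1 - calibration X y₀ k U y ^ 2) / max y y₀ * ∫ x in (-X)..X, |Ux x y| := by
    rw [← intervalIntegral.integral_const_mul]
    exact intervalIntegral.integral_congr fun x _ => by rw [horizontalFlux]; ring
  have hslice_cont : Continuous fun y => ∫ x in (-X)..X, |Ux x y| :=
    intervalIntegral.continuous_parametric_intervalIntegral_of_continuous'
      (h.continuous_dx.comp continuous_swap).abs _ _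
  have hcal := h.continuous_calibration (k := k)
  have hcoeff : Continuous fun y => √(1 - calibration X y₀ k U y ^ 2) := by fun_prop
  rw [← hsubst, setIntegral_box_eq_integral_integral_swap (by linarith [h.width_pos])
    h.bot_lt_top.le (integrableOn_box h.continuous_horizontalFlux)]
  simp only [hslice]
  refine intervalIntegral.integral_mono_on h.bot_lt_top.le
    (((hcoeff.const_smul (2 : ℝ)).mul h.continuous_sliceSup_div).intervalIntegrable _ _)
    (((hcoeff.div (by fun_prop) fun y => (h.max_bot_pos y).ne').mul
      hslice_cont).intervalIntegrable _ _) fun y _ => ?_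
  calc 2 * √(1 - calibration X y₀ k U y ^ 2) * (sliceSup X U y / max y y₀)
      = √(1 - calibration X y₀ k U y ^ 2) / max y y₀ * (2 * sliceSup X U y) := by ring
    _ ≤ _ := mul_le_mul_of_nonneg_left (h.two_mul_sliceSup_le y)
      (div_nonneg (Real.sqrt_nonneg _) (h.max_bot_pos y).le)

theorem integral_verticalFlux_slice (h : IsBoxCutoff X y₀ y₁ U Ux Uy) (x : ℝ) :
    ∫ y in y₀..y₁, verticalFlux X y₀ k U Uy (x, y) =
      ∫ y in y₀..y₁, calibrationDensity X y₀ k U (x, y) := by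
  have hcV : Continuous fun y => verticalFlux X y₀ k U Uy (x, y) :=
    h.continuous_verticalFlux.comp (by fun_prop)
  have hcD : Continuous fun y => calibrationDensity X y₀ k U (x, y) :=
    h.continuous_calibrationDensity.comp (by fun_prop)
  have hcU : Continuous fun y => U x y :=
    h.continuous.comp (by fun_prop : Continuous fun y : ℝ => (x, y))
  have hderiv : ∀ y ∈ Ioo y₀ y₁,
      HasDerivAt (fun y => -(calibration X y₀ k U y / max y y₀) * U x y)
        (verticalFlux X y₀ k U Uy (x, y) - calibrationDensity X y₀ k U (x, y)) y := by
    intro y hy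
    have hmax : HasDerivAt (fun y => max y y₀) 1 y := by
      refine (hasDerivAt_id y).congr_of_eventuallyEq ?_
      filter_upwards [Ioi_mem_nhds hy.1] with z hz
      exact max_eq_left (le_of_lt hz)
    have hne := (h.max_bot_pos y).ne'
    refine ((((h.hasDerivAt_calibration y).div hmax hne).neg).mul
      (h.hasDerivAt_dy x y)).congr_deriv ?_
    simp only [verticalFlux, calibrationDensity, Pi.neg_apply, Pi.div_apply]
    field_simp
    ring
  rw [← sub_eq_zero, ← intervalIntegral.integral_sub (hcV.intervalIntegrable _ _)
    (hcD.intervalIntegrable _ _), intervalIntegral.integral_eq_sub_of_hasDerivAt_of_le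
    h.bot_lt_top.le (((h.continuous_calibration.div (by fun_prop)
      fun y => (h.max_bot_pos y).ne').neg.mul hcU).continuousOn) hderiv
    ((hcV.sub hcD).intervalIntegrable _ _)]
  simp only [Pi.mul_apply, h.eq_zero_bot, h.eq_zero_top, mul_zero, sub_zero]

theorem integral_verticalFlux (h : IsBoxCutoff X y₀ y₁ U Ux Uy) :
    ∫ p in Icc (-X) X ×ˢ Icc y₀ y₁, verticalFlux X y₀ k U Uy p =
      ∫ p in Icc (-X) X ×ˢ Icc y₀ y₁, calibrationDensity X y₀ k U p := by
  have hX : -X ≤ X := by linarith [h.width_pos]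
  rw [setIntegral_box_eq_integral_integral hX h.bot_lt_top.le
      (integrableOn_box h.continuous_verticalFlux),
    setIntegral_box_eq_integral_integral hX h.bot_lt_top.le
      (integrableOn_box h.continuous_calibrationDensity)]
  exact intervalIntegral.integral_congr fun x _ => h.integral_verticalFlux_slice x

theorem calibrationDensity_of_eq_one (h : IsBoxCutoff X y₀ y₁ U Ux Uy) {p : ℝ × ℝ}
    (hp : p.2 ∈ Icc y₀ y₁) (hU : U p.1 p.2 = 1) :
    calibrationDensity X y₀ k U p = k * (1 / p.2 ^ 2) := by
  have hsup : sliceSup X U p.2 = 1 := (h.sliceSup_le_one _).antisymm (hU ▸ h.le_sliceSup _ _)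
  rw [calibrationDensity, hU, hsup, max_eq_left hp.1]
  ring

theorem neg_one_div_sq_le_calibrationDensity (h : IsBoxCutoff X y₀ y₁ U Ux Uy) (hk : 1 < k)
    (hkS : Real.exp (sliceMass X y₀ U y₁) = (k + 1) / (k - 1)) {p : ℝ × ℝ}
    (hp : p.2 ∈ Icc y₀ y₁) : -(1 / p.2 ^ 2) ≤ calibrationDensity X y₀ k U p := by
  obtain ⟨hlower, hupper⟩ := h.calibration_mem_Icc hk hkS hp
  rw [calibrationDensity, max_eq_left hp.1, ← neg_div]
  refine div_le_div_of_nonneg_right ?_ (sq_nonneg _)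
  have hfactor : -1 ≤ (k + calibration X y₀ k U p.2) * sliceSup X U p.2 -
      calibration X y₀ k U p.2 := by
    nlinarith [mul_nonneg (by linarith : 0 ≤ k + calibration X y₀ k U p.2)
      (h.sliceSup_nonneg p.2)]
  nlinarith [h.nonneg p.1 p.2, h.le_one p.1 p.2]

variable {S S' : Set (ℝ × ℝ)}

theorem le_integral_calibrationDensity (h : IsBoxCutoff X y₀ y₁ U Ux Uy) (hk : 1 < k)
    (hkS : Real.exp (sliceMass X y₀ U y₁) = (k + 1) / (k - 1))
    (hS : MeasurableSet S) (hS' : MeasurableSet S') (hSS : S' ⊆ S)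
    (hSb : S ⊆ Icc (-X) X ×ˢ Icc y₀ y₁) (hone : ∀ p ∈ S', U p.1 p.2 = 1)
    (hzero : ∀ p, p ∉ S → U p.1 p.2 = 0) :
    k * halfPlaneArea S' - (halfPlaneArea S - halfPlaneArea S') ≤
      ∫ p in Icc (-X) X ×ˢ Icc y₀ y₁, calibrationDensity X y₀ k U p := by
  have hbox : MeasurableSet (Icc (-X) X ×ˢ Icc y₀ y₁) := measurableSet_Icc.prod measurableSet_Icc
  have hSb' := hSS.trans hSb
  have hSd : S \ S' ⊆ Icc (-X) X ×ˢ Icc y₀ y₁ := sdiff_subset.trans hSb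
  have hD := integrableOn_box (a := -X) (b := X) (c := y₀) (d := y₁)
    (h.continuous_calibrationDensity (k := k))
  have hsplit {F : ℝ × ℝ → ℝ} (hF' : IntegrableOn F S') (hFd : IntegrableOn F (S \ S')) :
      ∫ p in S, F p = (∫ p in S', F p) + ∫ p in S \ S', F p := by
    rw [← setIntegral_union disjoint_sdiff_right (hS.diff hS') hF' hFd, union_sdiff_cancel hSS]
  have hinner : ∫ p in S', calibrationDensity X y₀ k U p = k * halfPlaneArea S' := by
    rw [halfPlaneArea, ← integral_const_mul]
    exact setIntegral_congr_fun hS' fun p hp =>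
      h.calibrationDensity_of_eq_one (hSb' hp).2 (hone p hp)
  have houter : -∫ p in S \ S', 1 / p.2 ^ 2 ≤
      ∫ p in S \ S', calibrationDensity X y₀ k U p := by
    rw [← integral_neg]
    exact setIntegral_mono_on (integrableOn_one_div_sq h.bot_pos hSd).neg (hD.mono_set hSd)
      (hS.diff hS') fun p hp => h.neg_one_div_sq_le_calibrationDensity hk hkS (hSd hp).2
  have harea : halfPlaneArea S = halfPlaneArea S' + ∫ p in S \ S', 1 / p.2 ^ 2 :=
    hsplit (integrableOn_one_div_sq h.bot_pos hSb') (integrableOn_one_div_sq h.bot_pos hSd)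
  rw [setIntegral_eq_of_subset_of_forall_sdiff_eq_zero hbox hSb
    (fun p hp => by rw [calibrationDensity, hzero p hp.2, zero_mul, zero_div]),
    hsplit (hD.mono_set hSb') (hD.mono_set hSd), hinner, harea]
  linarith

theorem sqrt_area_sub_le_integral_gradient (h : IsBoxCutoff X y₀ y₁ U Ux Uy)
    (hS : MeasurableSet S) (hS' : MeasurableSet S') (hSS : S' ⊆ S)
    (hSb : S ⊆ Icc (-X) X ×ˢ Icc y₀ y₁) (hone : ∀ p ∈ S', U p.1 p.2 = 1)
    (hzero : ∀ p, p ∉ S → U p.1 p.2 = 0) (hpos : 0 < halfPlaneArea S') :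
    √(halfPlaneArea S' ^ 2 + 4 * π * halfPlaneArea S') - (halfPlaneArea S - halfPlaneArea S') ≤
      ∫ p in Icc (-X) X ×ˢ Icc y₀ y₁, √(Ux p.1 p.2 ^ 2 + Uy p.1 p.2 ^ 2) / p.2 := by
  obtain ⟨p, hp⟩ : S'.Nonempty := by
    by_contra hempty
    simp [halfPlaneArea, not_nonempty_iff_eq_empty.1 hempty] at hpos
  have hmass : 0 < sliceMass X y₀ U y₁ :=
    h.sliceMass_pos (hSb (hSS hp)).2 (by rw [hone p hp]; exact one_pos)
  obtain ⟨k, hk, hkS⟩ := exists_exp_eq_div hmass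
  have hopt := sqrt_sq_add_four_pi_mul_le hk hpos.le
  have hflux := h.integral_flux_le hk hkS
  have hhor := h.le_integral_horizontalFlux hk hmass hkS
  have hvert := h.integral_verticalFlux (k := k)
  have hdens := h.le_integral_calibrationDensity hk hkS hS hS' hSS hSb hone hzero
  linarith

end IsBoxCutoff

section CauchySchwarz

theorem sq_integral_le_integral_mul_integral {Ω : Type*} [MeasurableSpace Ω] {μ : Measure Ω}
    {F G H : Ω → ℝ} (hF : Integrable F μ) (hG : Integrable G μ) (hH : Integrable H μ)
    (hF0 : 0 ≤ᵐ[μ] F) (hG0 : 0 ≤ᵐ[μ] G) (hle : ∀ᵐ x ∂μ, H x ^ 2 ≤ F x * G x) :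
    (∫ x, H x ∂μ) ^ 2 ≤ (∫ x, F x ∂μ) * ∫ x, G x ∂μ := by
  have hquad (l : ℝ) :
      0 ≤ (∫ x, F x ∂μ) * (l * l) + (-2 * ∫ x, H x ∂μ) * l + ∫ x, G x ∂μ := by
    have hsum : (∫ x, F x ∂μ) * (l * l) + (-2 * ∫ x, H x ∂μ) * l + ∫ x, G x ∂μ =
        ∫ x, (l * l * F x + -2 * l * H x + G x) ∂μ := by
      have hlin : Integrable (fun x => l * l * F x + -2 * l * H x) μ :=
        (hF.const_mul _).add (hH.const_mul _)
      rw [integral_add hlin hG, integral_add (hF.const_mul _) (hH.const_mul _),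
        integral_const_mul, integral_const_mul]
      ring
    rw [hsum]
    refine integral_nonneg_of_ae ?_
    filter_upwards [hF0, hG0, hle] with x hFx hGx hx
    simp only [Pi.zero_apply] at hFx hGx ⊢
    have hAMGM : |2 * l * H x| ≤ l * l * F x + G x := by
      refine abs_le_of_sq_le_sq ?_ (add_nonneg (mul_nonneg (mul_self_nonneg l) hFx) hGx)
      nlinarith [sq_nonneg (l * l * F x - G x), mul_le_mul_of_nonneg_left hx (sq_nonneg l)]
    linarith [(abs_le.1 hAMGM).2]
  have hdiscrim := discrim_le_zero hquad
  unfold discrim at hdiscrim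
  linarith

end CauchySchwarz

section Transition

/-- `Ψ` is a `C¹` function with derivative `g`, equal to `0` on `(-∞, 0]` and to `1` on `[δ, ∞)`,
whose derivative lies between `0` and `B`. -/
structure IsTransition (δ B : ℝ) (Ψ g : ℝ → ℝ) : Prop where
  hasDerivAt : ∀ t, HasDerivAt Ψ (g t) t
  continuous_deriv : Continuous g
  deriv_nonneg : ∀ t, 0 ≤ g t
  deriv_le : ∀ t, g t ≤ B
  eq_zero : ∀ t, t ≤ 0 → Ψ t = 0
  eq_one : ∀ t, δ ≤ t → Ψ t = 1
  deriv_eq_zero_of_nonpos : ∀ t, t ≤ 0 → g t = 0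
  deriv_eq_zero_of_le : ∀ t, δ ≤ t → g t = 0

variable {δ B ε κ t : ℝ} {Ψ g : ℝ → ℝ}

theorem IsTransition.continuous (h : IsTransition δ B Ψ g) : Continuous Ψ :=
  continuous_iff_continuousAt.2 fun t => (h.hasDerivAt t).continuousAt

theorem IsTransition.mem_Icc (h : IsTransition δ B Ψ g) (t : ℝ) : Ψ t ∈ Icc 0 1 := by
  have hmono := monotone_of_hasDerivAt_nonneg h.hasDerivAt h.deriv_nonneg
  have hlower := hmono (min_le_left t 0)
  have hupper := hmono (le_max_left t δ)
  rw [h.eq_zero _ (min_le_right t 0)] at hlower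
  rw [h.eq_one _ (le_max_right t δ)] at hupper
  exact ⟨hlower, hupper⟩

/-- The trapezoid supported on `[0, δ]` with height `1` and legs of width `κ`. -/
noncomputable def trapezoid (δ κ t : ℝ) : ℝ := max 0 (min 1 (min t (δ - t) / κ))

theorem continuous_trapezoid : Continuous (trapezoid δ κ) := by
  unfold trapezoid; fun_prop

theorem trapezoid_nonneg : 0 ≤ trapezoid δ κ t := le_max_left _ _

theorem trapezoid_le_one : trapezoid δ κ t ≤ 1 := max_le zero_le_one (min_le_left _ _)

theorem trapezoid_eq_zero_of_nonpos (hκ : 0 < κ) (ht : t ≤ 0) : trapezoid δ κ t = 0 :=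
  max_eq_left ((min_le_right _ _).trans
    (div_nonpos_of_nonpos_of_nonneg ((min_le_left _ _).trans ht) hκ.le))

theorem trapezoid_eq_zero_of_le (hκ : 0 < κ) (ht : δ ≤ t) : trapezoid δ κ t = 0 :=
  max_eq_left ((min_le_right _ _).trans
    (div_nonpos_of_nonpos_of_nonneg ((min_le_right _ _).trans (sub_nonpos.2 ht)) hκ.le))

theorem trapezoid_eq_one (hκ : 0 < κ) (ht : t ∈ Icc κ (δ - κ)) : trapezoid δ κ t = 1 := by
  have hone : 1 ≤ min t (δ - t) / κ := by
    rw [le_div_iff₀ hκ, one_mul]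
    exact le_min ht.1 (by linarith [ht.2])
  rw [trapezoid, min_eq_left hone, max_eq_right zero_le_one]

theorem le_integral_trapezoid (hκ : 0 < κ) (hκδ : 2 * κ ≤ δ) :
    δ - 2 * κ ≤ ∫ t in (0 : ℝ)..δ, trapezoid δ κ t := by
  have hint (a b : ℝ) : IntervalIntegrable (trapezoid δ κ) volume a b :=
    continuous_trapezoid.intervalIntegrable a b
  have hmid : ∫ t in κ..(δ - κ), trapezoid δ κ t = δ - 2 * κ := by
    rw [intervalIntegral.integral_congr (g := fun _ => (1 : ℝ)), intervalIntegral.integral_const,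
      smul_eq_mul]
    · ring
    · intro t ht
      rw [uIcc_of_le (by linarith)] at ht
      exact trapezoid_eq_one hκ ht
  rw [← intervalIntegral.integral_add_adjacent_intervals (hint 0 κ) (hint κ δ),
    ← intervalIntegral.integral_add_adjacent_intervals (hint κ (δ - κ)) (hint (δ - κ) δ), hmid]
  have hleft : 0 ≤ ∫ t in (0 : ℝ)..κ, trapezoid δ κ t :=
    intervalIntegral.integral_nonneg hκ.le fun t _ => trapezoid_nonneg
  have hright : 0 ≤ ∫ t in (δ - κ)..δ, trapezoid δ κ t :=
    intervalIntegral.integral_nonneg (by linarith) fun t _ => trapezoid_nonneg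
  linarith

theorem isTransition_integral_div (hg : Continuous g) (hg0 : ∀ t, 0 ≤ g t)
    (hgB : ∀ t, g t ≤ B * ∫ u in (0 : ℝ)..δ, g u) (hpos : 0 < ∫ u in (0 : ℝ)..δ, g u)
    (hleft : ∀ t, t ≤ 0 → g t = 0) (hright : ∀ t, δ ≤ t → g t = 0) :
    IsTransition δ B (fun t => (∫ u in (0 : ℝ)..t, g u) / ∫ u in (0 : ℝ)..δ, g u)
      (fun t => g t / ∫ u in (0 : ℝ)..δ, g u) where
  hasDerivAt t := (intervalIntegral.integral_hasDerivAt_right (hg.intervalIntegrable _ _)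
    (hg.stronglyMeasurableAtFilter _ _) hg.continuousAt).div_const _
  continuous_deriv := hg.div_const _
  deriv_nonneg t := div_nonneg (hg0 t) hpos.le
  deriv_le t := (div_le_iff₀ hpos).2 (hgB t)
  eq_zero t ht := by
    rw [intervalIntegral.integral_congr (g := fun _ => (0 : ℝ)),
      intervalIntegral.integral_zero, zero_div]
    intro u hu
    rw [uIcc_of_ge ht] at hu
    exact hleft u hu.2
  eq_one t ht := by
    rw [← intervalIntegral.integral_add_adjacent_intervals (hg.intervalIntegrable 0 δ)
      (hg.intervalIntegrable δ t), intervalIntegral.integral_congr (a := δ)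
      (g := fun _ => (0 : ℝ)), intervalIntegral.integral_zero, add_zero, div_self hpos.ne']
    intro u hu
    rw [uIcc_of_le ht] at hu
    exact hright u hu.1
  deriv_eq_zero_of_nonpos t ht := by rw [hleft t ht, zero_div]
  deriv_eq_zero_of_le t ht := by rw [hright t ht, zero_div]

theorem exists_isTransition (hδ : 0 < δ) (hε : 0 < ε) :
    ∃ Ψ g, IsTransition δ ((1 + ε) / δ) Ψ g := by
  obtain ⟨κ, hκ, hκδ⟩ : ∃ κ, 0 < κ ∧ δ - 2 * κ = δ / (1 + ε) :=
    ⟨δ * ε / (2 * (1 + ε)), by positivity, by field_simp; ring⟩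
  have hpos : 0 < δ / (1 + ε) := by positivity
  have hint := le_integral_trapezoid hκ (by linarith : 2 * κ ≤ δ)
  rw [hκδ] at hint
  refine ⟨_, _, isTransition_integral_div continuous_trapezoid (fun _ => trapezoid_nonneg)
    (fun t => trapezoid_le_one.trans ?_) (hpos.trans_le hint)
    (fun _ => trapezoid_eq_zero_of_nonpos hκ) (fun _ => trapezoid_eq_zero_of_le hκ)⟩
  calc (1 : ℝ) = (1 + ε) / δ * (δ / (1 + ε)) := by field_simp
    _ ≤ (1 + ε) / δ * ∫ u in (0 : ℝ)..δ, trapezoid δ κ u := by gcongr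

end Transition

section Truncation

/-- The part of the superlevel set `{V > c}` inside the domain `N` of `V`. -/
def superlevelOn (N : Set (ℝ × ℝ)) (V : ℝ × ℝ → ℝ) (c : ℝ) : Set (ℝ × ℝ) := {p | p ∈ N ∧ c < V p}

/-- The function `h (V - c) * Z` on `N`, extended by zero. -/
noncomputable def truncation (N : Set (ℝ × ℝ)) (V : ℝ × ℝ → ℝ) (c : ℝ) (h : ℝ → ℝ)
    (Z : ℝ × ℝ → ℝ) : ℝ × ℝ → ℝ :=
  N.indicator fun p => h (V p - c) * Z p

variable {N : Set (ℝ × ℝ)} {V Z Z' : ℝ × ℝ → ℝ} {c : ℝ} {h h' : ℝ → ℝ}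

theorem truncation_of_mem {p : ℝ × ℝ} (hp : p ∈ N) :
    truncation N V c h Z p = h (V p - c) * Z p :=
  indicator_of_mem hp _

theorem truncation_eq_zero (h0 : ∀ t, t ≤ 0 → h t = 0) {p : ℝ × ℝ} (hp : p ∈ N → V p ≤ c) :
    truncation N V c h Z p = 0 :=
  indicator_apply_eq_zero.2 fun hpN => by rw [h0 _ (sub_nonpos.2 (hp hpN)), zero_mul]

theorem truncation_add (p : ℝ × ℝ) : truncation N V c h (fun p => Z p + Z' p) p =
    truncation N V c h Z p + truncation N V c h Z' p := by
  simp only [truncation, mul_add, indicator_add]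

theorem continuous_truncation (hN : IsOpen N) (hV : ContinuousOn V N)
    (hout : ∀ p ∉ N, ∀ᶠ q in 𝓝 p, q ∈ N → V q ≤ c) (hh : Continuous h)
    (h0 : ∀ t, t ≤ 0 → h t = 0) (hZ : ContinuousOn Z N) :
    Continuous (truncation N V c h Z) := by
  refine continuous_iff_continuousAt.2 fun p => ?_
  by_cases hp : p ∈ N
  · have hVp := hV.continuousAt (hN.mem_nhds hp)
    have hZp := hZ.continuousAt (hN.mem_nhds hp)
    refine ((hh.continuousAt.comp (hVp.sub (continuousAt_const (y := c)))).mul hZp).congr ?_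
    filter_upwards [hN.mem_nhds hp] with q hq
    exact (truncation_of_mem hq).symm
  · refine (continuousAt_const (y := (0 : ℝ))).congr ?_
    filter_upwards [hout p hp] with q hq
    exact (truncation_eq_zero h0 hq).symm

theorem hasDerivAt_truncation_comp (hN : IsOpen N)
    (hout : ∀ p ∉ N, ∀ᶠ q in 𝓝 p, q ∈ N → V q ≤ c) (hh : ∀ t, HasDerivAt h (h' t) t)
    (h0 : ∀ t, t ≤ 0 → h t = 0) {ℓ : ℝ → ℝ × ℝ} (hℓ : Continuous ℓ) {Vs Zs : ℝ × ℝ → ℝ} {s : ℝ}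
    (hVs : ℓ s ∈ N → HasDerivAt (fun s => V (ℓ s)) (Vs (ℓ s)) s)
    (hZs : ℓ s ∈ N → HasDerivAt (fun s => Z (ℓ s)) (Zs (ℓ s)) s) :
    HasDerivAt (fun s => truncation N V c h Z (ℓ s))
      (truncation N V c h' (fun p => Vs p * Z p) (ℓ s) + truncation N V c h Zs (ℓ s)) s := by
  by_cases hs : ℓ s ∈ N
  · refine ((((hh (V (ℓ s) - c)).comp s ((hVs hs).sub_const c)).mul (hZs hs)).congr_deriv
      ?_).congr_of_eventuallyEq ?_
    · rw [truncation_of_mem hs, truncation_of_mem hs, Function.comp_apply, mul_assoc]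
    · filter_upwards [hℓ.continuousAt.preimage_mem_nhds (hN.mem_nhds hs)] with r hr
      exact truncation_of_mem hr
  · have hzero (k : ℝ → ℝ) (W : ℝ × ℝ → ℝ) : truncation N V c k W (ℓ s) = 0 :=
      indicator_of_notMem hs _
    rw [hzero, hzero, add_zero]
    refine (hasDerivAt_const s (0 : ℝ)).congr_of_eventuallyEq ?_
    filter_upwards [hℓ.continuousAt.eventually (hout _ hs)] with r hr
    exact truncation_eq_zero h0 hr

end Truncation

section Energy

/-- `V` is a `C²` solution of `ΔV = -1 / y²` on the open subset `N` of the upper half-plane, with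
the partial derivatives shown. Both `log y` and its sum with a harmonic function are examples. -/
structure IsCurvaturePotential (N : Set (ℝ × ℝ)) (V Vx Vy Vxx Vyy : ℝ × ℝ → ℝ) : Prop where
  isOpen : IsOpen N
  snd_pos : ∀ p ∈ N, 0 < p.2
  continuousOn : ContinuousOn V N
  continuousOn_dx : ContinuousOn Vx N
  continuousOn_dy : ContinuousOn Vy N
  continuousOn_dxx : ContinuousOn Vxx N
  continuousOn_dyy : ContinuousOn Vyy N
  hasDerivAt_dx : ∀ x y, (x, y) ∈ N → HasDerivAt (fun s => V (s, y)) (Vx (x, y)) x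
  hasDerivAt_dy : ∀ x y, (x, y) ∈ N → HasDerivAt (fun s => V (x, s)) (Vy (x, y)) y
  hasDerivAt_dxx : ∀ x y, (x, y) ∈ N → HasDerivAt (fun s => Vx (s, y)) (Vxx (x, y)) x
  hasDerivAt_dyy : ∀ x y, (x, y) ∈ N → HasDerivAt (fun s => Vy (x, s)) (Vyy (x, y)) y
  laplacian_eq : ∀ p ∈ N, Vxx p + Vyy p = -(1 / p.2 ^ 2)

/-- The superlevel set `{V > c}` stays away from the complement of `N` and lies in the open box
`(-X, X) × (y₀, y₁)` of the upper half-plane. -/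
structure IsConfinedLevel (N : Set (ℝ × ℝ)) (V : ℝ × ℝ → ℝ) (c X y₀ y₁ : ℝ) : Prop where
  width_pos : 0 < X
  bot_pos : 0 < y₀
  bot_lt_top : y₀ < y₁
  eventually_le : ∀ p ∉ N, ∀ᶠ q in 𝓝 p, q ∈ N → V q ≤ c
  mem_box : ∀ p ∈ N, c < V p → p ∈ Ioo (-X) X ×ˢ Ioo y₀ y₁

variable {N : Set (ℝ × ℝ)} {V Vx Vy Vxx Vyy Z : ℝ × ℝ → ℝ} {c c' X y₀ y₁ δ B : ℝ} {Ψ g : ℝ → ℝ}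

theorem le_of_notMem_superlevelOn {p : ℝ × ℝ} (hp : p ∉ superlevelOn N V c) : p ∈ N → V p ≤ c :=
  fun hpN => not_lt.1 fun hlt => hp ⟨hpN, hlt⟩

theorem measurableSet_superlevelOn (hN : IsOpen N) (hV : ContinuousOn V N) :
    MeasurableSet (superlevelOn N V c) :=
  (hV.isOpen_inter_preimage hN (isOpen_Ioi (a := c))).measurableSet

theorem IsConfinedLevel.superlevelOn_subset (hc : IsConfinedLevel N V c X y₀ y₁) :
    superlevelOn N V c ⊆ Icc (-X) X ×ˢ Icc y₀ y₁ := fun p hp =>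
  prod_mono Ioo_subset_Icc_self Ioo_subset_Icc_self (hc.mem_box p hp.1 hp.2)

theorem IsConfinedLevel.integrableOn_superlevelOn (hc : IsConfinedLevel N V c X y₀ y₁) :
    IntegrableOn (fun p : ℝ × ℝ => 1 / p.2 ^ 2) (superlevelOn N V c) :=
  integrableOn_one_div_sq hc.bot_pos hc.superlevelOn_subset

theorem IsConfinedLevel.le_of_notMem (hc : IsConfinedLevel N V c X y₀ y₁) {p : ℝ × ℝ}
    (hp : p ∉ Ioo (-X) X ×ˢ Ioo y₀ y₁) : p ∈ N → V p ≤ c := fun hpN =>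
  not_lt.1 fun hlt => hp (hc.mem_box p hpN hlt)

theorem IsCurvaturePotential.continuous_truncation_transition
    (hV : IsCurvaturePotential N V Vx Vy Vxx Vyy) (hc : IsConfinedLevel N V c X y₀ y₁)
    (hΨ : IsTransition δ B Ψ g) (hZ : ContinuousOn Z N) : Continuous (truncation N V c Ψ Z) :=
  continuous_truncation hV.isOpen hV.continuousOn hc.eventually_le hΨ.continuous hΨ.eq_zero hZ

theorem IsCurvaturePotential.continuous_truncation_deriv
    (hV : IsCurvaturePotential N V Vx Vy Vxx Vyy) (hc : IsConfinedLevel N V c X y₀ y₁)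
    (hΨ : IsTransition δ B Ψ g) (hZ : ContinuousOn Z N) : Continuous (truncation N V c g Z) :=
  continuous_truncation hV.isOpen hV.continuousOn hc.eventually_le hΨ.continuous_deriv
    hΨ.deriv_eq_zero_of_nonpos hZ

theorem IsCurvaturePotential.isBoxCutoff (hV : IsCurvaturePotential N V Vx Vy Vxx Vyy)
    (hc : IsConfinedLevel N V c X y₀ y₁) (hΨ : IsTransition δ B Ψ g) :
    IsBoxCutoff X y₀ y₁ (fun x y => truncation N V c Ψ (fun _ => 1) (x, y))
      (fun x y => truncation N V c g Vx (x, y)) (fun x y => truncation N V c g Vy (x, y)) where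
  width_pos := hc.width_pos
  bot_pos := hc.bot_pos
  bot_lt_top := hc.bot_lt_top
  continuous := hV.continuous_truncation_transition hc hΨ continuousOn_const
  continuous_dx := hV.continuous_truncation_deriv hc hΨ hV.continuousOn_dx
  continuous_dy := hV.continuous_truncation_deriv hc hΨ hV.continuousOn_dy
  hasDerivAt_dx x y := (hasDerivAt_truncation_comp hV.isOpen hc.eventually_le hΨ.hasDerivAt
    hΨ.eq_zero (ℓ := fun s => (s, y)) (by fun_prop) (Zs := fun _ => 0) (hV.hasDerivAt_dx x y)
    fun _ => hasDerivAt_const _ _).congr_deriv (by simp [truncation])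
  hasDerivAt_dy x y := (hasDerivAt_truncation_comp hV.isOpen hc.eventually_le hΨ.hasDerivAt
    hΨ.eq_zero (ℓ := fun s => (x, s)) (by fun_prop) (Zs := fun _ => 0) (hV.hasDerivAt_dy x y)
    fun _ => hasDerivAt_const _ _).congr_deriv (by simp [truncation])
  nonneg x y := indicator_nonneg (fun p _ => by simpa using (hΨ.mem_Icc (V p - c)).1) _
  le_one x y := indicator_apply_le' (fun _ => by simpa using (hΨ.mem_Icc _).2)
    fun _ => zero_le_one
  eq_zero_of_le_abs x y hx := truncation_eq_zero hΨ.eq_zero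
    (hc.le_of_notMem fun hp => hx.not_gt (abs_lt.2 hp.1))
  eq_zero_bot x := truncation_eq_zero hΨ.eq_zero (hc.le_of_notMem fun hp => hp.2.1.false)
  eq_zero_top x := truncation_eq_zero hΨ.eq_zero (hc.le_of_notMem fun hp => hp.2.2.false)

theorem IsCurvaturePotential.integral_dx_eq_zero (hV : IsCurvaturePotential N V Vx Vy Vxx Vyy)
    (hc : IsConfinedLevel N V c X y₀ y₁) (hΨ : IsTransition δ B Ψ g) :
    ∫ p in Icc (-X) X ×ˢ Icc y₀ y₁,
      (truncation N V c g (fun p => Vx p * Vx p) p + truncation N V c Ψ Vxx p) = 0 := by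
  have hcont : Continuous fun p =>
      truncation N V c g (fun p => Vx p * Vx p) p + truncation N V c Ψ Vxx p :=
    (hV.continuous_truncation_deriv hc hΨ (hV.continuousOn_dx.mul hV.continuousOn_dx)).add
      (hV.continuous_truncation_transition hc hΨ hV.continuousOn_dxx)
  rw [setIntegral_box_eq_integral_integral_swap (by linarith [hc.width_pos]) hc.bot_lt_top.le
    (integrableOn_box hcont)]
  refine (intervalIntegral.integral_congr (g := fun _ => (0 : ℝ)) fun y _ => ?_).trans
    intervalIntegral.integral_zero
  have hzero (x : ℝ) (hx : x ∉ Ioo (-X) X) : truncation N V c Ψ Vx (x, y) = 0 :=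
    truncation_eq_zero hΨ.eq_zero (hc.le_of_notMem fun hp => hx hp.1)
  simp only
  rw [intervalIntegral.integral_eq_sub_of_hasDerivAt (fun x _ =>
      hasDerivAt_truncation_comp hV.isOpen hc.eventually_le hΨ.hasDerivAt hΨ.eq_zero
        (ℓ := fun s => (s, y)) (by fun_prop) (hV.hasDerivAt_dx x y) (hV.hasDerivAt_dxx x y))
    ((hcont.comp (by fun_prop : Continuous fun x : ℝ => (x, y))).intervalIntegrable _ _),
    hzero X fun h => h.2.false, hzero (-X) fun h => h.1.false, sub_zero]

theorem IsCurvaturePotential.integral_dy_eq_zero (hV : IsCurvaturePotential N V Vx Vy Vxx Vyy)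
    (hc : IsConfinedLevel N V c X y₀ y₁) (hΨ : IsTransition δ B Ψ g) :
    ∫ p in Icc (-X) X ×ˢ Icc y₀ y₁,
      (truncation N V c g (fun p => Vy p * Vy p) p + truncation N V c Ψ Vyy p) = 0 := by
  have hcont : Continuous fun p =>
      truncation N V c g (fun p => Vy p * Vy p) p + truncation N V c Ψ Vyy p :=
    (hV.continuous_truncation_deriv hc hΨ (hV.continuousOn_dy.mul hV.continuousOn_dy)).add
      (hV.continuous_truncation_transition hc hΨ hV.continuousOn_dyy)
  rw [setIntegral_box_eq_integral_integral (by linarith [hc.width_pos]) hc.bot_lt_top.le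
    (integrableOn_box hcont)]
  refine (intervalIntegral.integral_congr (g := fun _ => (0 : ℝ)) fun x _ => ?_).trans
    intervalIntegral.integral_zero
  have hzero (y : ℝ) (hy : y ∉ Ioo y₀ y₁) : truncation N V c Ψ Vy (x, y) = 0 :=
    truncation_eq_zero hΨ.eq_zero (hc.le_of_notMem fun hp => hy hp.2)
  simp only
  rw [intervalIntegral.integral_eq_sub_of_hasDerivAt (fun y _ =>
      hasDerivAt_truncation_comp hV.isOpen hc.eventually_le hΨ.hasDerivAt hΨ.eq_zero
        (ℓ := fun s => (x, s)) (by fun_prop) (hV.hasDerivAt_dy x y) (hV.hasDerivAt_dyy x y))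
    ((hcont.comp (by fun_prop : Continuous fun y : ℝ => (x, y))).intervalIntegrable _ _),
    hzero y₁ fun h => h.2.false, hzero y₀ fun h => h.1.false, sub_zero]

theorem IsCurvaturePotential.integral_energy_eq (hV : IsCurvaturePotential N V Vx Vy Vxx Vyy)
    (hc : IsConfinedLevel N V c X y₀ y₁) (hΨ : IsTransition δ B Ψ g) :
    ∫ p in Icc (-X) X ×ˢ Icc y₀ y₁, truncation N V c g (fun p => Vx p * Vx p + Vy p * Vy p) p =
      ∫ p in Icc (-X) X ×ˢ Icc y₀ y₁, truncation N V c Ψ (fun p => 1 / p.2 ^ 2) p := by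
  have hdx := hV.integral_dx_eq_zero hc hΨ
  have hdy := hV.integral_dy_eq_zero hc hΨ
  have hx1 : IntegrableOn (truncation N V c g fun p => Vx p * Vx p)
      (Icc (-X) X ×ˢ Icc y₀ y₁) :=
    integrableOn_box (hV.continuous_truncation_deriv hc hΨ (hV.continuousOn_dx.mul
      hV.continuousOn_dx))
  have hy1 : IntegrableOn (truncation N V c g fun p => Vy p * Vy p)
      (Icc (-X) X ×ˢ Icc y₀ y₁) :=
    integrableOn_box (hV.continuous_truncation_deriv hc hΨ (hV.continuousOn_dy.mul
      hV.continuousOn_dy))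
  have hx2 := integrableOn_box (a := -X) (b := X) (c := y₀) (d := y₁)
    (hV.continuous_truncation_transition hc hΨ hV.continuousOn_dxx)
  have hy2 := integrableOn_box (a := -X) (b := X) (c := y₀) (d := y₁)
    (hV.continuous_truncation_transition hc hΨ hV.continuousOn_dyy)
  rw [integral_add hx1 hx2] at hdx
  rw [integral_add hy1 hy2] at hdy
  have hlaplacian (p : ℝ × ℝ) : truncation N V c Ψ (fun p => 1 / p.2 ^ 2) p =
      -(truncation N V c Ψ Vxx p + truncation N V c Ψ Vyy p) := by
    rw [← truncation_add]
    by_cases hp : p ∈ N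
    · rw [truncation_of_mem hp, truncation_of_mem hp, hV.laplacian_eq p hp, mul_neg, neg_neg]
    · simp only [truncation, indicator_of_notMem hp, neg_zero]
  simp only [truncation_add, hlaplacian]
  rw [integral_neg, integral_add hx1 hy1, integral_add hx2 hy2]
  linarith

theorem IsCurvaturePotential.continuousOn_one_div_sq
    (hV : IsCurvaturePotential N V Vx Vy Vxx Vyy) :
    ContinuousOn (fun p : ℝ × ℝ => 1 / p.2 ^ 2) N :=
  continuousOn_const.div (by fun_prop) fun p hp => (pow_pos (hV.snd_pos p hp) 2).ne'

theorem IsCurvaturePotential.integral_energy_le (hV : IsCurvaturePotential N V Vx Vy Vxx Vyy)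
    (hc : IsConfinedLevel N V c X y₀ y₁) (hΨ : IsTransition δ B Ψ g) :
    ∫ p in Icc (-X) X ×ˢ Icc y₀ y₁, truncation N V c g (fun p => Vx p * Vx p + Vy p * Vy p) p ≤
      halfPlaneArea (superlevelOn N V c) := by
  have hsub := hc.superlevelOn_subset
  rw [hV.integral_energy_eq hc hΨ,
    setIntegral_eq_of_subset_of_forall_sdiff_eq_zero (measurableSet_Icc.prod measurableSet_Icc)
      hsub fun p hp => truncation_eq_zero hΨ.eq_zero (le_of_notMem_superlevelOn hp.2)]
  refine setIntegral_mono_on ((integrableOn_box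
    (hV.continuous_truncation_transition hc hΨ hV.continuousOn_one_div_sq)).mono_set hsub)
    (integrableOn_one_div_sq hc.bot_pos hsub)
    (measurableSet_superlevelOn hV.isOpen hV.continuousOn) fun p hp => ?_
  rw [truncation_of_mem hp.1]
  exact mul_le_of_le_one_left (by positivity) (hΨ.mem_Icc _).2

theorem IsCurvaturePotential.halfPlaneArea_sub (hV : IsCurvaturePotential N V Vx Vy Vxx Vyy)
    (hc : IsConfinedLevel N V c X y₀ y₁) (hcc : c ≤ c') :
    halfPlaneArea (superlevelOn N V c) - halfPlaneArea (superlevelOn N V c') =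
      ∫ p in superlevelOn N V c \ superlevelOn N V c', 1 / p.2 ^ 2 :=
  (setIntegral_sdiff (measurableSet_superlevelOn hV.isOpen hV.continuousOn)
    hc.integrableOn_superlevelOn fun _ hp => ⟨hp.1, hcc.trans_lt hp.2⟩).symm

theorem IsCurvaturePotential.integral_weight_le (hV : IsCurvaturePotential N V Vx Vy Vxx Vyy)
    (hc : IsConfinedLevel N V c X y₀ y₁) (hcc : c ≤ c') (hΨ : IsTransition (c' - c) B Ψ g) :
    ∫ p in Icc (-X) X ×ˢ Icc y₀ y₁, truncation N V c g (fun p => 1 / p.2 ^ 2) p ≤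
      B * (halfPlaneArea (superlevelOn N V c) - halfPlaneArea (superlevelOn N V c')) := by
  have hsub : superlevelOn N V c \ superlevelOn N V c' ⊆ Icc (-X) X ×ˢ Icc y₀ y₁ :=
    sdiff_subset.trans hc.superlevelOn_subset
  rw [hV.halfPlaneArea_sub hc hcc, ← integral_const_mul,
    setIntegral_eq_of_subset_of_forall_sdiff_eq_zero (measurableSet_Icc.prod measurableSet_Icc)
      hsub fun p hp => ?_]
  · refine setIntegral_mono_on ((integrableOn_box
      (hV.continuous_truncation_deriv hc hΨ hV.continuousOn_one_div_sq)).mono_set hsub)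
      ((integrableOn_one_div_sq hc.bot_pos hsub).const_mul B)
      ((measurableSet_superlevelOn hV.isOpen hV.continuousOn).diff
        (measurableSet_superlevelOn hV.isOpen hV.continuousOn)) fun p hp => ?_
    rw [truncation_of_mem hp.1.1]
    exact mul_le_mul_of_nonneg_right (hΨ.deriv_le _) (by positivity)
  · by_cases hpc : p ∈ superlevelOn N V c
    · have hpc' : p ∈ superlevelOn N V c' := by_contra fun h => hp.2 ⟨hpc, h⟩
      rw [truncation_of_mem hpc.1, hΨ.deriv_eq_zero_of_le _ (sub_le_sub_right hpc'.2.le c),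
        zero_mul]
    · exact truncation_eq_zero hΨ.deriv_eq_zero_of_nonpos (le_of_notMem_superlevelOn hpc)

theorem IsCurvaturePotential.sq_integral_gradient_le
    (hV : IsCurvaturePotential N V Vx Vy Vxx Vyy) (hc : IsConfinedLevel N V c X y₀ y₁)
    (hΨ : IsTransition δ B Ψ g) :
    (∫ p in Icc (-X) X ×ˢ Icc y₀ y₁,
      √(truncation N V c g Vx p ^ 2 + truncation N V c g Vy p ^ 2) / p.2) ^ 2 ≤
      (∫ p in Icc (-X) X ×ˢ Icc y₀ y₁,
        truncation N V c g (fun p => Vx p * Vx p + Vy p * Vy p) p) *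
      ∫ p in Icc (-X) X ×ˢ Icc y₀ y₁, truncation N V c g (fun p => 1 / p.2 ^ 2) p := by
  have henergy : ContinuousOn (fun p => Vx p * Vx p + Vy p * Vy p) N :=
    (hV.continuousOn_dx.mul hV.continuousOn_dx).add (hV.continuousOn_dy.mul hV.continuousOn_dy)
  have hgradient : ContinuousOn (fun p => √(Vx p * Vx p + Vy p * Vy p) / p.2) N :=
    henergy.sqrt.div continuousOn_snd fun p hp => (hV.snd_pos p hp).ne'
  have hnonneg {Z : ℝ × ℝ → ℝ} (hZ : ∀ p, 0 ≤ Z p) (p : ℝ × ℝ) : 0 ≤ truncation N V c g Z p :=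
    indicator_nonneg (fun q _ => mul_nonneg (hΨ.deriv_nonneg _) (hZ q)) p
  have heq (p : ℝ × ℝ) : √(truncation N V c g Vx p ^ 2 + truncation N V c g Vy p ^ 2) / p.2 =
      truncation N V c g (fun p => √(Vx p * Vx p + Vy p * Vy p) / p.2) p := by
    by_cases hp : p ∈ N
    · rw [truncation_of_mem hp, truncation_of_mem hp, truncation_of_mem hp, ← mul_div_assoc,
        mul_pow, mul_pow, ← mul_add, Real.sqrt_mul (sq_nonneg _),
        Real.sqrt_sq (hΨ.deriv_nonneg _), sq, sq]
    · simp [truncation, indicator_of_notMem hp]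
  simp only [heq]
  refine sq_integral_le_integral_mul_integral
    (integrableOn_box (hV.continuous_truncation_deriv hc hΨ henergy))
    (integrableOn_box (hV.continuous_truncation_deriv hc hΨ hV.continuousOn_one_div_sq))
    (integrableOn_box (hV.continuous_truncation_deriv hc hΨ hgradient))
    (ae_of_all _ (hnonneg fun p => add_nonneg (mul_self_nonneg _) (mul_self_nonneg _)))
    (ae_of_all _ (hnonneg fun p => by positivity)) (ae_of_all _ fun p => ?_)
  by_cases hp : p ∈ N
  · rw [truncation_of_mem hp, truncation_of_mem hp, truncation_of_mem hp, mul_pow, div_pow,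
      Real.sq_sqrt (add_nonneg (mul_self_nonneg _) (mul_self_nonneg _))]
    exact le_of_eq (by ring)
  · simp [truncation, indicator_of_notMem hp]

theorem IsCurvaturePotential.sq_sqrt_area_sub_le_mul
    (hV : IsCurvaturePotential N V Vx Vy Vxx Vyy) (hc : IsConfinedLevel N V c X y₀ y₁)
    (hcc : c ≤ c') (hΨ : IsTransition (c' - c) B Ψ g)
    (hpos : 0 < halfPlaneArea (superlevelOn N V c'))
    (hle : halfPlaneArea (superlevelOn N V c) - halfPlaneArea (superlevelOn N V c') ≤
      √(halfPlaneArea (superlevelOn N V c') ^ 2 + 4 * π * halfPlaneArea (superlevelOn N V c'))) :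
    (√(halfPlaneArea (superlevelOn N V c') ^ 2 + 4 * π * halfPlaneArea (superlevelOn N V c')) -
        (halfPlaneArea (superlevelOn N V c) - halfPlaneArea (superlevelOn N V c'))) ^ 2 ≤
      halfPlaneArea (superlevelOn N V c) *
        (B * (halfPlaneArea (superlevelOn N V c) - halfPlaneArea (superlevelOn N V c'))) := by
  have hisoperimetric := (hV.isBoxCutoff hc hΨ).sqrt_area_sub_le_integral_gradient
    (measurableSet_superlevelOn hV.isOpen hV.continuousOn)
    (measurableSet_superlevelOn hV.isOpen hV.continuousOn)
    (fun p hp => ⟨hp.1, hcc.trans_lt hp.2⟩) hc.superlevelOn_subset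
    (fun p hp => by
      rw [truncation_of_mem hp.1, hΨ.eq_one _ (sub_le_sub_right hp.2.le c), mul_one])
    (fun p hp => truncation_eq_zero hΨ.eq_zero (le_of_notMem_superlevelOn hp)) hpos
  refine (pow_le_pow_left₀ (sub_nonneg.2 hle) hisoperimetric 2).trans
    ((hV.sq_integral_gradient_le hc hΨ).trans ?_)
  refine mul_le_mul (hV.integral_energy_le hc hΨ) (hV.integral_weight_le hc hcc hΨ) ?_
    (integral_nonneg fun p => by positivity)
  exact integral_nonneg fun p =>
    indicator_nonneg (fun q _ => mul_nonneg (hΨ.deriv_nonneg _) (by positivity)) p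

theorem IsCurvaturePotential.levelEnergyInequality
    (hV : IsCurvaturePotential N V Vx Vy Vxx Vyy) (hc : IsConfinedLevel N V c X y₀ y₁)
    (hcc : c < c') (hpos : 0 < halfPlaneArea (superlevelOn N V c')) :
    LevelEnergyInequality (4 * π) (fun t => halfPlaneArea (superlevelOn N V t)) c c' := by
  intro hle
  have hδ : 0 < c' - c := sub_pos.2 hcc
  refine le_of_tendsto_of_tendsto' tendsto_const_nhds
    (?_ : Tendsto (fun n : ℕ => (1 + 1 / ((n : ℝ) + 1)) * (halfPlaneArea (superlevelOn N V c) *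
      (halfPlaneArea (superlevelOn N V c) - halfPlaneArea (superlevelOn N V c')))) atTop _)
    fun n => ?_
  · simpa using ((tendsto_one_div_add_atTop_nhds_zero_nat (𝕜 := ℝ)).const_add 1).mul_const _
  · obtain ⟨Ψ, g, hΨ⟩ := exists_isTransition hδ (Nat.one_div_pos_of_nat (α := ℝ) (n := n))
    have hbound := hV.sq_sqrt_area_sub_le_mul hc hcc.le hΨ hpos hle
    refine (mul_le_mul_of_nonneg_right hbound hδ.le).trans_eq ?_
    field_simp

theorem IsCurvaturePotential.add_area_mul_exp_le (hV : IsCurvaturePotential N V Vx Vy Vxx Vyy)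
    (hconf : ∀ c, ∃ X y₀ y₁, IsConfinedLevel N V c X y₀ y₁) (hcc : c < c')
    (hpos : 0 < halfPlaneArea (superlevelOn N V c')) :
    (4 * π + halfPlaneArea (superlevelOn N V c')) * Real.exp (c' - c) ≤
      4 * π + halfPlaneArea (superlevelOn N V c) := by
  have hanti : Antitone fun t => halfPlaneArea (superlevelOn N V t) := fun s t hst => by
    obtain ⟨X, y₀, y₁, hs⟩ := hconf s
    exact setIntegral_mono_set hs.integrableOn_superlevelOn
      (ae_of_all _ fun p => by simp only [Pi.zero_apply]; positivity)
      (Eventually.of_forall fun p hp => ⟨hp.1, hst.trans_lt hp.2⟩)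
  refine add_mul_exp_le_of_levelEnergyInequality (a := fun t => halfPlaneArea (superlevelOn N V t))
    (by positivity) hcc (hanti.antitoneOn _) hpos fun s t _ hst ht => ?_
  obtain ⟨X, y₀, y₁, hs⟩ := hconf s
  exact hV.levelEnergyInequality hs hst (hpos.trans_le (hanti ht))

end Energy

section HalfPlanePotential

open Complex (I)

/-- The point `x + i y` of the complex plane with coordinates `(x, y)`. -/
noncomputable def toComplex (p : ℝ × ℝ) : ℂ := p.1 + p.2 * I

/-- The points of the upper half-plane at which `G` does not vanish, in real coordinates. -/
def nonvanishingSet (G : ℂ → ℂ) : Set (ℝ × ℝ) := {p | 0 < p.2 ∧ G (toComplex p) ≠ 0}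

/-- The logarithm of `‖G z‖ ^ γ * (1 - ‖w‖ ^ 2)`, where `w = (z - i) / (z + i)` is the image of
`z = x + i y` under the Cayley transform. -/
noncomputable def halfPlanePotential (G : ℂ → ℂ) (γ : ℝ) (p : ℝ × ℝ) : ℝ :=
  γ * Real.log ‖G (toComplex p)‖ + Real.log (4 * p.2) - 2 * Real.log ‖toComplex p + I‖

/-- The holomorphic function `Λ` such that `halfPlanePotential G γ - log y` has gradient
`(Re Λ, -Im Λ)`. -/
noncomputable def potentialGradient (G : ℂ → ℂ) (γ : ℝ) (z : ℂ) : ℂ :=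
  γ * logDeriv G z - 2 / (z + I)

variable {G : ℂ → ℂ} {γ C c x y : ℝ} {z : ℂ} {p : ℝ × ℝ}

theorem im_toComplex (p : ℝ × ℝ) : (toComplex p).im = p.2 := by
  simp [toComplex]

theorem im_toComplex_pos (hp : 0 < p.2) : 0 < (toComplex p).im := by
  rwa [im_toComplex]

theorem continuous_toComplex : Continuous toComplex := by
  unfold toComplex
  fun_prop

theorem isOpen_setOf_im_pos : IsOpen {z : ℂ | 0 < z.im} :=
  isOpen_lt continuous_const Complex.continuous_im

theorem add_I_ne_zero (hz : 0 < z.im) : z + I ≠ 0 := fun h => by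
  have him : z.im + 1 = 0 := by simpa using congrArg Complex.im h
  linarith

theorem norm_toComplex_add_I_sq (p : ℝ × ℝ) :
    ‖toComplex p + I‖ ^ 2 = p.1 ^ 2 + (p.2 + 1) ^ 2 := by
  rw [← Complex.normSq_eq_norm_sq, Complex.normSq_apply]
  simp [toComplex]
  ring

theorem hasDerivAt_toComplex_fst (x y : ℝ) : HasDerivAt (fun s => toComplex (s, y)) 1 x :=
  (Complex.ofRealCLM.hasDerivAt (x := x)).add_const ((y : ℂ) * I)

theorem hasDerivAt_toComplex_snd (x y : ℝ) : HasDerivAt (fun s => toComplex (x, s)) I y := by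
  simpa [toComplex] using
    ((Complex.ofRealCLM.hasDerivAt (x := y)).mul_const I).const_add (x : ℂ)

theorem hasDerivAt_log_norm {φ : ℝ → ℂ} {φ' : ℂ} {t : ℝ} (hφ : HasDerivAt φ φ' t)
    (h0 : φ t ≠ 0) : HasDerivAt (fun t => Real.log ‖φ t‖) (φ' / φ t).re t := by
  have hlogsq := (hφ.norm_sq.log (by positivity)).div_const 2
  refine (hlogsq.congr_deriv ?_).congr_of_eventuallyEq (.of_forall fun s => ?_)
  · have hre : (φ' / φ t).re = inner ℝ (φ t) φ' / ‖φ t‖ ^ 2 := by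
      rw [Complex.div_re, Complex.inner, ← Complex.normSq_eq_norm_sq]
      simp
      ring
    rw [hre]
    field_simp
  · simp only [Real.log_pow, Nat.cast_ofNat]
    ring

theorem exp_halfPlanePotential (hp : p ∈ nonvanishingSet G) :
    Real.exp (halfPlanePotential G γ p) =
      ‖G (toComplex p)‖ ^ γ * (4 * p.2 / ‖toComplex p + I‖ ^ 2) := by
  have hG := norm_pos_iff.2 hp.2
  have hI := norm_pos_iff.2 (add_I_ne_zero (im_toComplex_pos hp.1))
  rw [halfPlanePotential, add_sub_assoc, Real.exp_add, Real.exp_sub, mul_comm γ,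
    ← Real.rpow_def_of_pos hG, Real.exp_log (mul_pos four_pos hp.1), mul_comm 2, Real.exp_mul,
    Real.exp_log hI, Real.rpow_two]

theorem exists_box_of_lt_halfPlanePotential (hγ : 0 ≤ γ) (hC : ∀ z : ℂ, 0 < z.im → ‖G z‖ ≤ C)
    (c : ℝ) : ∃ M, 1 < M ∧ ∀ p ∈ nonvanishingSet G, c < halfPlanePotential G γ p →
      p ∈ Ioo (-M) M ×ˢ Ioo M⁻¹ M := by
  have hC0 : 0 ≤ C := (norm_nonneg _).trans (hC I (by simp))
  have hD0 : 0 ≤ C ^ γ * 4 / Real.exp c := by positivity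
  generalize hD : C ^ γ * 4 / Real.exp c = D at hD0
  refine ⟨D + 2, by linarith, fun p hp hlt => ?_⟩
  have hy : 0 < p.2 := hp.1
  have hq : 0 < p.1 ^ 2 + (p.2 + 1) ^ 2 := by positivity
  have hquad : p.1 ^ 2 + (p.2 + 1) ^ 2 < D * p.2 := by
    have hGC : ‖G (toComplex p)‖ ^ γ ≤ C ^ γ :=
      Real.rpow_le_rpow (norm_nonneg _) (hC _ (im_toComplex_pos hy)) hγ
    have hexp := Real.exp_lt_exp.2 hlt
    rw [exp_halfPlanePotential hp, norm_toComplex_add_I_sq, ← mul_div_assoc,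
      lt_div_iff₀ hq] at hexp
    rw [← hD, div_mul_eq_mul_div, lt_div_iff₀ (Real.exp_pos c), mul_assoc (C ^ γ)]
    nlinarith [mul_le_mul_of_nonneg_right hGC (by positivity : 0 ≤ 4 * p.2)]
  have hyD : p.2 < D := by nlinarith [sq_nonneg p.1]
  refine ⟨abs_lt.1 (abs_lt_of_sq_lt_sq (by nlinarith) (by linarith)), ?_, by linarith⟩
  rw [inv_lt_iff_one_lt_mul₀ (by linarith)]
  nlinarith [sq_nonneg p.1]

theorem continuousOn_comp_toComplex {F : ℂ → ℂ} {s : Set ℂ} (hF : ContinuousOn F s) :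
    ContinuousOn (fun p => F (toComplex p)) (toComplex ⁻¹' s) :=
  hF.comp continuous_toComplex.continuousOn (mapsTo_preimage _ _)

theorem eventually_halfPlanePotential_le (hγ : 0 < γ)
    (hG : ContinuousOn G {z | 0 < z.im}) (hC : ∀ z : ℂ, 0 < z.im → ‖G z‖ ≤ C)
    (hp : p ∉ nonvanishingSet G) (c : ℝ) :
    ∀ᶠ q in 𝓝 p, q ∈ nonvanishingSet G → halfPlanePotential G γ q ≤ c := by
  by_cases hy : 0 < p.2
  · have hGp : G (toComplex p) = 0 := by_contra fun h => hp ⟨hy, h⟩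
    have hzp : toComplex p ∈ {z : ℂ | 0 < z.im} := im_toComplex_pos hy
    have hGcont : ContinuousAt (fun q => G (toComplex q)) p :=
      (hG.continuousAt (isOpen_setOf_im_pos.mem_nhds hzp)).comp continuous_toComplex.continuousAt
    have hweight : ContinuousAt
        (fun q : ℝ × ℝ => ‖G (toComplex q)‖ ^ γ * (4 * q.2 / ‖toComplex q + I‖ ^ 2)) p := by
      refine (hGcont.norm.rpow_const (Or.inr hγ.le)).mul (ContinuousAt.div (by fun_prop) ?_ ?_)
      · exact ((continuous_toComplex.add continuous_const).norm.pow 2).continuousAt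
      · exact pow_ne_zero 2 (norm_ne_zero_iff.2 (add_I_ne_zero hzp))
    have hlt : ∀ᶠ q in 𝓝 p,
        ‖G (toComplex q)‖ ^ γ * (4 * q.2 / ‖toComplex q + I‖ ^ 2) < Real.exp c := by
      refine hweight.eventually_lt_const ?_
      simp only
      rw [hGp, norm_zero, Real.zero_rpow hγ.ne', zero_mul]
      exact Real.exp_pos c
    filter_upwards [hlt] with q hq hqN
    rw [← exp_halfPlanePotential hqN] at hq
    exact (Real.exp_lt_exp.1 hq).le
  · obtain ⟨M, hM, hbox⟩ := exists_box_of_lt_halfPlanePotential hγ.le hC c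
    have hlt : p.2 < M⁻¹ := (not_lt.1 hy).trans_lt (by positivity)
    filter_upwards [continuousAt_snd.eventually_lt_const hlt] with q hq hqN
    exact not_lt.1 fun hc => hq.not_gt (hbox q hqN hc).2.1

theorem exists_isConfinedLevel_halfPlanePotential (hγ : 0 < γ)
    (hG : ContinuousOn G {z | 0 < z.im}) (hC : ∀ z : ℂ, 0 < z.im → ‖G z‖ ≤ C) (c : ℝ) :
    ∃ X y₀ y₁, IsConfinedLevel (nonvanishingSet G) (halfPlanePotential G γ) c X y₀ y₁ := by
  obtain ⟨M, hM, hbox⟩ := exists_box_of_lt_halfPlanePotential hγ.le hC c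
  exact ⟨M, M⁻¹, M, by positivity, by positivity, (inv_lt_one_of_one_lt₀ hM).trans hM,
    fun p hp => eventually_halfPlanePotential_le hγ hG hC hp c, hbox⟩

theorem isOpen_nonvanishing (hG : ContinuousOn G {z | 0 < z.im}) :
    IsOpen {z : ℂ | 0 < z.im ∧ G z ≠ 0} :=
  hG.isOpen_inter_preimage isOpen_setOf_im_pos isOpen_compl_singleton

theorem nonvanishingSet_eq_preimage :
    nonvanishingSet G = toComplex ⁻¹' {z | 0 < z.im ∧ G z ≠ 0} := by
  simp only [nonvanishingSet, preimage_ofPred_eq, im_toComplex]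

theorem differentiableOn_potentialGradient (hG : DifferentiableOn ℂ G {z | 0 < z.im}) :
    DifferentiableOn ℂ (potentialGradient G γ) {z | 0 < z.im ∧ G z ≠ 0} := by
  have hG' : DifferentiableOn ℂ G {z | 0 < z.im ∧ G z ≠ 0} := hG.mono fun z hz => hz.1
  have hlog := (hG'.deriv (isOpen_nonvanishing hG.continuousOn)).div hG' fun z hz => hz.2
  exact (hlog.const_mul _).sub ((differentiableOn_const _).div (by fun_prop)
    fun z hz => add_I_ne_zero hz.1)

theorem continuousOn_halfPlanePotential (hG : ContinuousOn G {z | 0 < z.im}) :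
    ContinuousOn (halfPlanePotential G γ) (nonvanishingSet G) := by
  have hGc : ContinuousOn (fun p => G (toComplex p)) (nonvanishingSet G) :=
    (continuousOn_comp_toComplex hG).mono fun p hp => im_toComplex_pos hp.1
  refine ((continuousOn_const.mul (hGc.norm.log fun p hp => norm_ne_zero_iff.2 hp.2)).add
    (ContinuousOn.log (by fun_prop) fun p hp => (mul_pos four_pos hp.1).ne')).sub
    (continuousOn_const.mul (ContinuousOn.log ?_ fun p hp => norm_ne_zero_iff.2
      (add_I_ne_zero (im_toComplex_pos hp.1))))
  exact (continuous_toComplex.add continuous_const).norm.continuousOn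

theorem hasDerivAt_halfPlanePotential_fst (hG : DifferentiableOn ℂ G {z | 0 < z.im})
    (hp : (x, y) ∈ nonvanishingSet G) :
    HasDerivAt (fun s => halfPlanePotential G γ (s, y))
      (potentialGradient G γ (toComplex (x, y))).re x := by
  have hz : 0 < (toComplex (x, y)).im := im_toComplex_pos hp.1
  have hline := hasDerivAt_toComplex_fst x y
  have hGline : HasDerivAt (fun s => G (toComplex (s, y))) _ x :=
    (hG.differentiableAt (isOpen_setOf_im_pos.mem_nhds hz)).hasDerivAt.comp x hline
  refine ((((hasDerivAt_log_norm hGline hp.2).const_mul γ).add_const (Real.log (4 * y))).sub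
    ((hasDerivAt_log_norm (hline.add_const I) (add_I_ne_zero hz)).const_mul 2)).congr_deriv ?_
  have hre (v : ℂ) : 2 * (1 / v).re = (2 / v).re := by
    rw [div_eq_mul_one_div 2, ← Complex.ofReal_ofNat, Complex.re_ofReal_mul]
  rw [potentialGradient, logDeriv_apply, Complex.sub_re, Complex.re_ofReal_mul, mul_one, hre]

theorem hasDerivAt_halfPlanePotential_snd (hG : DifferentiableOn ℂ G {z | 0 < z.im})
    (hp : (x, y) ∈ nonvanishingSet G) :
    HasDerivAt (fun s => halfPlanePotential G γ (x, s))
      (-(potentialGradient G γ (toComplex (x, y))).im + 1 / y) y := by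
  have hy : 0 < y := hp.1
  have hz : 0 < (toComplex (x, y)).im := im_toComplex_pos hy
  have hline := hasDerivAt_toComplex_snd x y
  have hGline : HasDerivAt (fun s => G (toComplex (x, s))) _ y :=
    (hG.differentiableAt (isOpen_setOf_im_pos.mem_nhds hz)).hasDerivAt.comp y hline
  have hlogy : HasDerivAt (fun s : ℝ => Real.log (4 * s)) (4 * 1 / (4 * y)) y :=
    ((hasDerivAt_id y).const_mul 4).log (by positivity)
  refine ((((hasDerivAt_log_norm hGline hp.2).const_mul γ).add hlogy).sub
    ((hasDerivAt_log_norm (hline.add_const I) (add_I_ne_zero hz)).const_mul 2)).congr_deriv ?_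
  have hre (w v : ℂ) : (w * I / v).re = -(w / v).im := by rw [mul_div_right_comm, Complex.mul_I_re]
  have hreI (v : ℂ) : 2 * (I / v).re = -(2 / v).im := by
    rw [← hre, ← Complex.ofReal_ofNat, mul_div_assoc, Complex.re_ofReal_mul]
  rw [potentialGradient, logDeriv_apply, Complex.sub_im, Complex.im_ofReal_mul, hre, hreI,
    mul_div_mul_left _ _ four_ne_zero]
  ring

theorem hasDerivAt_re_comp_toComplex_fst {F : ℂ → ℂ}
    (hF : DifferentiableAt ℂ F (toComplex (x, y))) :
    HasDerivAt (fun s => (F (toComplex (s, y))).re) (deriv F (toComplex (x, y))).re x := by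
  have hline : HasDerivAt (fun s => F (toComplex (s, y))) _ x :=
    hF.hasDerivAt.comp x (hasDerivAt_toComplex_fst x y)
  exact (Complex.reCLM.hasFDerivAt.comp_hasDerivAt x hline).congr_deriv (by simp)

theorem hasDerivAt_im_comp_toComplex_snd {F : ℂ → ℂ}
    (hF : DifferentiableAt ℂ F (toComplex (x, y))) :
    HasDerivAt (fun s => (F (toComplex (x, s))).im) (deriv F (toComplex (x, y))).re y := by
  have hline : HasDerivAt (fun s => F (toComplex (x, s))) _ y :=
    hF.hasDerivAt.comp y (hasDerivAt_toComplex_snd x y)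
  exact (Complex.imCLM.hasFDerivAt.comp_hasDerivAt y hline).congr_deriv (by simp)

theorem isCurvaturePotential_halfPlanePotential (hG : DifferentiableOn ℂ G {z | 0 < z.im}) :
    IsCurvaturePotential (nonvanishingSet G) (halfPlanePotential G γ)
      (fun p => (potentialGradient G γ (toComplex p)).re)
      (fun p => -(potentialGradient G γ (toComplex p)).im + 1 / p.2)
      (fun p => (deriv (potentialGradient G γ) (toComplex p)).re)
      (fun p => -(deriv (potentialGradient G γ) (toComplex p)).re - 1 / p.2 ^ 2) := by
  have hopen := isOpen_nonvanishing hG.continuousOn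
  have hΛ := differentiableOn_potentialGradient (γ := γ) hG
  have hN := nonvanishingSet_eq_preimage (G := G)
  have hΛc := hN ▸ continuousOn_comp_toComplex hΛ.continuousOn
  have hΛ'c := hN ▸ continuousOn_comp_toComplex (hΛ.deriv hopen).continuousOn
  have hΛd {x y : ℝ} (hp : (x, y) ∈ nonvanishingSet G) :
      DifferentiableAt ℂ (potentialGradient G γ) (toComplex (x, y)) :=
    hΛ.differentiableAt (hopen.mem_nhds (hN.subset hp))
  have hinv (n : ℕ) : ContinuousOn (fun p : ℝ × ℝ => 1 / p.2 ^ n) (nonvanishingSet G) :=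
    continuousOn_const.div (by fun_prop) fun p hp => pow_ne_zero n hp.1.ne'
  exact
    { isOpen := hN ▸ hopen.preimage continuous_toComplex
      snd_pos := fun p hp => hp.1
      continuousOn := continuousOn_halfPlanePotential hG.continuousOn
      continuousOn_dx := Complex.continuous_re.comp_continuousOn hΛc
      continuousOn_dy := (Complex.continuous_im.comp_continuousOn hΛc).neg.add
        (by simpa using hinv 1)
      continuousOn_dxx := Complex.continuous_re.comp_continuousOn hΛ'c
      continuousOn_dyy := (Complex.continuous_re.comp_continuousOn hΛ'c).neg.sub (hinv 2)
      hasDerivAt_dx := fun x y hp => hasDerivAt_halfPlanePotential_fst hG hp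
      hasDerivAt_dy := fun x y hp => hasDerivAt_halfPlanePotential_snd hG hp
      hasDerivAt_dxx := fun x y hp => hasDerivAt_re_comp_toComplex_fst (hΛd hp)
      hasDerivAt_dyy := fun x y hp => ((hasDerivAt_im_comp_toComplex_snd (hΛd hp)).neg.add
        ((hasDerivAt_inv (ne_of_gt hp.1)).congr_of_eventuallyEq
          (.of_forall fun s => one_div s))).congr_deriv (by simp [sub_eq_add_neg])
      laplacian_eq := fun p _ => by ring }

end HalfPlanePotential

section Cayley

open Complex (I)

/-- The Cayley transform, a biholomorphic map of the upper half-plane onto the unit disk. -/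
noncomputable def cayley (z : ℂ) : ℂ := (z - I) / (z + I)

variable {z : ℂ}

theorem one_sub_norm_cayley_sq (hz : 0 < z.im) :
    1 - ‖cayley z‖ ^ 2 = 4 * z.im / ‖z + I‖ ^ 2 := by
  have hI := norm_pos_iff.2 (add_I_ne_zero hz)
  rw [cayley, norm_div, div_pow, eq_div_iff (by positivity), sub_mul,
    div_mul_cancel₀ _ (by positivity), ← Complex.normSq_eq_norm_sq, ← Complex.normSq_eq_norm_sq,
    Complex.normSq_apply, Complex.normSq_apply]
  simp
  ring

theorem cayley_mem_ball (hz : 0 < z.im) : cayley z ∈ ball (0 : ℂ) 1 := by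
  have hI := norm_pos_iff.2 (add_I_ne_zero hz)
  have hpos : 0 < 1 - ‖cayley z‖ ^ 2 := by
    rw [one_sub_norm_cayley_sq hz]
    positivity
  rw [mem_ball_zero_iff, ← sq_lt_one_iff₀ (norm_nonneg _)]
  linarith

theorem hasDerivAt_cayley (hz : 0 < z.im) : HasDerivAt cayley (2 * I / (z + I) ^ 2) z := by
  refine (((hasDerivAt_id z).sub_const I).div ((hasDerivAt_id z).add_const I)
    (add_I_ne_zero hz)).congr_deriv ?_
  simp only [id]
  ring

theorem injOn_cayley : InjOn cayley {z | 0 < z.im} := by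
  intro z hz w hw h
  rw [cayley, cayley, div_eq_div_iff (add_I_ne_zero hz) (add_I_ne_zero hw)] at h
  have hmul : 2 * I * (z - w) = 0 := by linear_combination h
  simpa [sub_eq_zero] using hmul

theorem exists_cayley_eq {u : ℂ} (hu : u ∈ ball (0 : ℂ) 1) : ∃ z : ℂ, 0 < z.im ∧ cayley z = u := by
  rw [mem_ball_zero_iff] at hu
  have hu1 : 1 - u ≠ 0 := fun h => by
    rw [← sub_eq_zero.1 h, norm_one] at hu
    exact hu.false
  have him : (I * (1 + u) / (1 - u)).im = (1 - ‖u‖ ^ 2) / Complex.normSq (1 - u) := by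
    rw [Complex.div_im, ← Complex.normSq_eq_norm_sq, Complex.normSq_apply u]
    simp
    ring
  have hpos : 0 < (I * (1 + u) / (1 - u)).im := by
    rw [him]
    exact div_pos (by nlinarith [norm_nonneg u]) (Complex.normSq_pos.2 hu1)
  refine ⟨_, hpos, ?_⟩
  rw [cayley, div_eq_iff (add_I_ne_zero hpos)]
  field_simp
  ring

theorem det_restrictScalars_toSpanSingleton (c : ℂ) :
    ((ContinuousLinearMap.toSpanSingleton ℂ c).restrictScalars ℝ : ℂ →L[ℝ] ℂ).det =
      ‖c‖ ^ 2 := by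
  have hlmul : (((ContinuousLinearMap.toSpanSingleton ℂ c).restrictScalars ℝ : ℂ →L[ℝ] ℂ) :
      ℂ →ₗ[ℝ] ℂ) = Algebra.lmul ℝ ℂ c := by
    ext z
    simp [mul_comm]
  rw [ContinuousLinearMap.det, hlmul, ← Complex.normSq_eq_norm_sq, ← Algebra.norm_complex_apply,
    Algebra.norm_apply]

end Cayley

section HyperbolicMeasure

open Complex (I)

/-- The invariant area measure `dA / (π (1 - ‖z‖ ^ 2) ^ 2)` of the unit disk. -/
noncomputable def hyperbolicMeasure : Measure ℂ :=
  (volume.restrict (ball (0 : ℂ) 1)).withDensity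
    fun z => ENNReal.ofReal (1 / (π * (1 - ‖z‖ ^ 2) ^ 2))

/-- The function `‖f z‖ ^ γ * (1 - ‖z‖ ^ 2)` on the unit disk, extended by zero. -/
noncomputable def invariantWeight (f : ℂ → ℂ) (γ : ℝ) : ℂ → ℝ :=
  (ball (0 : ℂ) 1).indicator fun z => ‖f z‖ ^ γ * (1 - ‖z‖ ^ 2)

variable {f : ℂ → ℂ} {γ C t : ℝ}

theorem hyperbolicMeasure_image_cayley {T : Set ℂ} (hT : MeasurableSet T)
    (hpos : ∀ z ∈ T, 0 < z.im) : hyperbolicMeasure (cayley '' T) =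
      ∫⁻ z in T, ENNReal.ofReal (1 / (4 * π) * (1 / z.im ^ 2)) := by
  have hderiv (z : ℂ) (hz : z ∈ T) : HasFDerivWithinAt cayley
      ((ContinuousLinearMap.toSpanSingleton ℂ (2 * I / (z + I) ^ 2)).restrictScalars ℝ) T z :=
    ((hasDerivAt_cayley (hpos z hz)).hasFDerivAt.restrictScalars ℝ).hasFDerivWithinAt
  have hinj : InjOn cayley T := injOn_cayley.mono hpos
  have himage : MeasurableSet (cayley '' T) := measurable_image_of_fderivWithin hT hderiv hinj
  have hsub : cayley '' T ⊆ ball 0 1 := image_subset_iff.2 fun z hz => cayley_mem_ball (hpos z hz)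
  rw [hyperbolicMeasure, withDensity_apply _ himage, Measure.restrict_restrict himage,
    inter_eq_left.2 hsub, lintegral_image_eq_lintegral_abs_det_fderiv_mul volume hT hderiv hinj]
  refine setLIntegral_congr_fun hT fun z hz => ?_
  have hy := hpos z hz
  have hI := norm_pos_iff.2 (add_I_ne_zero hy)
  rw [det_restrictScalars_toSpanSingleton, ← ENNReal.ofReal_mul (by positivity),
    one_sub_norm_cayley_sq hy, abs_of_nonneg (by positivity), norm_div, norm_mul, norm_pow,
    Complex.norm_I, Complex.norm_two]
  congr 1
  field_simp
  norm_num

theorem hyperbolicMeasure_image_cayley_preimage {S : Set (ℝ × ℝ)} (hS : MeasurableSet S)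
    (hpos : ∀ p ∈ S, 0 < p.2) (hint : IntegrableOn (fun p : ℝ × ℝ => 1 / p.2 ^ 2) S) :
    hyperbolicMeasure (cayley '' (Complex.measurableEquivRealProd ⁻¹' S)) =
      ENNReal.ofReal (1 / (4 * π) * halfPlaneArea S) := by
  have hmeas : Measurable fun p : ℝ × ℝ => ENNReal.ofReal (1 / (4 * π) * (1 / p.2 ^ 2)) := by
    fun_prop
  rw [hyperbolicMeasure_image_cayley (Complex.measurableEquivRealProd.measurable hS)
    fun z hz => hpos _ hz, halfPlaneArea, ← integral_const_mul,
    ofReal_integral_eq_lintegral_ofReal (hint.const_mul _)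
      (ae_of_all _ fun p => by simp only [Pi.zero_apply]; positivity)]
  exact Complex.volume_preserving_equiv_real_prod.setLIntegral_comp_preimage hS hmeas

theorem measurable_invariantWeight (hf : ContinuousOn f (ball 0 1)) (hγ : 0 ≤ γ) :
    Measurable (invariantWeight f γ) := by
  classical
  have hweight : ContinuousOn (fun z => ‖f z‖ ^ γ * (1 - ‖z‖ ^ 2)) (ball 0 1) :=
    (hf.norm.rpow_const fun _ _ => Or.inr hγ).mul (by fun_prop)
  rw [invariantWeight, ← piecewise_eq_indicator]
  exact hweight.measurable_piecewise continuousOn_const measurableSet_ball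

theorem one_sub_norm_sq_nonneg {z : ℂ} (hz : z ∈ ball (0 : ℂ) 1) : 0 ≤ 1 - ‖z‖ ^ 2 :=
  sub_nonneg.2 (pow_le_one₀ (norm_nonneg z) (mem_ball_zero_iff.1 hz).le)

theorem invariantWeight_nonneg (z : ℂ) : 0 ≤ invariantWeight f γ z :=
  indicator_nonneg (fun _ hz => mul_nonneg (by positivity) (one_sub_norm_sq_nonneg hz)) z

theorem invariantWeight_le (hγ : 0 ≤ γ) (hC : ∀ z ∈ ball (0 : ℂ) 1, ‖f z‖ ≤ C) (z : ℂ) :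
    invariantWeight f γ z ≤ C ^ γ := by
  have hC0 : 0 ≤ C := (norm_nonneg _).trans (hC 0 (mem_ball_self one_pos))
  refine indicator_apply_le' (fun hz => ?_) fun _ => by positivity
  exact (mul_le_of_le_one_right (by positivity) (sub_le_self 1 (by positivity))).trans
    (Real.rpow_le_rpow (norm_nonneg _) (hC z hz) hγ)

theorem mem_superlevelOn_halfPlanePotential_iff {G : ℂ → ℂ} {p : ℝ × ℝ} (hγ : 0 < γ) (ht : 0 < t)
    (hp : 0 < p.2) :
    p ∈ superlevelOn (nonvanishingSet G) (halfPlanePotential G γ) (Real.log t) ↔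
      t < ‖G (toComplex p)‖ ^ γ * (4 * p.2 / ‖toComplex p + I‖ ^ 2) := by
  by_cases hG : G (toComplex p) = 0
  · refine iff_of_false (fun h => h.1.2 hG) ?_
    rw [hG, norm_zero, Real.zero_rpow hγ.ne', zero_mul]
    exact ht.not_gt
  · have hpN : p ∈ nonvanishingSet G := ⟨hp, hG⟩
    rw [← exp_halfPlanePotential hpN, ← Real.log_lt_iff_lt_exp ht]
    exact and_iff_right hpN

theorem image_cayley_superlevelOn (hγ : 0 < γ) (ht : 0 < t) :
    cayley '' (Complex.measurableEquivRealProd ⁻¹'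
      superlevelOn (nonvanishingSet fun z => f (cayley z))
        (halfPlanePotential (fun z => f (cayley z)) γ) (Real.log t)) =
      {z | t < invariantWeight f γ z} := by
  have hmem (z : ℂ) (hz : 0 < z.im) : z ∈ Complex.measurableEquivRealProd ⁻¹'
      superlevelOn (nonvanishingSet fun z => f (cayley z))
        (halfPlanePotential (fun z => f (cayley z)) γ) (Real.log t) ↔
      t < invariantWeight f γ (cayley z) := by
    rw [invariantWeight, indicator_of_mem (cayley_mem_ball hz), one_sub_norm_cayley_sq hz,
      mem_preimage, Complex.measurableEquivRealProd_apply,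
      mem_superlevelOn_halfPlanePotential_iff hγ ht hz, toComplex, Complex.re_add_im]
  ext u
  refine ⟨?_, fun hu => ?_⟩
  · rintro ⟨z, hz, rfl⟩
    exact (hmem z hz.1.1).1 hz
  · have hub : u ∈ ball (0 : ℂ) 1 := by_contra fun h => by
      rw [mem_ofPred_eq, invariantWeight, indicator_of_notMem h] at hu
      exact hu.not_gt ht
    obtain ⟨z, hz, rfl⟩ := exists_cayley_eq hub
    exact ⟨z, (hmem z hz).2 hu, rfl⟩

theorem mul_one_add_measure_invariantWeight_le (hf : DifferentiableOn ℂ f (ball 0 1))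
    (hC : ∀ z ∈ ball (0 : ℂ) 1, ‖f z‖ ≤ C) (hγ : 0 < γ) {s t : ℝ} (hs : 0 < s) (hst : s < t)
    (hpos : 0 < hyperbolicMeasure.real {z | t < invariantWeight f γ z}) :
    t * (1 + hyperbolicMeasure.real {z | t < invariantWeight f γ z}) ≤
      s * (1 + hyperbolicMeasure.real {z | s < invariantWeight f γ z}) := by
  have hG : DifferentiableOn ℂ (fun z => f (cayley z)) {z | 0 < z.im} :=
    hf.comp (fun z hz => (hasDerivAt_cayley hz).differentiableAt.differentiableWithinAt)
      fun z hz => cayley_mem_ball hz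
  have hV := isCurvaturePotential_halfPlanePotential (γ := γ) hG
  have hconf := exists_isConfinedLevel_halfPlanePotential hγ hG.continuousOn
    fun z hz => hC _ (cayley_mem_ball hz)
  obtain ⟨a, ha⟩ : ∃ a : ℝ → ℝ, a = fun c => halfPlaneArea (superlevelOn
    (nonvanishingSet fun z => f (cayley z)) (halfPlanePotential (fun z => f (cayley z)) γ) c) :=
    ⟨_, rfl⟩
  have hmeasure {r : ℝ} (hr : 0 < r) :
      hyperbolicMeasure.real {z | r < invariantWeight f γ z} = 1 / (4 * π) * a (Real.log r) := by
    obtain ⟨X, y₀, y₁, hc⟩ := hconf (Real.log r)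
    have harea : 0 ≤ a (Real.log r) := by
      rw [ha]
      exact integral_nonneg fun p => by positivity
    rw [Measure.real, ← image_cayley_superlevelOn hγ hr, hyperbolicMeasure_image_cayley_preimage
      (measurableSet_superlevelOn hV.isOpen hV.continuousOn) (fun p hp => hp.1.1)
      hc.integrableOn_superlevelOn, ENNReal.toReal_ofReal (by rw [ha] at harea; positivity), ha]
  have ht := hs.trans hst
  rw [hmeasure ht] at hpos ⊢
  rw [hmeasure hs]
  have hexp := hV.add_area_mul_exp_le hconf (Real.log_lt_log hs hst)
    (by simpa [ha] using pos_of_mul_pos_right hpos (by positivity))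
  rw [Real.exp_sub, Real.exp_log ht, Real.exp_log hs, mul_div_assoc', div_le_iff₀ hs] at hexp
  rw [← mul_le_mul_iff_of_pos_right (by positivity : 0 < 4 * π), ha]
  field_simp
  linarith

theorem integral_invariantWeight_rpow_le (hf : DifferentiableOn ℂ f (ball 0 1))
    (hC : ∀ z ∈ ball (0 : ℂ) 1, ‖f z‖ ≤ C) (hγ : 0 < γ) {α β : ℝ} (hα : 1 < α) (hαβ : α ≤ β)
    (hIα : Integrable (fun z => invariantWeight f γ z ^ α) hyperbolicMeasure)
    (hIβ : Integrable (fun z => invariantWeight f γ z ^ β) hyperbolicMeasure) :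
    (β - 1) * ∫ z, invariantWeight f γ z ^ β ∂hyperbolicMeasure ≤
      ((α - 1) * ∫ z, invariantWeight f γ z ^ α ∂hyperbolicMeasure) ^ (β / α) :=
  integral_rpow_le_of_mul_one_add_measure_antitone
    (measurable_invariantWeight hf.continuousOn hγ.le).aemeasurable invariantWeight_nonneg
    (invariantWeight_le hγ.le hC) hα hαβ hIα hIβ
    fun _ _ hs hst hpos => mul_one_add_measure_invariantWeight_le hf hC hγ hs hst hpos

end HyperbolicMeasure

section VerticalMean

open Complex (I)

variable {T t : ℝ} {u v : ℂ → ℝ}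

/-- The integral of `u` over the vertical segment of length `2 * π` through `t`. In the coordinate
`z = log w` it is the integral of a function of `w` over the circle of radius `exp t`. -/
noncomputable def verticalMean (u : ℂ → ℝ) (t : ℝ) : ℝ :=
  ∫ θ in -π..π, u (t + θ * I)

theorem continuous_vertical (hu : ContinuousOn u {z | z.re < T}) (ht : t < T) :
    Continuous fun θ : ℝ => u (t + θ * I) :=
  hu.comp_continuous (by fun_prop) fun θ => by simpa using ht

theorem intervalIntegrable_vertical (hu : ContinuousOn u {z | z.re < T}) (ht : t < T) :
    IntervalIntegrable (fun θ : ℝ => u (t + θ * I)) volume (-π) π :=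
  (continuous_vertical hu ht).intervalIntegrable _ _

theorem verticalMean_nonneg (hu : ∀ θ : ℝ, 0 ≤ u (t + θ * I)) : 0 ≤ verticalMean u t :=
  intervalIntegral.integral_nonneg (by linarith [Real.pi_pos]) fun θ _ => hu θ

theorem abs_verticalMean_le {B : ℝ} (hu : ∀ θ : ℝ, |u (t + θ * I)| ≤ B) :
    |verticalMean u t| ≤ B * (2 * π) := by
  have hle := intervalIntegral.norm_integral_le_of_norm_le_const (a := -π) (b := π)
    (f := fun θ : ℝ => u (t + θ * I)) fun θ _ => hu θ
  rwa [sub_neg_eq_add, ← two_mul, abs_of_pos Real.two_pi_pos] at hle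

theorem hasDerivAt_verticalMean (hu : ContinuousOn u {z | z.re < T})
    (hv : ContinuousOn v {z | z.re < T})
    (hderiv : ∀ s θ : ℝ, s < T → HasDerivAt (fun x : ℝ => u (x + θ * I)) (v (s + θ * I)) s)
    (ht : t < T) : HasDerivAt (verticalMean u) (verticalMean v t) t := by
  obtain ⟨b, htb, hbT⟩ := exists_between ht
  have hcont : ContinuousOn (fun p : ℝ × ℝ => v (p.1 + p.2 * I)) (Icc (t - 1) b ×ˢ Icc (-π) π) :=
    hv.comp (by fun_prop) fun p hp => by simpa using hp.1.2.trans_lt hbT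
  obtain ⟨C, hC⟩ := (isCompact_Icc.prod isCompact_Icc).exists_bound_of_continuousOn hcont
  refine (intervalIntegral.hasDerivAt_integral_of_dominated_loc_of_deriv_le
    (F := fun s θ : ℝ => u (s + θ * I)) (F' := fun s θ : ℝ => v (s + θ * I))
    (s := Ioo (t - 1) b) (bound := fun _ => C) (Ioo_mem_nhds (sub_one_lt t) htb)
    ?_ (intervalIntegrable_vertical hu ht) (continuous_vertical hv ht).aestronglyMeasurable
    ?_ intervalIntegrable_const ?_).2
  · filter_upwards [Iio_mem_nhds ht] with s hs
    exact (continuous_vertical hu hs).aestronglyMeasurable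
  · filter_upwards with θ hθ s hs
    rw [uIoc_of_le (by linarith [Real.pi_pos])] at hθ
    exact hC (s, θ) ⟨Ioo_subset_Icc_self hs, Ioc_subset_Icc_self hθ⟩
  · filter_upwards with θ _ s hs
    exact hderiv s θ (hs.2.trans hbT)

end VerticalMean

section BoundedConvex

variable {T : ℝ} {n n₁ n₂ : ℝ → ℝ}

theorem monotoneOn_Iio_of_hasDerivAt_nonneg (hn : ∀ t < T, HasDerivAt n (n₁ t) t)
    (hn₁ : ∀ t < T, 0 ≤ n₁ t) : MonotoneOn n (Iio T) := by
  refine monotoneOn_of_deriv_nonneg (convex_Iio T) (HasDerivAt.continuousOn hn) ?_ ?_ <;>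
    rw [interior_Iio]
  · exact fun t ht => (hn t ht).differentiableAt.differentiableWithinAt
  · exact fun t ht => (hn t ht).deriv ▸ hn₁ t ht

theorem antitoneOn_Iic_of_hasDerivAt_nonpos (hn : ∀ t ≤ T, HasDerivAt n (n₁ t) t)
    (hn₁ : ∀ t < T, n₁ t ≤ 0) : AntitoneOn n (Iic T) := by
  refine antitoneOn_of_deriv_nonpos (convex_Iic T) (HasDerivAt.continuousOn hn) ?_ ?_ <;>
    rw [interior_Iic]
  · exact fun t ht => (hn t (le_of_lt ht)).differentiableAt.differentiableWithinAt
  · exact fun t ht => (hn t (le_of_lt ht)).deriv ▸ hn₁ t ht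

theorem deriv_nonneg_of_convex_of_bddAbove (hn : ∀ t < T, HasDerivAt n (n₁ t) t)
    (hn₁ : ∀ t < T, HasDerivAt n₁ (n₂ t) t) (hn₂ : ∀ t < T, 0 ≤ n₂ t)
    (hbdd : ∀ t < T, BddAbove (n '' Iic t)) {t : ℝ} (ht : t < T) : 0 ≤ n₁ t := by
  by_contra! hneg
  obtain ⟨C, hC⟩ := hbdd t ht
  have hmono : MonotoneOn n₁ (Iio T) := monotoneOn_Iio_of_hasDerivAt_nonneg hn₁ hn₂
  have hanti : AntitoneOn (fun s => n s - n₁ t * s) (Iic t) := by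
    refine antitoneOn_Iic_of_hasDerivAt_nonpos (n₁ := fun s => n₁ s - n₁ t * 1)
      (fun s hs => (hn s (hs.trans_lt ht)).sub ((hasDerivAt_id s).const_mul (n₁ t))) ?_
    intro s hs
    linarith [hmono (hs.trans ht) ht hs.le]
  -- The tangent at `t` has negative slope, so it exceeds the bound `C` far to the left.
  have hC' : ∀ s ≤ t, n t + n₁ t * (s - t) ≤ C := fun s hs => by
    have htangent := hanti hs self_mem_Iic hs
    have hbound : n s ≤ C := hC (mem_image_of_mem n hs)
    linarith
  have hlim : Tendsto (fun s => n t + n₁ t * (s - t)) atBot atTop :=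
    tendsto_const_nhds.add_atTop
      ((tendsto_atBot_add_const_right _ (-t) tendsto_id).const_mul_atBot_of_neg hneg)
  obtain ⟨s, hCs, hst⟩ := ((hlim.eventually_gt_atTop C).and (eventually_le_atBot t)).exists
  exact absurd (hC' s hst) (not_le.2 hCs)

end BoundedConvex

section Jets

open Complex (I)

/-- A holomorphic function on the half-plane `{z | z.re < T}` that is `2 * π * I`-periodic across
`Im z = ± π`, together with its first two derivatives `d₁` and `d₂`. -/
structure PeriodicJet (T : ℝ) where
  val : ℂ → ℂ
  d₁ : ℂ → ℂ
  d₂ : ℂ → ℂ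
  hasDerivAt_val : ∀ {z : ℂ}, z.re < T → HasDerivAt val (d₁ z) z
  hasDerivAt_d₁ : ∀ {z : ℂ}, z.re < T → HasDerivAt d₁ (d₂ z) z
  continuousOn_d₂ : ContinuousOn d₂ {z | z.re < T}
  val_periodic : ∀ t : ℝ, val (t + π * I) = val (t + (-π : ℝ) * I)
  d₁_periodic : ∀ t : ℝ, d₁ (t + π * I) = d₁ (t + (-π : ℝ) * I)

/-- A function of class `C²` on `[0, ∞)`, together with its first two derivatives `d₁` and `d₂`. -/
structure WeightJet where
  val : ℝ → ℝ
  d₁ : ℝ → ℝ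
  d₂ : ℝ → ℝ
  hasDerivAt_val : ∀ {x : ℝ}, 0 ≤ x → HasDerivAt val (d₁ x) x
  hasDerivAt_d₁ : ∀ {x : ℝ}, 0 ≤ x → HasDerivAt d₁ (d₂ x) x
  continuousOn_d₂ : ContinuousOn d₂ (Ici 0)

namespace PeriodicJet

variable {T : ℝ}

theorem continuousOn_val (g : PeriodicJet T) : ContinuousOn g.val {z | z.re < T} :=
  fun _ hz => (g.hasDerivAt_val hz).continuousAt.continuousWithinAt

theorem continuousOn_d₁ (g : PeriodicJet T) : ContinuousOn g.d₁ {z | z.re < T} :=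
  fun _ hz => (g.hasDerivAt_d₁ hz).continuousAt.continuousWithinAt

/-- `g` is bounded on every closed half-plane inside `{z | z.re < T}`. -/
def IsLeftBounded (g : PeriodicJet T) : Prop :=
  ∀ t < T, ∃ B, ∀ z : ℂ, z.re ≤ t → ‖g.val z‖ ≤ B

/-- The constant function `1`. -/
def one (T : ℝ) : PeriodicJet T where
  val _ := 1
  d₁ _ := 0
  d₂ _ := 0
  hasDerivAt_val _ := hasDerivAt_const _ _
  hasDerivAt_d₁ _ := hasDerivAt_const _ _
  continuousOn_d₂ := continuousOn_const
  val_periodic _ := rfl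
  d₁_periodic _ := rfl

theorem isLeftBounded_one : (one T).IsLeftBounded := fun _ _ => ⟨1, fun _ _ => by simp [one]⟩

end PeriodicJet

namespace WeightJet

theorem continuousOn_val (W : WeightJet) : ContinuousOn W.val (Ici 0) :=
  fun _ hx => (W.hasDerivAt_val hx).continuousAt.continuousWithinAt

theorem continuousOn_d₁ (W : WeightJet) : ContinuousOn W.d₁ (Ici 0) :=
  fun _ hx => (W.hasDerivAt_d₁ hx).continuousAt.continuousWithinAt

/-- Positivity of `W` and convexity of `s ↦ log (W (exp s))`, the latter written out in terms of
the derivatives of `W`. -/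
structure IsLogConvex (W : WeightJet) : Prop where
  pos : ∀ {x : ℝ}, 0 ≤ x → 0 < W.val x
  le : ∀ {x : ℝ}, 0 ≤ x → x * W.d₁ x ^ 2 ≤ W.val x * (W.d₁ x + x * W.d₂ x)

end WeightJet

end Jets

section WeightedSquare

open Complex (I)
open scoped InnerProductSpace

variable {T : ℝ}

/-- The function `W(|g|²) |k|²`. -/
noncomputable def weightedSq (W : WeightJet) (g k : PeriodicJet T) (z : ℂ) : ℝ :=
  W.val (‖g.val z‖ ^ 2) * ‖k.val z‖ ^ 2

/-- The derivative of `weightedSq W g k` in the direction `c`. -/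
noncomputable def weightedSqDeriv (W : WeightJet) (g k : PeriodicJet T) (c z : ℂ) : ℝ :=
  W.d₁ (‖g.val z‖ ^ 2) * (2 * ⟪g.val z, c * g.d₁ z⟫_ℝ) * ‖k.val z‖ ^ 2 +
    W.val (‖g.val z‖ ^ 2) * (2 * ⟪k.val z, c * k.d₁ z⟫_ℝ)

/-- The second derivative of `weightedSq W g k` in the direction `c`. -/
noncomputable def weightedSqDeriv₂ (W : WeightJet) (g k : PeriodicJet T) (c z : ℂ) : ℝ :=
  W.d₂ (‖g.val z‖ ^ 2) * (2 * ⟪g.val z, c * g.d₁ z⟫_ℝ) ^ 2 * ‖k.val z‖ ^ 2 +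
    W.d₁ (‖g.val z‖ ^ 2) *
      (2 * ‖c * g.d₁ z‖ ^ 2 + 2 * ⟪g.val z, c * (c * g.d₂ z)⟫_ℝ) * ‖k.val z‖ ^ 2 +
    2 * W.d₁ (‖g.val z‖ ^ 2) * (2 * ⟪g.val z, c * g.d₁ z⟫_ℝ) * (2 * ⟪k.val z, c * k.d₁ z⟫_ℝ) +
    W.val (‖g.val z‖ ^ 2) * (2 * ‖c * k.d₁ z‖ ^ 2 + 2 * ⟪k.val z, c * (c * k.d₂ z)⟫_ℝ)

/-- The Laplacian of `weightedSq W g k`; holomorphy of `g` and `k` eliminates their second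
derivatives. -/
noncomputable def weightedSqLaplacian (W : WeightJet) (g k : PeriodicJet T) (z : ℂ) : ℝ :=
  4 * ((W.d₂ (‖g.val z‖ ^ 2) * ‖g.val z‖ ^ 2 + W.d₁ (‖g.val z‖ ^ 2)) * ‖g.d₁ z‖ ^ 2 *
      ‖k.val z‖ ^ 2 +
    2 * W.d₁ (‖g.val z‖ ^ 2) * (⟪g.val z, g.d₁ z⟫_ℝ * ⟪k.val z, k.d₁ z⟫_ℝ +
      ⟪g.val z, I * g.d₁ z⟫_ℝ * ⟪k.val z, I * k.d₁ z⟫_ℝ) +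
    W.val (‖g.val z‖ ^ 2) * ‖k.d₁ z‖ ^ 2)

variable {W : WeightJet} {g k : PeriodicJet T}

theorem hasDerivAt_comp_line {g : ℂ → ℂ} {g' a c : ℂ} {s : ℝ}
    (hg : HasDerivAt g g' (a + s * c)) :
    HasDerivAt (fun s : ℝ => g (a + s * c)) (c * g') s := by
  have hline : HasDerivAt (fun s : ℝ => a + s * c) c s := by
    simpa using ((hasDerivAt_id s).ofReal_comp.mul_const c).const_add a
  exact hg.scomp s hline

theorem hasDerivAt_weightedSq {a c : ℂ} {s : ℝ} (hs : (a + s * c).re < T) :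
    HasDerivAt (fun s : ℝ => weightedSq W g k (a + s * c))
      (weightedSqDeriv W g k c (a + s * c)) s := by
  have hg := (hasDerivAt_comp_line (g.hasDerivAt_val hs)).norm_sq
  have hk := (hasDerivAt_comp_line (k.hasDerivAt_val hs)).norm_sq
  exact ((W.hasDerivAt_val (sq_nonneg ‖g.val (a + s * c)‖)).comp s hg).mul hk

theorem hasDerivAt_weightedSqDeriv {a c : ℂ} {s : ℝ} (hs : (a + s * c).re < T) :
    HasDerivAt (fun s : ℝ => weightedSqDeriv W g k c (a + s * c))
      (weightedSqDeriv₂ W g k c (a + s * c)) s := by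
  have hg := hasDerivAt_comp_line (g.hasDerivAt_val hs)
  have hk := hasDerivAt_comp_line (k.hasDerivAt_val hs)
  have hg₁ := (hasDerivAt_comp_line (g.hasDerivAt_d₁ hs)).const_mul c
  have hk₁ := (hasDerivAt_comp_line (k.hasDerivAt_d₁ hs)).const_mul c
  have hsq := sq_nonneg ‖g.val (a + s * c)‖
  have hW := (W.hasDerivAt_val hsq).comp s hg.norm_sq
  have hW₁ := (W.hasDerivAt_d₁ hsq).comp s hg.norm_sq
  have hinner_g := (hg.inner ℝ hg₁).const_mul 2
  have hinner_k := (hk.inner ℝ hk₁).const_mul 2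
  refine (((hW₁.mul hinner_g).mul hk.norm_sq).add (hW.mul hinner_k)).congr_deriv ?_
  simp only [weightedSqDeriv₂, Function.comp_apply, Pi.mul_apply, real_inner_self_eq_norm_sq]
  ring

theorem weightedSqLaplacian_eq (z : ℂ) : weightedSqLaplacian W g k z =
    weightedSqDeriv₂ W g k 1 z + weightedSqDeriv₂ W g k I z := by
  unfold weightedSqLaplacian weightedSqDeriv₂
  generalize W.val (‖g.val z‖ ^ 2) = a
  generalize W.d₁ (‖g.val z‖ ^ 2) = b
  generalize W.d₂ (‖g.val z‖ ^ 2) = c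
  simp only [← Complex.normSq_eq_norm_sq, Complex.normSq_apply, Complex.inner, Complex.mul_re,
    Complex.mul_im, Complex.I_re, Complex.I_im, Complex.conj_re, Complex.conj_im, one_mul]
  ring

theorem weightedSqLaplacian_nonneg (hW : W.IsLogConvex) (z : ℂ) :
    0 ≤ weightedSqLaplacian W g k z := by
  have hpos := hW.pos (sq_nonneg ‖g.val z‖)
  have hle := hW.le (sq_nonneg ‖g.val z‖)
  unfold weightedSqLaplacian
  generalize W.val (‖g.val z‖ ^ 2) = a at *
  generalize W.d₁ (‖g.val z‖ ^ 2) = b at *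
  generalize W.d₂ (‖g.val z‖ ^ 2) = c at *
  refine mul_nonneg zero_le_four (nonneg_of_mul_nonneg_right ?_ hpos)
  -- The squared norm is that of `∂(W(|g|²) k)`.
  calc 0 ≤ (a * (b + ‖g.val z‖ ^ 2 * c) - ‖g.val z‖ ^ 2 * b ^ 2) *
        (‖g.d₁ z‖ ^ 2 * ‖k.val z‖ ^ 2) +
        ‖(b : ℂ) * (starRingEnd ℂ (g.val z) * g.d₁ z * k.val z) + a * k.d₁ z‖ ^ 2 :=
      add_nonneg (mul_nonneg (sub_nonneg.2 hle) (by positivity)) (sq_nonneg _)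
    _ = _ := by
      simp only [← Complex.normSq_eq_norm_sq, Complex.normSq_apply, Complex.inner, Complex.mul_re,
        Complex.mul_im, Complex.add_re, Complex.add_im, Complex.I_re, Complex.I_im,
        Complex.conj_re, Complex.conj_im, Complex.ofReal_re, Complex.ofReal_im]
      ring

theorem continuousOn_comp_norm_sq {w : ℝ → ℝ} (hw : ContinuousOn w (Ici 0)) (g : PeriodicJet T) :
    ContinuousOn (fun z => w (‖g.val z‖ ^ 2)) {z | z.re < T} :=
  hw.comp (g.continuousOn_val.norm.pow 2) fun z _ => sq_nonneg ‖g.val z‖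

theorem continuousOn_weightedSq : ContinuousOn (weightedSq W g k) {z | z.re < T} :=
  (continuousOn_comp_norm_sq W.continuousOn_val g).mul (k.continuousOn_val.norm.pow 2)

theorem continuousOn_weightedSqDeriv (c : ℂ) :
    ContinuousOn (weightedSqDeriv W g k c) {z | z.re < T} := by
  have hW := continuousOn_comp_norm_sq W.continuousOn_val g
  have hW₁ := continuousOn_comp_norm_sq W.continuousOn_d₁ g
  have hg := g.continuousOn_val
  have hg₁ := g.continuousOn_d₁
  have hk := k.continuousOn_val
  have hk₁ := k.continuousOn_d₁
  unfold weightedSqDeriv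
  fun_prop

theorem continuousOn_weightedSqDeriv₂ (c : ℂ) :
    ContinuousOn (weightedSqDeriv₂ W g k c) {z | z.re < T} := by
  have hW := continuousOn_comp_norm_sq W.continuousOn_val g
  have hW₁ := continuousOn_comp_norm_sq W.continuousOn_d₁ g
  have hW₂ := continuousOn_comp_norm_sq W.continuousOn_d₂ g
  have hg := g.continuousOn_val
  have hg₁ := g.continuousOn_d₁
  have hg₂ := g.continuousOn_d₂
  have hk := k.continuousOn_val
  have hk₁ := k.continuousOn_d₁
  have hk₂ := k.continuousOn_d₂
  unfold weightedSqDeriv₂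
  fun_prop

theorem hasDerivAt_verticalMean_weightedSq {t : ℝ} (ht : t < T) :
    HasDerivAt (verticalMean (weightedSq W g k))
      (verticalMean (weightedSqDeriv W g k 1) t) t := by
  refine hasDerivAt_verticalMean continuousOn_weightedSq (continuousOn_weightedSqDeriv 1) ?_ ht
  intro s θ hs
  simpa [add_comm] using hasDerivAt_weightedSq (W := W) (g := g) (k := k) (a := θ * I) (c := 1)
    (s := s) (by simpa using hs)

theorem verticalMean_weightedSqDeriv₂_I {t : ℝ} (ht : t < T) :
    verticalMean (weightedSqDeriv₂ W g k I) t = 0 := by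
  rw [verticalMean, intervalIntegral.integral_eq_sub_of_hasDerivAt
    (fun θ _ => hasDerivAt_weightedSqDeriv (by simpa using ht))
    (intervalIntegrable_vertical (continuousOn_weightedSqDeriv₂ I) ht)]
  simp only [weightedSqDeriv, g.val_periodic, g.d₁_periodic, k.val_periodic, k.d₁_periodic,
    sub_self]

theorem hasDerivAt_verticalMean_weightedSqDeriv {t : ℝ} (ht : t < T) :
    HasDerivAt (verticalMean (weightedSqDeriv W g k 1))
      (verticalMean (weightedSqLaplacian W g k) t) t := by
  have hmean : verticalMean (weightedSqLaplacian W g k) t =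
      verticalMean (weightedSqDeriv₂ W g k 1) t := by
    conv_rhs => rw [← add_zero (verticalMean _ t),
      ← verticalMean_weightedSqDeriv₂_I (W := W) (g := g) (k := k) ht]
    simp only [verticalMean, weightedSqLaplacian_eq]
    exact intervalIntegral.integral_add
      (intervalIntegrable_vertical (continuousOn_weightedSqDeriv₂ 1) ht)
      (intervalIntegrable_vertical (continuousOn_weightedSqDeriv₂ I) ht)
  rw [hmean]
  refine hasDerivAt_verticalMean (continuousOn_weightedSqDeriv 1)
    (continuousOn_weightedSqDeriv₂ 1) ?_ ht
  intro s θ hs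
  simpa [add_comm] using hasDerivAt_weightedSqDeriv (W := W) (g := g) (k := k) (a := θ * I)
    (c := 1) (s := s) (by simpa using hs)

theorem PeriodicJet.IsLeftBounded.exists_abs_comp_norm_sq_le (hg : g.IsLeftBounded) {w : ℝ → ℝ}
    (hw : ContinuousOn w (Ici 0)) {t : ℝ} (ht : t < T) :
    ∃ D, ∀ z : ℂ, z.re ≤ t → |w (‖g.val z‖ ^ 2)| ≤ D := by
  obtain ⟨B, hB⟩ := hg t ht
  obtain ⟨D, hD⟩ := (isCompact_Icc (b := B ^ 2)).exists_bound_of_continuousOn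
    (hw.mono Icc_subset_Ici_self)
  exact ⟨D, fun z hz => hD _ ⟨sq_nonneg _, pow_le_pow_left₀ (norm_nonneg _) (hB z hz) 2⟩⟩

theorem bddAbove_verticalMean_weightedSq (hg : g.IsLeftBounded) (hk : k.IsLeftBounded) {t : ℝ}
    (ht : t < T) : BddAbove (verticalMean (weightedSq W g k) '' Iic t) := by
  obtain ⟨D, hD⟩ := hg.exists_abs_comp_norm_sq_le W.continuousOn_val ht
  obtain ⟨B, hB⟩ := hk t ht
  refine ⟨D * B ^ 2 * (2 * π), ?_⟩
  rintro _ ⟨s, hs, rfl⟩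
  refine (le_abs_self _).trans (abs_verticalMean_le fun θ => ?_)
  have hz : ((s : ℂ) + θ * I).re ≤ t := by simpa using hs
  rw [weightedSq, abs_mul, abs_of_nonneg (sq_nonneg ‖k.val _‖)]
  have hDz := hD _ hz
  have hBz := hB _ hz
  have hD0 : 0 ≤ D := (abs_nonneg _).trans hDz
  gcongr

theorem verticalMean_weightedSqDeriv_nonneg (hg : g.IsLeftBounded) (hk : k.IsLeftBounded)
    (hW : W.IsLogConvex) {t : ℝ} (ht : t < T) : 0 ≤ verticalMean (weightedSqDeriv W g k 1) t :=
  deriv_nonneg_of_convex_of_bddAbove (fun _ => hasDerivAt_verticalMean_weightedSq)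
    (fun _ => hasDerivAt_verticalMean_weightedSqDeriv)
    (fun _ _ => verticalMean_nonneg fun _ => weightedSqLaplacian_nonneg hW _)
    (fun _ => bddAbove_verticalMean_weightedSq hg hk) ht

theorem monotoneOn_verticalMean_weightedSq (hg : g.IsLeftBounded) (hk : k.IsLeftBounded)
    (hW : W.IsLogConvex) : MonotoneOn (verticalMean (weightedSq W g k)) (Iio T) :=
  monotoneOn_Iio_of_hasDerivAt_nonneg (fun _ => hasDerivAt_verticalMean_weightedSq)
    fun _ => verticalMean_weightedSqDeriv_nonneg hg hk hW

end WeightedSquare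

section MeanGrowth

open Complex (I)
open scoped InnerProductSpace

theorem hasDerivAt_exp_two_mul (s : ℝ) :
    HasDerivAt (fun s : ℝ => Real.exp (2 * s)) (2 * Real.exp (2 * s)) s := by
  simpa [mul_comm] using ((hasDerivAt_id s).const_mul 2).exp

theorem le_of_hasDerivAt_exp_mul_monotone {T : ℝ} {P n : ℝ → ℝ}
    (hP : ∀ t < T, HasDerivAt P (4 * Real.exp (2 * t) * n t) t) (hn : MonotoneOn n (Iio T))
    (hlim : Tendsto P atBot (𝓝 0)) {t : ℝ} (ht : t < T) : 2 * P t ≤ 4 * Real.exp (2 * t) * n t := by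
  have hanti : AntitoneOn (fun s => P s - 2 * n t * Real.exp (2 * s)) (Iic t) := by
    refine antitoneOn_Iic_of_hasDerivAt_nonpos (fun s hs => (hP s (hs.trans_lt ht)).sub
      ((hasDerivAt_exp_two_mul s).const_mul (2 * n t))) fun s hs => ?_
    have hns : n s ≤ n t := hn (hs.trans ht) ht hs.le
    have hexp := Real.exp_pos (2 * s)
    nlinarith
  have hlim_exp : Tendsto (fun s : ℝ => Real.exp (2 * s)) atBot (𝓝 0) :=
    Real.tendsto_exp_atBot.comp (tendsto_id.const_mul_atBot two_pos)
  have hlim_diff : Tendsto (fun s => P s - 2 * n t * Real.exp (2 * s)) atBot (𝓝 0) := by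
    simpa using hlim.sub (hlim_exp.const_mul (2 * n t))
  have hle : P t - 2 * n t * Real.exp (2 * t) ≤ 0 :=
    ge_of_tendsto hlim_diff <| (eventually_le_atBot t).mono fun s hs => hanti hs self_mem_Iic hs
  linarith

variable {T t : ℝ} {F W : WeightJet} {g k : PeriodicJet T}

theorem weightedSqDeriv_one_right (c z : ℂ) : weightedSqDeriv F g (.one T) c z =
    F.d₁ (‖g.val z‖ ^ 2) * (2 * ⟪g.val z, c * g.d₁ z⟫_ℝ) := by
  simp [weightedSqDeriv, PeriodicJet.one]

theorem weightedSqLaplacian_one_right (z : ℂ) : weightedSqLaplacian F g (.one T) z =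
    4 * ((F.d₁ (‖g.val z‖ ^ 2) + ‖g.val z‖ ^ 2 * F.d₂ (‖g.val z‖ ^ 2)) * ‖g.d₁ z‖ ^ 2) := by
  simp only [weightedSqLaplacian, PeriodicJet.one, norm_one, norm_zero, inner_zero_right, mul_zero]
  ring

theorem verticalMean_weightedSqLaplacian_one_right
    (hWF : ∀ x, 0 ≤ x → W.val x = F.d₁ x + x * F.d₂ x)
    (hgk : ∀ z, z.re < T → g.d₁ z = Complex.exp z * k.val z) (ht : t < T) :
    verticalMean (weightedSqLaplacian F g (.one T)) t =
      4 * Real.exp (2 * t) * verticalMean (weightedSq W g k) t := by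
  rw [verticalMean, verticalMean, ← intervalIntegral.integral_const_mul]
  refine intervalIntegral.integral_congr fun θ _ => ?_
  have hre : ((t : ℂ) + θ * I).re = t := by simp
  rw [weightedSqLaplacian_one_right, weightedSq, ← hWF _ (sq_nonneg _), hgk _ (hre.trans_lt ht),
    norm_mul, Complex.norm_exp, hre, two_mul, Real.exp_add]
  ring

theorem tendsto_verticalMean_weightedSqDeriv_one_right (hg : g.IsLeftBounded)
    (hk : k.IsLeftBounded) (hgk : ∀ z, z.re < T → g.d₁ z = Complex.exp z * k.val z) :
    Tendsto (verticalMean (weightedSqDeriv F g (.one T) 1)) atBot (𝓝 0) := by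
  obtain ⟨t, ht⟩ := exists_lt T
  obtain ⟨D, hD⟩ := hg.exists_abs_comp_norm_sq_le F.continuousOn_d₁ ht
  obtain ⟨B, hB⟩ := hg t ht
  obtain ⟨K, hK⟩ := hk t ht
  have hbound (s : ℝ) (hs : s ≤ t) : |verticalMean (weightedSqDeriv F g (.one T) 1) s| ≤
      D * (2 * (B * (Real.exp s * K))) * (2 * π) := by
    refine abs_verticalMean_le fun θ => ?_
    have hre : ((s : ℂ) + θ * I).re = s := by simp
    have hDz := hD _ (hre.trans_le hs)
    have hBz := hB _ (hre.trans_le hs)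
    have hKz := hK _ (hre.trans_le hs)
    have hD0 : 0 ≤ D := (abs_nonneg _).trans hDz
    have hB0 : 0 ≤ B := (norm_nonneg _).trans hBz
    have hinner := abs_real_inner_le_norm (g.val (s + θ * I)) (g.d₁ (s + θ * I))
    rw [hgk _ (hre.trans_lt (hs.trans_lt ht)), norm_mul, Complex.norm_exp, hre] at hinner
    rw [weightedSqDeriv_one_right, one_mul, abs_mul, abs_mul, abs_two,
      hgk _ (hre.trans_lt (hs.trans_lt ht))]
    refine mul_le_mul hDz (mul_le_mul_of_nonneg_left (hinner.trans ?_) zero_le_two)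
      (by positivity) hD0
    gcongr
  have hlim : Tendsto (fun s => D * (2 * (B * (Real.exp s * K))) * (2 * π)) atBot (𝓝 0) := by
    simpa using ((((Real.tendsto_exp_atBot.mul_const K).const_mul B).const_mul 2).const_mul
      D).mul_const (2 * π)
  exact squeeze_zero_norm' ((eventually_le_atBot t).mono hbound) hlim

theorem two_mul_verticalMean_weightedSqDeriv_le (hg : g.IsLeftBounded) (hk : k.IsLeftBounded)
    (hW : W.IsLogConvex) (hWF : ∀ x, 0 ≤ x → W.val x = F.d₁ x + x * F.d₂ x)
    (hgk : ∀ z, z.re < T → g.d₁ z = Complex.exp z * k.val z) (ht : t < T) :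
    2 * verticalMean (weightedSqDeriv F g (.one T) 1) t ≤
      verticalMean (weightedSqLaplacian F g (.one T)) t := by
  rw [verticalMean_weightedSqLaplacian_one_right hWF hgk ht]
  refine le_of_hasDerivAt_exp_mul_monotone (fun s hs => ?_)
    (monotoneOn_verticalMean_weightedSq hg hk hW)
    (tendsto_verticalMean_weightedSqDeriv_one_right hg hk hgk) ht
  rw [← verticalMean_weightedSqLaplacian_one_right hWF hgk hs]
  exact hasDerivAt_verticalMean_weightedSqDeriv hs

end MeanGrowth

section ExponentialCoordinate

open Complex (I)

variable {R : ℝ} {h : ℂ → ℂ}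

theorem exp_mem_ball (hR : 0 < R) {z : ℂ} (hz : z.re < Real.log R) :
    Complex.exp z ∈ ball (0 : ℂ) R := by
  rw [mem_ball_zero_iff, Complex.norm_exp]
  exact (Real.lt_log_iff_exp_lt hR).1 hz

theorem exp_add_pi_mul_I (t : ℝ) :
    Complex.exp (t + π * I) = Complex.exp (t + (-π : ℝ) * I) := by
  simp [Complex.exp_add, Complex.exp_neg]

theorem hasDerivAt_comp_exp (hR : 0 < R) (hh : DifferentiableOn ℂ h (ball 0 R)) {z : ℂ}
    (hz : z.re < Real.log R) :
    HasDerivAt (fun z => h (Complex.exp z)) (Complex.exp z * deriv h (Complex.exp z)) z := by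
  have hderiv := (hh.differentiableAt (isOpen_ball.mem_nhds (exp_mem_ball hR hz))).hasDerivAt
  exact (hderiv.comp z (Complex.hasDerivAt_exp z)).congr_deriv (mul_comm _ _)

/-- The function `z ↦ h (exp z)` for `h` holomorphic on the disk of radius `R`. -/
noncomputable def PeriodicJet.compExp (hR : 0 < R) (hh : DifferentiableOn ℂ h (ball 0 R)) :
    PeriodicJet (Real.log R) where
  val z := h (Complex.exp z)
  d₁ z := Complex.exp z * deriv h (Complex.exp z)
  d₂ z := Complex.exp z * deriv h (Complex.exp z) +
    Complex.exp z * (Complex.exp z * deriv (deriv h) (Complex.exp z))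
  hasDerivAt_val hz := hasDerivAt_comp_exp hR hh hz
  hasDerivAt_d₁ hz :=
    (Complex.hasDerivAt_exp _).mul (hasDerivAt_comp_exp hR (hh.deriv isOpen_ball) hz)
  continuousOn_d₂ := by
    have hmaps : MapsTo Complex.exp {z | z.re < Real.log R} (ball 0 R) :=
      fun z hz => exp_mem_ball hR hz
    have hexp := Complex.continuous_exp.continuousOn (s := {z | z.re < Real.log R})
    have hh₁ := hh.deriv isOpen_ball
    have hcont₁ := hh₁.continuousOn.comp hexp hmaps
    have hcont₂ := (hh₁.deriv isOpen_ball).continuousOn.comp hexp hmaps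
    exact (hexp.mul hcont₁).add (hexp.mul (hexp.mul hcont₂))
  val_periodic t := by rw [exp_add_pi_mul_I]
  d₁_periodic t := by rw [exp_add_pi_mul_I]

theorem PeriodicJet.isLeftBounded_compExp (hR : 0 < R) (hh : DifferentiableOn ℂ h (ball 0 R)) :
    (compExp hR hh).IsLeftBounded := by
  intro t ht
  obtain ⟨B, hB⟩ := (isCompact_closedBall (0 : ℂ) (Real.exp t)).exists_bound_of_continuousOn
    (hh.continuousOn.mono (closedBall_subset_ball ((Real.lt_log_iff_exp_lt hR).1 ht)))
  refine ⟨B, fun z hz => hB _ ?_⟩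
  rw [mem_closedBall_zero_iff, Complex.norm_exp]
  exact Real.exp_le_exp.2 hz

end ExponentialCoordinate

section ShiftedPower

variable {ε a q x : ℝ}

theorem hasDerivAt_add_rpow (hε : 0 < ε) (a : ℝ) (hx : 0 ≤ x) :
    HasDerivAt (fun x : ℝ => (x + ε) ^ a) (a * (x + ε) ^ (a - 1)) x := by
  simpa using ((hasDerivAt_id x).add_const ε).rpow_const (p := a)
    (Or.inl (by simpa using (add_pos_of_nonneg_of_pos hx hε).ne'))

theorem continuousOn_add_rpow (hε : 0 < ε) (a : ℝ) :
    ContinuousOn (fun x : ℝ => (x + ε) ^ a) (Ici 0) :=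
  fun _ hx => (hasDerivAt_add_rpow hε a hx).continuousAt.continuousWithinAt

/-- The weight `(x + ε) ^ a`. -/
noncomputable def WeightJet.shiftedRpow (hε : 0 < ε) (a : ℝ) : WeightJet where
  val x := (x + ε) ^ a
  d₁ x := a * (x + ε) ^ (a - 1)
  d₂ x := a * ((a - 1) * (x + ε) ^ (a - 1 - 1))
  hasDerivAt_val hx := hasDerivAt_add_rpow hε a hx
  hasDerivAt_d₁ hx := (hasDerivAt_add_rpow hε (a - 1) hx).const_mul a
  continuousOn_d₂ := ((continuousOn_add_rpow hε _).const_mul _).const_mul _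

/-- The weight `(x F')'` for `F x = (x + ε) ^ q`, that is, the Laplacian of `F(|g|²)` is
`4 * eulerWeight(|g|²) * |g'|²`. -/
noncomputable def WeightJet.eulerWeight (hε : 0 < ε) (q : ℝ) : WeightJet where
  val x := q * ((q * x + ε) * (x + ε) ^ (q - 2))
  d₁ x := q * (q * (x + ε) ^ (q - 2) + (q * x + ε) * ((q - 2) * (x + ε) ^ (q - 2 - 1)))
  d₂ x := q * (2 * q * ((q - 2) * (x + ε) ^ (q - 2 - 1)) +
    (q * x + ε) * ((q - 2) * ((q - 2 - 1) * (x + ε) ^ (q - 2 - 1 - 1))))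
  hasDerivAt_val {x} hx := by
    have hlin : HasDerivAt (fun x : ℝ => q * x + ε) q x := by
      simpa using ((hasDerivAt_id x).const_mul q).add_const ε
    exact (hlin.mul (hasDerivAt_add_rpow hε (q - 2) hx)).const_mul q
  hasDerivAt_d₁ {x} hx := by
    have hlin : HasDerivAt (fun x : ℝ => q * x + ε) q x := by
      simpa using ((hasDerivAt_id x).const_mul q).add_const ε
    have hpow := hasDerivAt_add_rpow hε (q - 2) hx
    have hpow₁ := (hasDerivAt_add_rpow hε (q - 2 - 1) hx).const_mul (q - 2)
    exact (((hpow.const_mul q).add (hlin.mul hpow₁)).const_mul q).congr_deriv (by ring)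
  continuousOn_d₂ := by
    have hpow₁ := continuousOn_add_rpow hε (q - 2 - 1)
    have hpow₂ := continuousOn_add_rpow hε (q - 2 - 1 - 1)
    fun_prop

theorem WeightJet.isLogConvex_shiftedRpow (hε : 0 < ε) (ha : 0 ≤ a) :
    (shiftedRpow hε a).IsLogConvex where
  pos hx := by
    simp only [shiftedRpow]
    positivity
  le {x} hx := by
    have hy : 0 < x + ε := by positivity
    simp only [shiftedRpow]
    rw [show (x + ε) ^ a = (x + ε) ^ (a - 1 - 1) * (x + ε) ^ 2 by
        rw [← Real.rpow_add_natCast hy.ne']; ring_nf,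
      show (x + ε) ^ (a - 1) = (x + ε) ^ (a - 1 - 1) * (x + ε) by
        rw [← Real.rpow_add_one hy.ne']; ring_nf]
    set w := (x + ε) ^ (a - 1 - 1)
    have hgap : 0 ≤ w ^ 2 * (x + ε) ^ 2 * a * ε := by positivity
    linarith

theorem WeightJet.isLogConvex_eulerWeight (hε : 0 < ε) (hq : 1 ≤ q) :
    (eulerWeight hε q).IsLogConvex where
  pos hx := by
    simp only [eulerWeight]
    positivity
  le {x} hx := by
    have hy : 0 < x + ε := by positivity
    simp only [eulerWeight]
    rw [show (x + ε) ^ (q - 2) = (x + ε) ^ (q - 2 - 1 - 1) * (x + ε) ^ 2 by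
        rw [← Real.rpow_add_natCast hy.ne']; ring_nf,
      show (x + ε) ^ (q - 2 - 1) = (x + ε) ^ (q - 2 - 1 - 1) * (x + ε) by
        rw [← Real.rpow_add_one hy.ne']; ring_nf]
    set w := (x + ε) ^ (q - 2 - 1 - 1)
    have hgap : 0 ≤ q ^ 2 * (q - 1) * w ^ 2 * (x + ε) ^ 2 *
        (q * (q - 1) * x ^ 2 * ε + 2 * q * x * ε ^ 2 + 2 * ε ^ 3) := by positivity
    linarith

theorem WeightJet.eulerWeight_val (hε : 0 < ε) (q : ℝ) (hx : 0 ≤ x) :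
    (eulerWeight hε q).val x = (shiftedRpow hε q).d₁ x + x * (shiftedRpow hε q).d₂ x := by
  have hy : 0 < x + ε := by positivity
  simp only [eulerWeight, shiftedRpow]
  rw [show (x + ε) ^ (q - 1) = (x + ε) ^ (q - 2) * (x + ε) by
      rw [← Real.rpow_add_one hy.ne']; ring_nf,
    show q - 1 - 1 = q - 2 by ring]
  ring

end ShiftedPower

section CircularMean

open Complex (I)

/-- `m` is nondecreasing and convex as a function of `r ^ 2` on `(0, R)`: `N` is its derivative
with respect to `r ^ 2`, and `N'` that of `N` with respect to `r`. -/
structure IsConvexInSq (R : ℝ) (m N N' : ℝ → ℝ) : Prop where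
  hasDerivAt : ∀ {r : ℝ}, r ∈ Ioo 0 R → HasDerivAt m (2 * r * N r) r
  hasDerivAt_slope : ∀ {r : ℝ}, r ∈ Ioo 0 R → HasDerivAt N (N' r) r
  slope_nonneg : ∀ {r : ℝ}, r ∈ Ioo 0 R → 0 ≤ N r
  slope_deriv_nonneg : ∀ {r : ℝ}, r ∈ Ioo 0 R → 0 ≤ N' r

/-- The integral of `(|g|² + ε) ^ a` over the circle of radius `r`. For `ε > 0` it regularises the
integral of `|g| ^ (2 * a)` at the zeros of `g`. -/
noncomputable def circularMean (ε a : ℝ) (g : ℂ → ℂ) (r : ℝ) : ℝ :=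
  ∫ θ in -π..π, (‖g (circleMap 0 r θ)‖ ^ 2 + ε) ^ a

variable {R r ε a q : ℝ} {g : ℂ → ℂ}

theorem circularMean_eq_verticalMean (hR : 0 < R) (hg : DifferentiableOn ℂ g (ball 0 R))
    (hε : 0 < ε) (hr : 0 < r) : circularMean ε a g r = verticalMean
      (weightedSq (.shiftedRpow hε a) (.compExp hR hg) (.one _)) (Real.log r) := by
  refine intervalIntegral.integral_congr fun θ _ => ?_
  simp [weightedSq, WeightJet.shiftedRpow, PeriodicJet.compExp, PeriodicJet.one, Complex.exp_add,
    ← Complex.ofReal_exp, Real.exp_log hr, circleMap_zero]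

theorem monotoneOn_circularMean (hR : 0 < R) (hg : DifferentiableOn ℂ g (ball 0 R)) (hε : 0 < ε)
    (ha : 0 ≤ a) : MonotoneOn (circularMean ε a g) (Ioo 0 R) := by
  intro r hr s hs hrs
  rw [circularMean_eq_verticalMean hR hg hε hr.1, circularMean_eq_verticalMean hR hg hε hs.1]
  exact monotoneOn_verticalMean_weightedSq (PeriodicJet.isLeftBounded_compExp hR hg)
    PeriodicJet.isLeftBounded_one (WeightJet.isLogConvex_shiftedRpow hε ha)
    (Real.log_lt_log hr.1 hr.2) (Real.log_lt_log hs.1 hs.2) (Real.log_le_log hr.1 hrs)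

theorem exists_isConvexInSq_circularMean (hR : 0 < R) (hg : DifferentiableOn ℂ g (ball 0 R))
    (hε : 0 < ε) (hq : 1 ≤ q) : ∃ N N', IsConvexInSq R (circularMean ε q g) N N' := by
  set F := WeightJet.shiftedRpow hε q
  set G := PeriodicJet.compExp hR hg
  set P₁ := verticalMean (weightedSqDeriv F G (.one _) 1)
  set P₂ := verticalMean (weightedSqLaplacian F G (.one _))
  have hG : G.IsLeftBounded := PeriodicJet.isLeftBounded_compExp hR hg
  have hlog {r : ℝ} (hr : r ∈ Ioo 0 R) : Real.log r < Real.log R := Real.log_lt_log hr.1 hr.2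
  refine ⟨fun r => P₁ (Real.log r) / (2 * r ^ 2),
    fun r => (P₂ (Real.log r) - 2 * P₁ (Real.log r)) / (2 * r ^ 3), ⟨?_, ?_, ?_, ?_⟩⟩ <;>
    intro r hr <;> have hr0 := hr.1
  · have hderiv := (hasDerivAt_verticalMean_weightedSq (W := F) (g := G) (k := .one _)
      (hlog hr)).comp r (Real.hasDerivAt_log hr0.ne')
    refine (hderiv.congr_of_eventuallyEq ?_).congr_deriv ?_
    · filter_upwards [Ioi_mem_nhds hr0] with s hs using circularMean_eq_verticalMean hR hg hε hs
    · change P₁ (Real.log r) * r⁻¹ = _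
      field_simp
  · have hderiv : HasDerivAt (fun r => P₁ (Real.log r)) (P₂ (Real.log r) * r⁻¹) r :=
      (hasDerivAt_verticalMean_weightedSqDeriv (hlog hr)).comp r (Real.hasDerivAt_log hr0.ne')
    refine (hderiv.div ((hasDerivAt_pow 2 r).const_mul 2) (by positivity)).congr_deriv ?_
    field_simp
    ring
  · exact div_nonneg (verticalMean_weightedSqDeriv_nonneg hG PeriodicJet.isLeftBounded_one
      (WeightJet.isLogConvex_shiftedRpow hε (by linarith)) (hlog hr)) (by positivity)
  · refine div_nonneg (sub_nonneg.2 ?_) (by positivity)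
    exact two_mul_verticalMean_weightedSqDeriv_le hG
      (PeriodicJet.isLeftBounded_compExp hR (hg.deriv isOpen_ball))
      (WeightJet.isLogConvex_eulerWeight hε hq) (fun x hx => WeightJet.eulerWeight_val hε q hx)
      (fun z _ => rfl) (hlog hr)

end CircularMean

section RadialIntegrals

variable {α β γ b c R r : ℝ} {m m' N N' : ℝ → ℝ}

theorem hasDerivAt_one_sub_mul_sq_rpow (h : 0 < 1 - b * r ^ 2) :
    HasDerivAt (fun r : ℝ => (1 - b * r ^ 2) ^ γ)
      (-(γ * (1 - b * r ^ 2) ^ (γ - 1) * (2 * b * r))) r := by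
  have hbase : HasDerivAt (fun r : ℝ => 1 - b * r ^ 2) (-(b * (2 * r))) r := by
    simpa using ((hasDerivAt_pow 2 r).const_mul b).const_sub 1
  exact (hbase.rpow_const (.inl h.ne')).congr_deriv (by ring)

theorem hasDerivAt_one_sub_sq_rpow (h : r ∈ Ioo (0 : ℝ) 1) :
    HasDerivAt (fun r : ℝ => (1 - r ^ 2) ^ γ) (-(γ * (1 - r ^ 2) ^ (γ - 1) * (2 * r))) r := by
  have hpos : 0 < 1 - 1 * r ^ 2 := by nlinarith [h.1, h.2]
  simpa only [one_mul, mul_one] using hasDerivAt_one_sub_mul_sq_rpow (γ := γ) hpos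

theorem continuous_one_sub_mul_sq_rpow (hγ : 0 ≤ γ) :
    Continuous fun r : ℝ => (1 - b * r ^ 2) ^ γ :=
  (by fun_prop : Continuous fun r : ℝ => 1 - b * r ^ 2).rpow_const fun _ => .inr hγ

theorem continuous_one_sub_sq_rpow (hγ : 0 ≤ γ) : Continuous fun r : ℝ => (1 - r ^ 2) ^ γ := by
  simpa only [one_mul] using continuous_one_sub_mul_sq_rpow (b := 1) hγ

/-- The density on `(0, 1)` of the modulus of a point distributed according to
`bergmanMeasure γ`. -/
noncomputable def radialDensity (γ r : ℝ) : ℝ := (γ - 1) * (1 - r ^ 2) ^ (γ - 2) * (2 * r)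

theorem radialDensity_nonneg (hγ : 1 ≤ γ) (hr : r ∈ Ioo (0 : ℝ) 1) : 0 ≤ radialDensity γ r := by
  have hsq : 0 ≤ 1 - r ^ 2 := by nlinarith [hr.1, hr.2]
  exact mul_nonneg (mul_nonneg (by linarith) (Real.rpow_nonneg hsq _)) (by linarith [hr.1])

theorem hasDerivAt_neg_one_sub_sq_rpow (hr : r ∈ Ioo (0 : ℝ) 1) :
    HasDerivAt (fun r : ℝ => -(1 - r ^ 2) ^ (γ - 1)) (radialDensity γ r) r := by
  refine (hasDerivAt_one_sub_sq_rpow hr).neg.congr_deriv ?_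
  rw [neg_neg, radialDensity, sub_sub, one_add_one_eq_two]

theorem intervalIntegrable_radialDensity (hγ : 1 ≤ γ) :
    IntervalIntegrable (radialDensity γ) volume 0 1 :=
  intervalIntegral.intervalIntegrable_deriv_of_nonneg
    (continuous_one_sub_sq_rpow (sub_nonneg.2 hγ)).neg.continuousOn
    (fun r hr => hasDerivAt_neg_one_sub_sq_rpow (by simpa using hr))
    (fun r hr => radialDensity_nonneg hγ (by simpa using hr))

theorem integral_mul_radialDensity (hγ : 1 < γ) (hm : ContinuousOn m (Icc 0 1))
    (hderiv : ∀ r ∈ Ioo (0 : ℝ) 1, HasDerivAt m (m' r) r)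
    (hint : IntervalIntegrable m' volume 0 1) :
    ∫ r in 0..1, m r * radialDensity γ r = m 0 + ∫ r in 0..1, m' r * (1 - r ^ 2) ^ (γ - 1) := by
  rw [intervalIntegral.integral_mul_deriv_eq_deriv_mul_of_hasDerivAt (by simpa using hm)
    (continuous_one_sub_sq_rpow (sub_pos.2 hγ).le).neg.continuousOn (by simpa using hderiv)
    (fun r hr => hasDerivAt_neg_one_sub_sq_rpow (by simpa using hr)) hint
    (intervalIntegrable_radialDensity hγ.le)]
  simp [Real.zero_rpow (sub_pos.2 hγ).ne']

/-- The difference `((1 - r²) ^ β - (1 - (β / α) r²) ^ α) / β` of the primitives of the two kernels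
`r (1 - (β / α) r²) ^ (α - 1)` and `r (1 - r²) ^ (β - 1)` obtained from `radialDensity α` (after
dilation by `√(α / β)`) and `radialDensity β` by integration by parts. -/
noncomputable def kernelGap (α β r : ℝ) : ℝ := ((1 - r ^ 2) ^ β - (1 - β / α * r ^ 2) ^ α) / β

theorem continuous_kernelGap (hα : 0 ≤ α) (hβ : 0 ≤ β) : Continuous (kernelGap α β) :=
  ((continuous_one_sub_sq_rpow hβ).sub (continuous_one_sub_mul_sq_rpow hα)).div_const β

theorem kernelGap_zero : kernelGap α β 0 = 0 := by simp [kernelGap]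

theorem kernelGap_nonneg (hα : 0 < α) (hαβ : α ≤ β) (hr : β / α * r ^ 2 ≤ 1) :
    0 ≤ kernelGap α β r := by
  have hβ : 0 < β := hα.trans_le hαβ
  have hratio : 1 ≤ β / α := (one_le_div hα).2 hαβ
  have hsq : 0 ≤ 1 - r ^ 2 := by nlinarith [sq_nonneg r]
  have hbernoulli : 1 - β / α * r ^ 2 ≤ (1 - r ^ 2) ^ (β / α) := by
    simpa [sub_eq_add_neg] using
      one_add_mul_self_le_rpow_one_add (s := -r ^ 2) (by linarith) hratio
  refine div_nonneg (sub_nonneg.2 ?_) hβ.le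
  calc (1 - β / α * r ^ 2) ^ α ≤ ((1 - r ^ 2) ^ (β / α)) ^ α :=
        Real.rpow_le_rpow (by linarith) hbernoulli hα.le
    _ = (1 - r ^ 2) ^ β := by rw [← Real.rpow_mul hsq, div_mul_cancel₀ β hα.ne']

theorem hasDerivAt_kernelGap (hα : 0 < α) (hαβ : α ≤ β) (hr : 0 < r) (hr1 : β / α * r ^ 2 < 1) :
    HasDerivAt (kernelGap α β)
      (2 * r * (1 - β / α * r ^ 2) ^ (α - 1) - 2 * r * (1 - r ^ 2) ^ (β - 1)) r := by
  have hβ : 0 < β := hα.trans_le hαβ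
  have hratio : 1 ≤ β / α := (one_le_div hα).2 hαβ
  refine (((hasDerivAt_one_sub_sq_rpow ⟨hr, by nlinarith⟩).sub
    (hasDerivAt_one_sub_mul_sq_rpow (sub_pos.2 hr1))).div_const β).congr_deriv ?_
  generalize (1 - β / α * r ^ 2) ^ (α - 1) = x
  field_simp
  ring

namespace IsConvexInSq

variable (hmN : IsConvexInSq R m N N')
include hmN

theorem monotoneOn_slope : MonotoneOn N (Ioo 0 R) := by
  refine monotoneOn_of_hasDerivWithinAt_nonneg (convex_Ioo 0 R)
    (fun r hr => (hmN.hasDerivAt_slope hr).continuousAt.continuousWithinAt)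
    (f' := N') ?_ ?_ <;> rw [interior_Ioo]
  exacts [fun r hr => (hmN.hasDerivAt_slope hr).hasDerivWithinAt,
    fun r hr => hmN.slope_deriv_nonneg hr]

theorem intervalIntegrable_deriv (hR : 1 < R) (hm : ContinuousOn m (Icc 0 1)) :
    IntervalIntegrable (fun r => 2 * r * N r) volume 0 1 := by
  have hmem {r : ℝ} (hr : r ∈ Ioo (0 : ℝ) 1) : r ∈ Ioo 0 R := ⟨hr.1, hr.2.trans hR⟩
  refine intervalIntegral.intervalIntegrable_deriv_of_nonneg (by simpa using hm)
    (fun r hr => hmN.hasDerivAt (hmem (by simpa using hr))) fun r hr => ?_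
  have hr' : r ∈ Ioo (0 : ℝ) 1 := by simpa using hr
  exact mul_nonneg (by linarith [hr'.1]) (hmN.slope_nonneg (hmem hr'))

/-- At the origin, where `N` need not be continuous, the monotonicity of `N` bounds the product by a
multiple of `kernelGap`. -/
theorem continuousOn_slope_mul_kernelGap (hα : 0 < α) (hαβ : α ≤ β) (hc : c ∈ Ioo 0 R)
    (hc1 : β / α * c ^ 2 ≤ 1) : ContinuousOn (fun r => N r * kernelGap α β r) (Icc 0 c) := by
  have hβ : 0 < β := hα.trans_le hαβ
  have hgap := continuous_kernelGap hα.le hβ.le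
  intro r hr
  rcases hr.1.eq_or_lt with rfl | hr0
  · have hlim : Tendsto (fun r => N c * kernelGap α β r) (𝓝[Icc 0 c] 0) (𝓝 0) := by
      simpa [kernelGap_zero] using ((hgap.const_mul (N c)).tendsto 0).mono_left nhdsWithin_le_nhds
    rw [ContinuousWithinAt, kernelGap_zero, mul_zero]
    refine squeeze_zero_norm' ?_ hlim
    filter_upwards [self_mem_nhdsWithin] with s hs
    rcases hs.1.eq_or_lt with rfl | hs0
    · simp [kernelGap_zero]
    · have hsR : s ∈ Ioo 0 R := ⟨hs0, hs.2.trans_lt hc.2⟩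
      have hgap_nonneg : 0 ≤ kernelGap α β s := by
        refine kernelGap_nonneg hα hαβ (le_trans ?_ hc1)
        have := hs.2
        gcongr
      rw [Real.norm_of_nonneg (mul_nonneg (hmN.slope_nonneg hsR) hgap_nonneg)]
      exact mul_le_mul_of_nonneg_right (hmN.monotoneOn_slope hsR hc hs.2) hgap_nonneg
  · exact ((hmN.hasDerivAt_slope ⟨hr0, hr.2.trans_lt hc.2⟩).continuousAt.mul
      hgap.continuousAt).continuousWithinAt

theorem integral_kernel_sub_le (hα : 1 ≤ α) (hαβ : α ≤ β) (hc : c ∈ Ioo 0 R)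
    (hc1 : β / α * c ^ 2 = 1) (hint : IntervalIntegrable (fun r => 2 * r * N r) volume 0 c) :
    (∫ r in 0..c, 2 * r * N r * (1 - β / α * r ^ 2) ^ (α - 1)) -
      ∫ r in 0..c, 2 * r * N r * (1 - r ^ 2) ^ (β - 1) ≤ N c * ((1 - c ^ 2) ^ β / β) := by
  have hα0 : 0 < α := by linarith
  have hβ0 : 0 < β := by linarith
  have hlt {r : ℝ} (hr : r ∈ Ioo 0 c) : β / α * r ^ 2 < 1 := by
    rw [← hc1]
    have := hr.1.le
    have := hr.2
    gcongr
  have hint₁ := hint.mul_continuousOn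
    (continuous_one_sub_mul_sq_rpow (b := β / α) (sub_nonneg.2 hα)).continuousOn
  have hint₂ := hint.mul_continuousOn
    (continuous_one_sub_sq_rpow (sub_nonneg.2 (hα.trans hαβ))).continuousOn
  have hgap_c : kernelGap α β c = (1 - c ^ 2) ^ β / β := by
    rw [kernelGap, hc1, sub_self, Real.zero_rpow hα0.ne', sub_zero]
  rw [← intervalIntegral.integral_sub hint₁ hint₂, ← hgap_c]
  have hmem {r : ℝ} (hr : r ∈ Ioo 0 c) : r ∈ Ioo 0 R := ⟨hr.1, hr.2.trans hc.2⟩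
  have hle := intervalIntegral.integral_le_sub_of_hasDeriv_right_of_le hc.1.le
    (hmN.continuousOn_slope_mul_kernelGap hα0 hαβ hc hc1.le)
    (fun r hr => ((hmN.hasDerivAt_slope (hmem hr)).mul
      (hasDerivAt_kernelGap hα0 hαβ hr.1 (hlt hr))).hasDerivWithinAt)
    ((intervalIntegrable_iff_integrableOn_Icc_of_le hc.1.le).1 (hint₁.sub hint₂)) fun r hr => by
      have := mul_nonneg (hmN.slope_deriv_nonneg (hmem hr)) (kernelGap_nonneg hα0 hαβ (hlt hr).le)
      linarith
  simpa [kernelGap_zero] using hle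

theorem slope_mul_le_integral_kernel (hβ : 0 < β) (hR : 1 < R) (hc : c ∈ Ioo (0 : ℝ) 1)
    (hint : IntervalIntegrable (fun r => 2 * r * N r * (1 - r ^ 2) ^ (β - 1)) volume c 1) :
    N c * ((1 - c ^ 2) ^ β / β) ≤ ∫ r in c..1, 2 * r * N r * (1 - r ^ 2) ^ (β - 1) := by
  have hle := intervalIntegral.sub_le_integral_of_hasDeriv_right_of_le hc.2.le
    ((continuous_one_sub_sq_rpow hβ.le).const_mul (-(N c / β))).continuousOn
    (fun r hr => ((hasDerivAt_one_sub_sq_rpow ⟨hc.1.trans hr.1, hr.2⟩).const_mul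
      (-(N c / β))).hasDerivWithinAt)
    ((intervalIntegrable_iff_integrableOn_Icc_of_le hc.2.le).1 hint) fun r hr => by
      have hr0 : 0 < r := hc.1.trans hr.1
      have hsq : 0 ≤ 1 - r ^ 2 := by nlinarith [hr.2]
      have hmono : N c ≤ N r :=
        hmN.monotoneOn_slope ⟨hc.1, hc.2.trans hR⟩ ⟨hr0, hr.2.trans hR⟩ hr.1.le
      calc -(N c / β) * -(β * (1 - r ^ 2) ^ (β - 1) * (2 * r))
          = 2 * r * N c * (1 - r ^ 2) ^ (β - 1) := by field_simp
        _ ≤ 2 * r * N r * (1 - r ^ 2) ^ (β - 1) := by gcongr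
  simp only [one_pow, sub_self, Real.zero_rpow hβ.ne', mul_zero, zero_sub] at hle
  exact (by ring : _ = _).trans_le hle

theorem comp_mul_left (hc : 0 < c) : IsConvexInSq (R / c) (fun r => m (c * r))
    (fun r => c ^ 2 * N (c * r)) (fun r => c ^ 3 * N' (c * r)) := by
  have hmem {r : ℝ} (hr : r ∈ Ioo 0 (R / c)) : c * r ∈ Ioo 0 R :=
    ⟨mul_pos hc hr.1, (lt_div_iff₀' hc).1 hr.2⟩
  have hscale (r : ℝ) : HasDerivAt (fun r => c * r) (c * 1) r := (hasDerivAt_id r).const_mul c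
  refine ⟨fun {r} hr => ?_, fun {r} hr => ?_, fun hr => ?_, fun hr => ?_⟩
  · exact ((hmN.hasDerivAt (hmem hr)).comp r (hscale r)).congr_deriv (by ring)
  · exact (((hmN.hasDerivAt_slope (hmem hr)).comp r (hscale r)).const_mul (c ^ 2)).congr_deriv
      (by ring)
  · exact mul_nonneg (by positivity) (hmN.slope_nonneg (hmem hr))
  · exact mul_nonneg (by positivity) (hmN.slope_deriv_nonneg (hmem hr))

theorem integral_mul_radialDensity (hR : 1 < R) (hm : ContinuousOn m (Icc 0 1)) (hγ : 1 < γ) :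
    ∫ r in 0..1, m r * radialDensity γ r =
      m 0 + ∫ r in 0..1, 2 * r * N r * (1 - r ^ 2) ^ (γ - 1) :=
  BergmanSpace.integral_mul_radialDensity hγ hm
    (fun _ hr => hmN.hasDerivAt ⟨hr.1, hr.2.trans hR⟩) (hmN.intervalIntegrable_deriv hR hm)

theorem integral_comp_mul_left_mul_radialDensity (hR : 1 < R) (hm : ContinuousOn m (Icc 0 1))
    (hγ : 1 < γ) (hc : c ∈ Ioo (0 : ℝ) 1) (hbc : b * c ^ 2 = 1) :
    ∫ r in 0..1, m (c * r) * radialDensity γ r =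
      m 0 + ∫ r in 0..c, 2 * r * N r * (1 - b * r ^ 2) ^ (γ - 1) := by
  have hsubst := intervalIntegral.mul_integral_comp_mul_left (a := 0) (b := 1)
    (f := fun s => 2 * s * N s * (1 - b * s ^ 2) ^ (γ - 1)) c
  rw [mul_zero, mul_one] at hsubst
  rw [(hmN.comp_mul_left hc.1).integral_mul_radialDensity
    ((one_lt_div hc.1).2 (hc.2.trans hR)) ?_ hγ, mul_zero, ← hsubst,
    ← intervalIntegral.integral_const_mul]
  · simp only [mul_pow, ← mul_assoc b, hbc, one_mul]
    congr 2 with r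
    ring
  · exact hm.comp (by fun_prop) fun r hr =>
      ⟨mul_nonneg hc.1.le hr.1, mul_le_one₀ hc.2.le hr.1 hr.2⟩

theorem integral_comp_sqrt_mul_radialDensity_le (hR : 1 < R) (hm : ContinuousOn m (Icc 0 1))
    (hα : 1 < α) (hαβ : α < β) :
    ∫ r in 0..1, m (√(α / β) * r) * radialDensity α r ≤ ∫ r in 0..1, m r * radialDensity β r := by
  have hβ0 : 0 < β := by linarith
  set c := √(α / β)
  have hc : c ∈ Ioo (0 : ℝ) 1 :=
    ⟨Real.sqrt_pos.2 (by positivity),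
      (Real.sqrt_lt' one_pos).2 (by rwa [one_pow, div_lt_one hβ0])⟩
  have hc1 : β / α * c ^ 2 = 1 := by
    rw [Real.sq_sqrt (by positivity)]
    field_simp
  have hint := hmN.intervalIntegrable_deriv hR hm
  have hc_mem : c ∈ uIcc 0 1 := by simp [hc.1.le, hc.2.le]
  have hint₀ := hint.mono_set (uIcc_subset_uIcc_left hc_mem)
  have hint₁ := hint.mono_set (uIcc_subset_uIcc_right hc_mem)
  have hkernel := continuous_one_sub_sq_rpow (γ := β - 1) (by linarith)
  have hright := hint₁.mul_continuousOn hkernel.continuousOn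
  rw [hmN.integral_comp_mul_left_mul_radialDensity hR hm hα hc hc1,
    hmN.integral_mul_radialDensity hR hm (hα.trans hαβ),
    ← intervalIntegral.integral_add_adjacent_intervals
      (hint₀.mul_continuousOn hkernel.continuousOn) hright]
  linarith [hmN.integral_kernel_sub_le hα.le hαβ.le ⟨hc.1, hc.2.trans hR⟩ hc1 hint₀,
    hmN.slope_mul_le_integral_kernel hβ0 hR hc hright]

end IsConvexInSq

end RadialIntegrals

section BergmanMeasure

open scoped ENNReal

variable {α r C : ℝ} {h : ℂ → ℝ}

theorem lintegral_eq_lintegral_circleMap {F : ℂ → ℝ≥0∞} (hF : Measurable F) :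
    ∫⁻ z, F z =
      ∫⁻ r in Ioi (0 : ℝ), ENNReal.ofReal r * ∫⁻ θ in Ioo (-π) π, F (circleMap 0 r θ) := by
  have hsymm (x : ℝ × ℝ) : Complex.polarCoord.symm x = circleMap 0 x.1 x.2 := by
    rw [Complex.polarCoord_symm_apply, circleMap_zero, Complex.exp_mul_I]
    push_cast
    rfl
  have hcircle : Measurable fun x : ℝ × ℝ => circleMap 0 x.1 x.2 := by
    unfold circleMap
    fun_prop
  rw [← Complex.lintegral_comp_polarCoord_symm, polarCoord_target, Measure.volume_eq_prod,
    ← Measure.prod_restrict, lintegral_prod]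
  · refine lintegral_congr fun r => ?_
    simp only [hsymm, smul_eq_mul]
    exact lintegral_const_mul _ (hF.comp (continuous_circleMap 0 r).measurable)
  · simp only [hsymm, smul_eq_mul]
    exact ((by fun_prop : Measurable fun x : ℝ × ℝ => ENNReal.ofReal x.1).mul
      (hF.comp hcircle)).aemeasurable

theorem circleMap_mem_ball_iff (hr : 0 ≤ r) {R θ : ℝ} :
    circleMap 0 r θ ∈ ball (0 : ℂ) R ↔ r < R := by
  rw [mem_ball_zero_iff, norm_circleMap_zero, abs_of_nonneg hr]

theorem circleMap_mem_closedBall_iff (hr : 0 ≤ r) {R θ : ℝ} :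
    circleMap 0 r θ ∈ closedBall (0 : ℂ) R ↔ r ≤ R := by
  rw [mem_closedBall_zero_iff, norm_circleMap_zero, abs_of_nonneg hr]

theorem measurable_bergmanDensity : Measurable fun z : ℂ =>
    ENNReal.ofReal ((α - 1) / π * (1 - ‖z‖ ^ 2) ^ (α - 2)) := by
  fun_prop

theorem bergmanMeasure_absolutelyContinuous :
    bergmanMeasure α ≪ volume.restrict (ball (0 : ℂ) 1) :=
  withDensity_absolutelyContinuous _ _

theorem ae_mem_ball_bergmanMeasure : ∀ᵐ z ∂bergmanMeasure α, z ∈ ball (0 : ℂ) 1 :=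
  bergmanMeasure_absolutelyContinuous.ae_le (ae_restrict_mem measurableSet_ball)

theorem aestronglyMeasurable_bergmanMeasure (hh : ContinuousOn h (ball 0 1)) :
    AEStronglyMeasurable h (bergmanMeasure α) :=
  (hh.aestronglyMeasurable measurableSet_ball).mono_ac bergmanMeasure_absolutelyContinuous

theorem lintegral_bergmanMeasure {F : ℂ → ℝ≥0∞} (hF : Measurable F) :
    ∫⁻ z, F z ∂bergmanMeasure α =
      ∫⁻ r in Ioo (0 : ℝ) 1, ENNReal.ofReal (radialDensity α r / (2 * π)) *
        ∫⁻ θ in Ioo (-π) π, F (circleMap 0 r θ) := by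
  rw [bergmanMeasure, lintegral_withDensity_eq_lintegral_mul _ measurable_bergmanDensity hF,
    ← lintegral_indicator measurableSet_ball, lintegral_eq_lintegral_circleMap
      ((measurable_bergmanDensity.mul hF).indicator measurableSet_ball),
    ← Iio_inter_Ioi (a := 1), ← setLIntegral_indicator measurableSet_Iio]
  refine setLIntegral_congr_fun measurableSet_Ioi fun r hr => ?_
  have hr0 : 0 < r := hr
  by_cases hr1 : r < 1
  · have hmem (θ : ℝ) : circleMap 0 r θ ∈ ball (0 : ℂ) 1 := (circleMap_mem_ball_iff hr0.le).2 hr1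
    simp only [indicator_of_mem (mem_Iio.2 hr1), indicator_of_mem (hmem _), Pi.mul_apply,
      norm_circleMap_zero, sq_abs]
    have hFr : Measurable fun θ => F (circleMap 0 r θ) :=
      hF.comp (continuous_circleMap 0 r).measurable
    rw [lintegral_const_mul _ hFr, ← mul_assoc, ← ENNReal.ofReal_mul hr0.le]
    congr 2
    rw [radialDensity]
    field_simp
  · have hmem (θ : ℝ) : circleMap 0 r θ ∉ ball (0 : ℂ) 1 := by
      rwa [circleMap_mem_ball_iff hr0.le]
    simp only [indicator_of_notMem (notMem_Iio.2 (not_lt.1 hr1)), indicator_of_notMem (hmem _),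
      lintegral_zero, mul_zero]

theorem lintegral_ofReal_bergmanMeasure (hα : 1 ≤ α) (hh : ContinuousOn h (ball 0 1))
    (hnonneg : ∀ z ∈ ball (0 : ℂ) 1, 0 ≤ h z) :
    ∫⁻ z, ENNReal.ofReal (h z) ∂bergmanMeasure α =
      ∫⁻ r in Ioo (0 : ℝ) 1, ENNReal.ofReal (radialDensity α r / (2 * π) *
        ∫ θ in -π..π, h (circleMap 0 r θ)) := by
  classical
  set F : ℂ → ℝ≥0∞ := (ball (0 : ℂ) 1).indicator fun z => ENNReal.ofReal (h z)
  have hF : Measurable F := by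
    rw [show F = (ball 0 1).piecewise _ _ from (piecewise_eq_indicator ..).symm]
    exact (ENNReal.continuous_ofReal.comp_continuousOn hh).measurable_piecewise
      continuousOn_const measurableSet_ball
  have hFh : (fun z => ENNReal.ofReal (h z)) =ᵐ[bergmanMeasure α] F := by
    filter_upwards [ae_mem_ball_bergmanMeasure] with z hz
    exact (indicator_of_mem hz fun z => ENNReal.ofReal (h z)).symm
  rw [lintegral_congr_ae hFh, lintegral_bergmanMeasure hF]
  refine setLIntegral_congr_fun measurableSet_Ioo fun r hr => ?_
  have hmem (θ : ℝ) : circleMap 0 r θ ∈ ball (0 : ℂ) 1 := (circleMap_mem_ball_iff hr.1.le).2 hr.2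
  have hcont : Continuous fun θ => h (circleMap 0 r θ) :=
    hh.comp_continuous (continuous_circleMap 0 r) hmem
  have hdensity := radialDensity_nonneg hα hr
  simp only [F, indicator_of_mem (hmem _)]
  rw [ENNReal.ofReal_mul (by positivity),
    intervalIntegral.integral_of_le (by linarith [Real.pi_pos]),
    ← ofReal_integral_eq_lintegral_ofReal, integral_Ioc_eq_integral_Ioo]
  · exact hcont.integrableOn_Icc.mono_set Ioo_subset_Icc_self
  · exact .of_forall fun θ => hnonneg _ (hmem θ)

theorem continuousOn_integral_circleMap (hh : ContinuousOn h (closedBall 0 1)) :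
    ContinuousOn (fun r : ℝ => ∫ θ in -π..π, h (circleMap 0 r θ)) (Icc 0 1) := by
  have hmem {r : ℝ} (hr : r ∈ Icc (0 : ℝ) 1) (θ : ℝ) : circleMap 0 r θ ∈ closedBall (0 : ℂ) 1 :=
    (circleMap_mem_closedBall_iff hr.1).2 hr.2
  obtain ⟨C, hC⟩ := (isCompact_closedBall (0 : ℂ) 1).exists_bound_of_continuousOn hh
  intro r hr
  refine intervalIntegral.continuousWithinAt_of_dominated_interval (bound := fun _ => C) ?_ ?_
    intervalIntegrable_const (.of_forall fun θ _ => ?_)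
  · filter_upwards [self_mem_nhdsWithin] with s hs
    exact (hh.comp_continuous (continuous_circleMap 0 s) (hmem hs)).aestronglyMeasurable
  · filter_upwards [self_mem_nhdsWithin] with s hs using .of_forall fun θ _ => hC _ (hmem hs θ)
  · refine ContinuousWithinAt.comp (hh _ (hmem hr θ)) ?_ fun s hs => hmem hs θ
    unfold circleMap
    fun_prop

theorem integral_bergmanMeasure (hα : 1 ≤ α) (hh : ContinuousOn h (closedBall 0 1))
    (hnonneg : ∀ z ∈ closedBall (0 : ℂ) 1, 0 ≤ h z) :
    ∫ z, h z ∂bergmanMeasure α =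
      1 / (2 * π) * ∫ r in 0..1, (∫ θ in -π..π, h (circleMap 0 r θ)) * radialDensity α r := by
  have hball := hh.mono ball_subset_closedBall
  have hmean {r : ℝ} (hr : r ∈ Ioo (0 : ℝ) 1) : 0 ≤ ∫ θ in -π..π, h (circleMap 0 r θ) :=
    intervalIntegral.integral_nonneg (by linarith [Real.pi_pos]) fun θ _ =>
      hnonneg _ ((circleMap_mem_closedBall_iff hr.1.le).2 hr.2.le)
  rw [integral_eq_lintegral_of_nonneg_ae ?_ (aestronglyMeasurable_bergmanMeasure hball),
    lintegral_ofReal_bergmanMeasure hα hball fun z hz => hnonneg z (ball_subset_closedBall hz),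
    ← intervalIntegral.integral_const_mul, intervalIntegral.integral_of_le zero_le_one,
    integral_Ioc_eq_integral_Ioo, integral_eq_lintegral_of_nonneg_ae]
  · congr 1
    refine lintegral_congr fun r => ?_
    congr 1
    ring
  · filter_upwards [ae_restrict_mem measurableSet_Ioo] with r hr
    exact mul_nonneg (by positivity) (mul_nonneg (hmean hr) (radialDensity_nonneg hα hr))
  · refine (AEStronglyMeasurable.mul ?_ ?_).const_mul _
    · exact ((continuousOn_integral_circleMap hh).mono Ioo_subset_Icc_self).aestronglyMeasurable
        measurableSet_Ioo
    · exact ((intervalIntegrable_iff_integrableOn_Ioo_of_le zero_le_one).1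
        (intervalIntegrable_radialDensity hα)).aestronglyMeasurable
  · filter_upwards [ae_mem_ball_bergmanMeasure] with z hz
    exact hnonneg z (ball_subset_closedBall hz)

theorem isFiniteMeasure_bergmanMeasure (hα : 1 ≤ α) : IsFiniteMeasure (bergmanMeasure α) := by
  have huniv := lintegral_ofReal_bergmanMeasure (h := fun _ => 1) hα continuousOn_const
    fun _ _ => zero_le_one
  simp only [ENNReal.ofReal_one, lintegral_one] at huniv
  refine ⟨huniv.trans_lt (Integrable.lintegral_lt_top (Integrable.mul_const ?_ _))⟩
  exact ((intervalIntegrable_iff_integrableOn_Ioo_of_le zero_le_one).1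
    (intervalIntegrable_radialDensity hα)).div_const _

theorem integrable_bergmanMeasure_of_bounded (hα : 1 ≤ α) (hh : ContinuousOn h (ball 0 1))
    (hC : ∀ z ∈ ball (0 : ℂ) 1, ‖h z‖ ≤ C) : Integrable h (bergmanMeasure α) := by
  have := isFiniteMeasure_bergmanMeasure hα
  refine .of_bound (aestronglyMeasurable_bergmanMeasure hh) C ?_
  filter_upwards [ae_mem_ball_bergmanMeasure] with z hz using hC z hz

theorem tendsto_integral_bergmanMeasure_of_bounded {ι : Type*} {l : Filter ι}
    [l.IsCountablyGenerated] {H : ι → ℂ → ℝ} (hα : 1 ≤ α)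
    (hH : ∀ᶠ i in l, ContinuousOn (H i) (ball 0 1))
    (hC : ∀ᶠ i in l, ∀ z ∈ ball (0 : ℂ) 1, ‖H i z‖ ≤ C)
    (hlim : ∀ z ∈ ball (0 : ℂ) 1, Tendsto (H · z) l (𝓝 (h z))) :
    Tendsto (fun i => ∫ z, H i z ∂bergmanMeasure α) l (𝓝 (∫ z, h z ∂bergmanMeasure α)) := by
  have := isFiniteMeasure_bergmanMeasure hα
  refine tendsto_integral_filter_of_dominated_convergence (fun _ => C) ?_ ?_ (integrable_const C) ?_
  · filter_upwards [hH] with i hi using aestronglyMeasurable_bergmanMeasure hi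
  · filter_upwards [hC] with i hi
    filter_upwards [ae_mem_ball_bergmanMeasure] with z hz using hi z hz
  · filter_upwards [ae_mem_ball_bergmanMeasure] with z hz using hlim z hz

end BergmanMeasure

section Dilation

variable {α β ε c p q r R ρ : ℝ} {s : Set ℂ} {g : ℂ → ℂ}

theorem circularMean_comp_mul_left :
    circularMean ε q (fun z => g (c * z)) r = circularMean ε q g (c * r) := by
  simp only [circularMean, circleMap_zero, Complex.ofReal_mul, mul_assoc]

theorem continuousOn_comp_mul_left {w : ℂ} (hg : ContinuousOn g s) (hs : Balanced ℂ s)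
    (hw : ‖w‖ ≤ 1) : ContinuousOn (fun z => g (w * z)) s :=
  hg.comp (by fun_prop) fun _ hz => hs.smul_mem hw hz

theorem norm_ofReal_sqrt_div_le_one (hβ : 0 ≤ β) (hαβ : α ≤ β) : ‖(√(α / β) : ℂ)‖ ≤ 1 := by
  rw [Complex.norm_of_nonneg (Real.sqrt_nonneg _), Real.sqrt_le_one]
  exact div_le_one_of_le₀ hαβ hβ

theorem continuousOn_norm_sq_add_rpow (hg : ContinuousOn g s) (hq : 0 ≤ q) :
    ContinuousOn (fun z => (‖g z‖ ^ 2 + ε) ^ q) s :=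
  ((hg.norm.pow 2).add continuousOn_const).rpow_const fun _ _ => .inr hq

theorem continuousOn_norm_sq_rpow (hg : ContinuousOn g s) (hq : 0 ≤ q) :
    ContinuousOn (fun z => (‖g z‖ ^ 2) ^ q) s := by
  simpa only [add_zero] using continuousOn_norm_sq_add_rpow (ε := 0) hg hq

theorem integral_norm_sq_add_rpow_eq_circularMean (hα : 1 ≤ α)
    (hg : ContinuousOn g (closedBall 0 1)) (hε : 0 ≤ ε) (hq : 0 ≤ q) :
    ∫ z, (‖g z‖ ^ 2 + ε) ^ q ∂bergmanMeasure α =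
      1 / (2 * π) * ∫ r in 0..1, circularMean ε q g r * radialDensity α r :=
  integral_bergmanMeasure hα (continuousOn_norm_sq_add_rpow hg hq) fun z _ => by positivity

theorem tendsto_integral_norm_sq_add_rpow (hα : 1 ≤ α) (hg : ContinuousOn g (closedBall 0 1))
    (hq : 0 ≤ q) : Tendsto (fun ε : ℝ => ∫ z, (‖g z‖ ^ 2 + ε) ^ q ∂bergmanMeasure α) (𝓝[>] 0)
      (𝓝 (∫ z, (‖g z‖ ^ 2) ^ q ∂bergmanMeasure α)) := by
  obtain ⟨C, hC⟩ := (isCompact_closedBall (0 : ℂ) 1).exists_bound_of_continuousOn hg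
  refine tendsto_integral_bergmanMeasure_of_bounded (C := (C ^ 2 + 1) ^ q) hα ?_ ?_ fun z _ => ?_
  · exact .of_forall fun ε =>
      continuousOn_norm_sq_add_rpow (hg.mono ball_subset_closedBall) hq
  · filter_upwards [Ioo_mem_nhdsGT one_pos] with ε hε z hz
    have hε0 := hε.1.le
    have hε1 := hε.2.le
    have hgC := hC z (ball_subset_closedBall hz)
    rw [Real.norm_of_nonneg (by positivity)]
    gcongr
  · have hcont : Continuous fun ε : ℝ => (‖g z‖ ^ 2 + ε) ^ q :=
      (continuous_const.add continuous_id).rpow_const fun _ => .inr hq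
    simpa using (hcont.tendsto 0).mono_left nhdsWithin_le_nhds

theorem integral_norm_sq_add_rpow_comp_sqrt_mul_le (hR : 1 < R)
    (hg : DifferentiableOn ℂ g (ball 0 R)) (hε : 0 < ε) (hq : 1 ≤ q) (hα : 1 < α) (hαβ : α < β) :
    ∫ z, (‖g (√(α / β) * z)‖ ^ 2 + ε) ^ q ∂bergmanMeasure α ≤
      ∫ z, (‖g z‖ ^ 2 + ε) ^ q ∂bergmanMeasure β := by
  have hq0 : 0 ≤ q := by linarith
  have hgc : ContinuousOn g (closedBall 0 1) := hg.continuousOn.mono (closedBall_subset_ball hR)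
  have hsqrt := norm_ofReal_sqrt_div_le_one (by linarith) hαβ.le
  obtain ⟨N, N', hconvex⟩ := exists_isConvexInSq_circularMean (zero_lt_one.trans hR) hg hε hq
  rw [integral_norm_sq_add_rpow_eq_circularMean hα.le
      (continuousOn_comp_mul_left hgc balanced_closedBall_zero hsqrt) hε.le hq0,
    integral_norm_sq_add_rpow_eq_circularMean (hα.trans hαβ).le hgc hε.le hq0]
  simp only [circularMean_comp_mul_left]
  refine mul_le_mul_of_nonneg_left ?_ (by positivity)
  exact hconvex.integral_comp_sqrt_mul_radialDensity_le hR
    (continuousOn_integral_circleMap (continuousOn_norm_sq_add_rpow hgc hq0)) hα hαβ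

theorem integral_norm_sq_rpow_comp_sqrt_mul_le (hR : 1 < R)
    (hg : DifferentiableOn ℂ g (ball 0 R)) (hq : 1 ≤ q) (hα : 1 < α) (hαβ : α < β) :
    ∫ z, (‖g (√(α / β) * z)‖ ^ 2) ^ q ∂bergmanMeasure α ≤
      ∫ z, (‖g z‖ ^ 2) ^ q ∂bergmanMeasure β := by
  have hq0 : 0 ≤ q := by linarith
  have hgc : ContinuousOn g (closedBall 0 1) := hg.continuousOn.mono (closedBall_subset_ball hR)
  have hsqrt := norm_ofReal_sqrt_div_le_one (by linarith) hαβ.le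
  refine le_of_tendsto_of_tendsto
    (tendsto_integral_norm_sq_add_rpow hα.le
      (continuousOn_comp_mul_left hgc balanced_closedBall_zero hsqrt) hq0)
    (tendsto_integral_norm_sq_add_rpow (hα.trans hαβ).le hgc hq0) ?_
  filter_upwards [self_mem_nhdsWithin] with ε hε
  exact integral_norm_sq_add_rpow_comp_sqrt_mul_le hR hg hε hq hα hαβ

theorem tendsto_circularMean_zero (hg : ContinuousOn g (ball 0 R)) (hq : 0 ≤ q)
    (hr : r ∈ Ioo 0 R) :
    Tendsto (fun ε => circularMean ε q g r) (𝓝[>] 0) (𝓝 (circularMean 0 q g r)) := by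
  have hcircle : Continuous fun θ => ‖g (circleMap 0 r θ)‖ :=
    hg.norm.comp_continuous (continuous_circleMap 0 r) fun θ =>
      (circleMap_mem_ball_iff hr.1.le).2 hr.2
  have hmean : Continuous fun ε => circularMean ε q g r := by
    refine intervalIntegral.continuous_parametric_intervalIntegral_of_continuous' ?_ _ _
    exact (((hcircle.comp continuous_snd).pow 2).add continuous_fst).rpow_const fun _ => .inr hq
  exact (hmean.tendsto 0).mono_left nhdsWithin_le_nhds

theorem monotoneOn_circularMean_zero (hR : 0 < R) (hg : DifferentiableOn ℂ g (ball 0 R))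
    (hq : 0 ≤ q) : MonotoneOn (circularMean 0 q g) (Ioo 0 R) := by
  intro r hr s hs hrs
  refine le_of_tendsto_of_tendsto (tendsto_circularMean_zero hg.continuousOn hq hr)
    (tendsto_circularMean_zero hg.continuousOn hq hs) ?_
  filter_upwards [self_mem_nhdsWithin] with ε hε
  exact monotoneOn_circularMean hR hg hε hq hr hs hrs

theorem lintegral_norm_sq_rpow_eq_circularMean (hα : 1 ≤ α) (hg : ContinuousOn g (ball 0 1))
    (hp : 0 ≤ p) : ∫⁻ z, ENNReal.ofReal ((‖g z‖ ^ 2) ^ p) ∂bergmanMeasure α =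
      ∫⁻ r in Ioo (0 : ℝ) 1,
        ENNReal.ofReal (radialDensity α r / (2 * π) * circularMean 0 p g r) := by
  simp only [circularMean, add_zero]
  exact lintegral_ofReal_bergmanMeasure hα (continuousOn_norm_sq_rpow hg hp)
    fun z _ => by positivity

theorem lintegral_norm_sq_rpow_comp_mul_le (hα : 1 ≤ α) (hg : DifferentiableOn ℂ g (ball 0 1))
    (hp : 0 ≤ p) (hρ : ρ ∈ Ioc (0 : ℝ) 1) :
    ∫⁻ z, ENNReal.ofReal ((‖g (ρ * z)‖ ^ 2) ^ p) ∂bergmanMeasure α ≤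
      ∫⁻ z, ENNReal.ofReal ((‖g z‖ ^ 2) ^ p) ∂bergmanMeasure α := by
  have hρ1 : ‖(ρ : ℂ)‖ ≤ 1 := by rw [Complex.norm_of_nonneg hρ.1.le]; exact hρ.2
  rw [lintegral_norm_sq_rpow_eq_circularMean hα
      (continuousOn_comp_mul_left hg.continuousOn balanced_ball_zero hρ1) hp,
    lintegral_norm_sq_rpow_eq_circularMean hα hg.continuousOn hp]
  refine setLIntegral_mono' measurableSet_Ioo fun r hr => ENNReal.ofReal_le_ofReal ?_
  have hle : ρ * r ≤ r := mul_le_of_le_one_left hr.1.le hρ.2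
  have hdensity := radialDensity_nonneg hα hr
  rw [circularMean_comp_mul_left]
  exact mul_le_mul_of_nonneg_left (monotoneOn_circularMean_zero one_pos hg hp
    ⟨mul_pos hρ.1 hr.1, hle.trans_lt hr.2⟩ hr hle) (by positivity)

theorem integral_norm_sq_rpow_comp_mul_le (hα : 1 ≤ α) (hg : DifferentiableOn ℂ g (ball 0 1))
    (hp : 0 ≤ p) (hint : Integrable (fun z => (‖g z‖ ^ 2) ^ p) (bergmanMeasure α))
    (hρ : ρ ∈ Ioc (0 : ℝ) 1) :
    ∫ z, (‖g (ρ * z)‖ ^ 2) ^ p ∂bergmanMeasure α ≤ ∫ z, (‖g z‖ ^ 2) ^ p ∂bergmanMeasure α := by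
  have hρ1 : ‖(ρ : ℂ)‖ ≤ 1 := by rw [Complex.norm_of_nonneg hρ.1.le]; exact hρ.2
  rw [integral_eq_lintegral_of_nonneg_ae (.of_forall fun z => by positivity)
      (aestronglyMeasurable_bergmanMeasure (continuousOn_norm_sq_rpow
        (continuousOn_comp_mul_left hg.continuousOn balanced_ball_zero hρ1) hp)),
    integral_eq_lintegral_of_nonneg_ae (.of_forall fun z => by positivity) hint.1]
  exact ENNReal.toReal_mono hint.lintegral_lt_top.ne
    (lintegral_norm_sq_rpow_comp_mul_le hα hg hp hρ)

theorem tendsto_integral_norm_sq_rpow_comp_mul (hα : 1 ≤ α) (hg : ContinuousOn g (ball 0 1))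
    (hq : 0 ≤ q) (hc : c ∈ Ioo (0 : ℝ) 1) :
    Tendsto (fun ρ : ℝ => ∫ z, (‖g (ρ * (c * z))‖ ^ 2) ^ q ∂bergmanMeasure α) (𝓝[<] 1)
      (𝓝 (∫ z, (‖g (c * z)‖ ^ 2) ^ q ∂bergmanMeasure α)) := by
  have hsub : closedBall (0 : ℂ) c ⊆ ball 0 1 := closedBall_subset_ball hc.2
  obtain ⟨C, hC⟩ := (isCompact_closedBall (0 : ℂ) c).exists_bound_of_continuousOn (hg.mono hsub)
  have hmem_c {z : ℂ} (hz : z ∈ ball (0 : ℂ) 1) : (c * z : ℂ) ∈ closedBall (0 : ℂ) c := by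
    rw [mem_ball_zero_iff] at hz
    rw [mem_closedBall_zero_iff, norm_mul, Complex.norm_of_nonneg hc.1.le]
    exact mul_le_of_le_one_right hc.1.le hz.le
  have hmem {ρ : ℝ} (hρ : ρ ∈ Ioo (0 : ℝ) 1) {z : ℂ} (hz : z ∈ ball (0 : ℂ) 1) :
      (ρ * (c * z) : ℂ) ∈ closedBall (0 : ℂ) c :=
    balanced_closedBall_zero.smul_mem
      (by rw [Complex.norm_of_nonneg hρ.1.le]; exact hρ.2.le) (hmem_c hz)
  have hρ_near : ∀ᶠ ρ : ℝ in 𝓝[<] 1, ρ ∈ Ioo 0 1 := Ioo_mem_nhdsLT one_pos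
  refine tendsto_integral_bergmanMeasure_of_bounded (C := (C ^ 2) ^ q) hα ?_ ?_ fun z hz => ?_
  · filter_upwards [hρ_near] with ρ hρ
    exact continuousOn_norm_sq_rpow
      (hg.comp (by fun_prop) fun z hz => hsub (hmem hρ hz)) hq
  · filter_upwards [hρ_near] with ρ hρ z hz
    have hgC := hC _ (hmem hρ hz)
    rw [Real.norm_of_nonneg (by positivity)]
    gcongr
  · have hg_at : ContinuousAt g ((1 : ℝ) * (c * z)) :=
      hg.continuousAt (isOpen_ball.mem_nhds (by simpa using hsub (hmem_c hz)))
    have hdilate : ContinuousAt (fun ρ : ℝ => g (ρ * (c * z))) 1 :=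
      hg_at.comp (f := fun ρ : ℝ => (ρ * (c * z) : ℂ)) (by fun_prop)
    simpa using ((hdilate.norm.pow 2).rpow_const (.inr hq)).tendsto.mono_left nhdsWithin_le_nhds

end Dilation

section Hypercontractivity

variable {α β γ p q r ρ C : ℝ} {f g : ℂ → ℂ}

theorem measurable_hyperbolicDensity : Measurable fun z : ℂ =>
    ENNReal.ofReal (1 / (π * (1 - ‖z‖ ^ 2) ^ 2)) := by
  fun_prop

theorem hyperbolicDensity_smul_invariantWeight_rpow (hα : 1 ≤ α) {z : ℂ}
    (hz : z ∈ ball (0 : ℂ) 1) :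
    (α - 1) * ((ENNReal.ofReal (1 / (π * (1 - ‖z‖ ^ 2) ^ 2))).toReal • invariantWeight f γ z ^ α) =
      (ENNReal.ofReal ((α - 1) / π * (1 - ‖z‖ ^ 2) ^ (α - 2))).toReal • ‖f z‖ ^ (γ * α) := by
  have hz1 : 0 < 1 - ‖z‖ ^ 2 := by
    rw [mem_ball_zero_iff] at hz
    nlinarith [norm_nonneg z]
  rw [ENNReal.toReal_ofReal (by positivity), ENNReal.toReal_ofReal (by positivity),
    invariantWeight, indicator_of_mem hz, Real.mul_rpow (by positivity) hz1.le,
    ← Real.rpow_mul (norm_nonneg _), Real.rpow_sub hz1, Real.rpow_two]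
  simp only [smul_eq_mul]
  field_simp

theorem integrable_invariantWeight_rpow (hα : 1 < α)
    (hint : Integrable (fun z => ‖f z‖ ^ (γ * α)) (bergmanMeasure α)) :
    Integrable (fun z => invariantWeight f γ z ^ α) hyperbolicMeasure := by
  rw [bergmanMeasure, integrable_withDensity_iff_integrable_smul' measurable_bergmanDensity
    (.of_forall fun _ => ENNReal.ofReal_lt_top)] at hint
  rw [hyperbolicMeasure, integrable_withDensity_iff_integrable_smul' measurable_hyperbolicDensity
    (.of_forall fun _ => ENNReal.ofReal_lt_top)]
  refine (hint.const_mul (α - 1)⁻¹).congr ?_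
  filter_upwards [ae_restrict_mem measurableSet_ball] with z hz
  rw [← hyperbolicDensity_smul_invariantWeight_rpow hα.le hz,
    inv_mul_cancel_left₀ (sub_pos.2 hα).ne']

theorem integral_invariantWeight_rpow (hα : 1 ≤ α) :
    (α - 1) * ∫ z, invariantWeight f γ z ^ α ∂hyperbolicMeasure =
      ∫ z, ‖f z‖ ^ (γ * α) ∂bergmanMeasure α := by
  rw [hyperbolicMeasure, bergmanMeasure,
    integral_withDensity_eq_integral_toReal_smul measurable_hyperbolicDensity
      (.of_forall fun _ => ENNReal.ofReal_lt_top),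
    integral_withDensity_eq_integral_toReal_smul measurable_bergmanDensity
      (.of_forall fun _ => ENNReal.ofReal_lt_top), ← integral_const_mul]
  exact setIntegral_congr_fun measurableSet_ball fun z hz =>
    hyperbolicDensity_smul_invariantWeight_rpow hα hz

theorem integrable_norm_rpow_bergmanMeasure (hα : 1 ≤ α) (hf : ContinuousOn f (ball 0 1))
    (hC : ∀ z ∈ ball (0 : ℂ) 1, ‖f z‖ ≤ C) (hp : 0 ≤ p) :
    Integrable (fun z => ‖f z‖ ^ p) (bergmanMeasure α) := by
  refine integrable_bergmanMeasure_of_bounded (C := C ^ p) hα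
    (hf.norm.rpow_const fun _ _ => .inr hp) fun z hz => ?_
  rw [Real.norm_of_nonneg (by positivity)]
  exact Real.rpow_le_rpow (norm_nonneg _) (hC z hz) hp

theorem integral_norm_rpow_le_rpow_integral_norm_rpow (hf : DifferentiableOn ℂ f (ball 0 1))
    (hC : ∀ z ∈ ball (0 : ℂ) 1, ‖f z‖ ≤ C) (hp : 0 < p) (hpq : p ≤ q) (hα : 1 < α) :
    ∫ z, ‖f z‖ ^ q ∂bergmanMeasure (α * q / p) ≤ (∫ z, ‖f z‖ ^ p ∂bergmanMeasure α) ^ (q / p) := by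
  have hαβ : α ≤ α * q / p := by
    rw [le_div_iff₀ hp]
    gcongr
  have hβ := hα.trans_le hαβ
  have hp_eq : p / α * α = p := by field_simp
  have hq_eq : p / α * (α * q / p) = q := by field_simp
  have hintp := integrable_norm_rpow_bergmanMeasure hα.le hf.continuousOn hC hp.le
  have hintq := integrable_norm_rpow_bergmanMeasure hβ.le hf.continuousOn hC (hp.le.trans hpq)
  have hkulikov := integral_invariantWeight_rpow_le hf hC (γ := p / α) (by positivity) hα hαβ
    (integrable_invariantWeight_rpow hα (by rwa [hp_eq]))
    (integrable_invariantWeight_rpow hβ (by rwa [hq_eq]))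
  rwa [integral_invariantWeight_rpow hα.le, integral_invariantWeight_rpow hβ.le, hp_eq, hq_eq,
    show α * q / p / α = q / p by field_simp] at hkulikov

theorem integral_norm_sq_rpow_comp_mul_sqrt_mul_le (hp : 0 < p) (hpq : p < q) (hq : 1 ≤ q)
    (hα : 1 < α) (hg : DifferentiableOn ℂ g (ball 0 1))
    (hint : Integrable (fun z => (‖g z‖ ^ 2) ^ p) (bergmanMeasure α)) (hρ : ρ ∈ Ioo (0 : ℝ) 1) :
    ∫ z, (‖g (ρ * (√(p / q) * z))‖ ^ 2) ^ q ∂bergmanMeasure α ≤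
      (∫ z, (‖g z‖ ^ 2) ^ p ∂bergmanMeasure α) ^ (q / p) := by
  have hR : 1 < ρ⁻¹ := (one_lt_inv₀ hρ.1).2 hρ.2
  have hdilate : DifferentiableOn ℂ (fun z => g (ρ * z)) (ball 0 ρ⁻¹) := by
    refine hg.comp (by fun_prop) fun z hz => ?_
    rw [mem_ball_zero_iff] at hz ⊢
    rw [norm_mul, Complex.norm_of_nonneg hρ.1.le]
    exact (lt_inv_mul_iff₀ hρ.1).1 (by rwa [mul_one])
  obtain ⟨C, hC⟩ := (isCompact_closedBall (0 : ℂ) 1).exists_bound_of_continuousOn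
    (hdilate.continuousOn.mono (closedBall_subset_ball hR))
  have hαβ : α < α * q / p := by
    rw [lt_div_iff₀ hp]
    gcongr
  calc ∫ z, (‖g (ρ * (√(p / q) * z))‖ ^ 2) ^ q ∂bergmanMeasure α
      ≤ ∫ z, (‖g (ρ * z)‖ ^ 2) ^ q ∂bergmanMeasure (α * q / p) := by
        have hle := integral_norm_sq_rpow_comp_sqrt_mul_le hR hdilate hq hα hαβ
        rwa [show α / (α * q / p) = p / q by field_simp] at hle
    _ ≤ (∫ z, (‖g (ρ * z)‖ ^ 2) ^ p ∂bergmanMeasure α) ^ (q / p) := by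
        simp only [← norm_pow]
        refine integral_norm_rpow_le_rpow_integral_norm_rpow (C := C ^ 2)
          ((hdilate.mono (ball_subset_ball hR.le)).pow 2) (fun z hz => ?_) hp hpq.le hα
        rw [norm_pow]
        gcongr
        exact hC z (ball_subset_closedBall hz)
    _ ≤ (∫ z, (‖g z‖ ^ 2) ^ p ∂bergmanMeasure α) ^ (q / p) :=
        Real.rpow_le_rpow (integral_nonneg fun z => by positivity)
          (integral_norm_sq_rpow_comp_mul_le hα.le hg hp.le hint ⟨hρ.1, hρ.2.le⟩) (by positivity)

theorem integral_norm_sq_rpow_comp_sqrt_mul_le_rpow (hp : 0 < p) (hpq : p < q) (hq : 1 ≤ q)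
    (hα : 1 < α) (hg : DifferentiableOn ℂ g (ball 0 1))
    (hint : Integrable (fun z => (‖g z‖ ^ 2) ^ p) (bergmanMeasure α)) :
    ∫ z, (‖g (√(p / q) * z)‖ ^ 2) ^ q ∂bergmanMeasure α ≤
      (∫ z, (‖g z‖ ^ 2) ^ p ∂bergmanMeasure α) ^ (q / p) := by
  have hq0 : 0 < q := by linarith
  have hc : √(p / q) ∈ Ioo (0 : ℝ) 1 :=
    ⟨Real.sqrt_pos.2 (by positivity), (Real.sqrt_lt' one_pos).2 (by rwa [one_pow, div_lt_one hq0])⟩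
  refine le_of_tendsto
    (tendsto_integral_norm_sq_rpow_comp_mul hα.le hg.continuousOn hq0.le hc) ?_
  filter_upwards [Ioo_mem_nhdsLT one_pos] with ρ hρ
  exact integral_norm_sq_rpow_comp_mul_sqrt_mul_le hp hpq hq hα hg hint hρ

end Hypercontractivity

end BergmanSpace

theorem hypercontractivity_square_of_holomorphic
    (p q α : ℝ) (hp : 0 < p) (hpq : p < q) (hq1 : 1 ≤ q) (hα : 1 < α)
    (f : ℂ → ℂ) (hf : DifferentiableOn ℂ f (ball (0 : ℂ) 1))
    (hfp : Integrable (fun z => ‖f z‖ ^ p) (bergmanMeasure α))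
    (hsq : ∃ g : ℂ → ℂ, DifferentiableOn ℂ g (ball (0 : ℂ) 1) ∧
      ∀ z ∈ ball (0 : ℂ) 1, f z = (g z) ^ 2) :
    (∫ z, ‖f ((Real.sqrt (p / q) : ℂ) * z)‖ ^ q ∂(bergmanMeasure α)) ^ (1 / q) ≤
      (∫ z, ‖f z‖ ^ p ∂(bergmanMeasure α)) ^ (1 / p) := by
  obtain ⟨g, hg, hfg⟩ := hsq
  have hq : 0 < q := hp.trans hpq
  have hfg_p : (fun z => ‖f z‖ ^ p) =ᵐ[bergmanMeasure α] fun z => (‖g z‖ ^ 2) ^ p := by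
    filter_upwards [BergmanSpace.ae_mem_ball_bergmanMeasure] with z hz
    rw [hfg z hz, norm_pow]
  have hfg_q : (fun z => ‖f (Real.sqrt (p / q) * z)‖ ^ q) =ᵐ[bergmanMeasure α]
      fun z => (‖g (Real.sqrt (p / q) * z)‖ ^ 2) ^ q := by
    filter_upwards [BergmanSpace.ae_mem_ball_bergmanMeasure] with z hz
    have hmem : Real.sqrt (p / q) * z ∈ ball (0 : ℂ) 1 := balanced_ball_zero.smul_mem
      (BergmanSpace.norm_ofReal_sqrt_div_le_one hq.le hpq.le) hz
    rw [hfg _ hmem, norm_pow]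
  have hg_nonneg : 0 ≤ ∫ z, (‖g z‖ ^ 2) ^ p ∂bergmanMeasure α :=
    integral_nonneg fun z => by positivity
  rw [integral_congr_ae hfg_p, integral_congr_ae hfg_q, one_div q,
    Real.rpow_inv_le_iff_of_pos (integral_nonneg fun z => by positivity) (by positivity) hq,
    ← Real.rpow_mul hg_nonneg, one_div_mul_eq_div]
  exact BergmanSpace.integral_norm_sq_rpow_comp_sqrt_mul_le_rpow hp hpq hq1 hα hg
    (hfp.congr hfg_p)
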